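/- arXiv:2110.11825 — 3 statements merged into one kernel-verified Lean document; each statement's English description precedes it below -/
import Mathlib

section
/- Let C1 ⊆ V1 and C2 ⊆ V2 be proper cones in finite-dimensional real vector spaces, and assume neither C1 nor C2 is classical, i.e., neither admits a linear isomorphism of its ambient space carrying it onto the cone of entrywise nonnegative vectors R_{≥0}^m. Then for every integer k ≥ 1 there exists a linear map P : V1 → V2 such that P^{⊗k}(C1^{⊗max k}) ⊆ C2^{⊗min k}, but P is not (C1,C2)-entanglement breaking. -/
open scoped TensorProduct
open Set

noncomputable section

/-- The dual cone of a set `C`, inside the algebraic dual space. -/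
def dualConeSet {V : Type*} [AddCommGroup V] [Module ℝ V] (C : Set V) :
    Set (Module.Dual ℝ V) := {φ | ∀ x ∈ C, 0 ≤ φ x}

/-- A proper cone: a closed convex cone which is generating (`C - C = V`) and
pointed (`C ∩ (-C) = {0}`). -/
def IsProperCone {V : Type*} [NormedAddCommGroup V] [NormedSpace ℝ V] (C : Set V) : Prop :=
  IsClosed C ∧ Convex ℝ C ∧ (∀ ⦃c : ℝ⦄, 0 < c → ∀ ⦃x⦄, x ∈ C → c • x ∈ C) ∧
    (∀ v : V, ∃ x ∈ C, ∃ y ∈ C, v = x - y) ∧ C ∩ (-C) = {0}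

/-- `(C₁,C₂)`-entanglement breaking maps. -/
def IsEntanglementBreaking {V₁ V₂ : Type*} [AddCommGroup V₁] [Module ℝ V₁]
    [AddCommGroup V₂] [Module ℝ V₂] (C₁ : Set V₁) (C₂ : Set V₂) (P : V₁ →ₗ[ℝ] V₂) : Prop :=
  ∃ (m : ℕ) (φ : Fin m → Module.Dual ℝ V₁) (x : Fin m → V₂),
    (∀ i, φ i ∈ dualConeSet C₁) ∧ (∀ i, x i ∈ C₂) ∧ ∀ v, P v = ∑ i, φ i v • x i

/-- The `k`-fold minimal tensor power of a cone. -/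
def minTensorPow {V : Type*} [AddCommGroup V] [Module ℝ V] (C : Set V) (k : ℕ) :
    Set (⨂[ℝ] _ : Fin k, V) :=
  convexHull ℝ {z | ∃ x : Fin k → V, (∀ i, x i ∈ C) ∧ z = PiTensorProduct.tprod ℝ x}

/-- The functional on the `k`-fold tensor power induced by a family of functionals,
`x₁ ⊗ ⋯ ⊗ x_k ↦ ∏ i, φ i (x i)`. -/
def dualPairing {V : Type*} [AddCommGroup V] [Module ℝ V] {k : ℕ}
    (φ : Fin k → Module.Dual ℝ V) : (⨂[ℝ] _ : Fin k, V) →ₗ[ℝ] ℝ :=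
  PiTensorProduct.lift ((MultilinearMap.mkPiAlgebra ℝ (Fin k) ℝ).compLinearMap φ)

/-- The `k`-fold maximal tensor power of a cone: the dual of the minimal tensor power of
the dual cone, under the canonical identification of `(V^{⊗k})*` with `(V*)^{⊗k}`. -/
def maxTensorPow {V : Type*} [AddCommGroup V] [Module ℝ V] (C : Set V) (k : ℕ) :
    Set (⨂[ℝ] _ : Fin k, V) :=
  {z | ∀ φ : Fin k → Module.Dual ℝ V, (∀ i, φ i ∈ dualConeSet C) → 0 ≤ dualPairing φ z}

/-- `(C₁,C₂)`-entanglement annihilating maps: `P^{⊗k}` maps the `k`-fold maximal tensor power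
of `C₁` into the `k`-fold minimal tensor power of `C₂`, for every `k ≥ 1`. -/
def IsEntanglementAnnihilating {V₁ V₂ : Type*} [AddCommGroup V₁] [Module ℝ V₁]
    [AddCommGroup V₂] [Module ℝ V₂] (C₁ : Set V₁) (C₂ : Set V₂) (P : V₁ →ₗ[ℝ] V₂) : Prop :=
  ∀ k : ℕ, 1 ≤ k →
    Set.MapsTo (⇑(PiTensorProduct.map fun _ : Fin k => P))
      (maxTensorPow C₁ k) (minTensorPow C₂ k)

/-- A pair of cones is resilient if every entanglement annihilating map between them is
entanglement breaking. -/
def IsResilientPair {V₁ V₂ : Type*} [AddCommGroup V₁] [Module ℝ V₁]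
    [AddCommGroup V₂] [Module ℝ V₂] (C₁ : Set V₁) (C₂ : Set V₂) : Prop :=
  ∀ P : V₁ →ₗ[ℝ] V₂, IsEntanglementAnnihilating C₁ C₂ P → IsEntanglementBreaking C₁ C₂ P

/-- The minimal tensor product of two cones. -/
def minTensor {V W : Type*} [AddCommGroup V] [Module ℝ V] [AddCommGroup W] [Module ℝ W]
    (C : Set V) (D : Set W) : Set (V ⊗[ℝ] W) :=
  convexHull ℝ {z | ∃ x ∈ C, ∃ y ∈ D, z = x ⊗ₜ[ℝ] y}

/-- The maximal tensor product of two cones: the dual of the minimal tensor product of the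
dual cones, under the canonical identification of `(V ⊗ W)*` with `V* ⊗ W*`. -/
def maxTensor {V W : Type*} [AddCommGroup V] [Module ℝ V] [AddCommGroup W] [Module ℝ W]
    (C : Set V) (D : Set W) : Set (V ⊗[ℝ] W) :=
  {z | ∀ φ ∈ dualConeSet C, ∀ ψ ∈ dualConeSet D,
      0 ≤ TensorProduct.dualDistrib ℝ V W (φ ⊗ₜ[ℝ] ψ) z}

/-- The Lorentz cone `L_n ⊆ ℝ ⊕ ℝⁿ`. -/
def lorentzCone (n : ℕ) : Set (ℝ × EuclideanSpace ℝ (Fin n)) := {p | ‖p.2‖ ≤ p.1}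


/-- A cone is classical if a linear isomorphism of the ambient space carries it onto the
nonnegative orthant `ℝ₊^m`. -/
def IsClassicalCone {V : Type*} [AddCommGroup V] [Module ℝ V] (C : Set V) : Prop :=
  ∃ (m : ℕ) (e : V ≃ₗ[ℝ] (Fin m → ℝ)), e '' C = {x | ∀ i, 0 ≤ x i}



/-- Cone closed under sums and nonnegative scalars. -/
def IsCn {V : Type*} [AddCommGroup V] [Module ℝ V] (C : Set V) : Prop :=
  (0:V) ∈ C ∧ (∀ x ∈ C, ∀ y ∈ C, x + y ∈ C) ∧ (∀ c : ℝ, 0 ≤ c → ∀ x ∈ C, c • x ∈ C)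

lemma IsCn.sum {V : Type*} [AddCommGroup V] [Module ℝ V] {C : Set V} (h : IsCn C)
    {ι : Type*} (s : Finset ι) (f : ι → V) (hf : ∀ i ∈ s, f i ∈ C) : ∑ i ∈ s, f i ∈ C := by
  classical
  induction s using Finset.induction_on with
  | empty => simpa using h.1
  | insert a s ha ih =>
    rw [Finset.sum_insert ha]
    exact h.2.1 _ (hf _ (by simp)) _ (ih fun i hi => hf i (by simp [hi]))

section partI
variable {V₁ V₂ : Type} [AddCommGroup V₁] [Module ℝ V₁] [AddCommGroup V₂] [Module ℝ V₂]
variable {C₁ : Set V₁} {C₂ : Set V₂} {k : ℕ}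

lemma eb_of_fintype {ι : Type*} [Fintype ι] (P : V₁ →ₗ[ℝ] V₂) (φ : ι → Module.Dual ℝ V₁)
    (x : ι → V₂) (hφ : ∀ i, φ i ∈ dualConeSet C₁) (hx : ∀ i, x i ∈ C₂)
    (h : ∀ v, P v = ∑ i, φ i v • x i) : IsEntanglementBreaking C₁ C₂ P := by
  let e := Fintype.equivFin ι
  refine ⟨Fintype.card ι, φ ∘ e.symm, x ∘ e.symm, fun i => hφ _, fun i => hx _, fun v => ?_⟩
  rw [h v]
  exact (Equiv.sum_comp e.symm (fun i => φ i v • x i)).symm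

lemma eb_add {P Q : V₁ →ₗ[ℝ] V₂} (hP : IsEntanglementBreaking C₁ C₂ P)
    (hQ : IsEntanglementBreaking C₁ C₂ Q) : IsEntanglementBreaking C₁ C₂ (P + Q) := by
  obtain ⟨m, φ, x, h1, h2, h3⟩ := hP
  obtain ⟨n, ψ, y, g1, g2, g3⟩ := hQ
  refine eb_of_fintype (ι := Fin m ⊕ Fin n) _ (Sum.elim φ ψ) (Sum.elim x y) ?_ ?_ ?_
  · rintro (i | i) <;> simp [h1, g1]
  · rintro (i | i) <;> simp [h2, g2]
  · intro v; simp [h3, g3]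

lemma eb_smul (h₂ : IsCn C₂) {P : V₁ →ₗ[ℝ] V₂} (hP : IsEntanglementBreaking C₁ C₂ P)
    {c : ℝ} (hc : 0 ≤ c) : IsEntanglementBreaking C₁ C₂ (c • P) := by
  obtain ⟨m, φ, x, h1, h2, h3⟩ := hP
  refine ⟨m, φ, fun i => c • x i, h1, fun i => h₂.2.2 c hc _ (h2 i), fun v => ?_⟩
  simp [h3, Finset.smul_sum, smul_comm c]

lemma eb_pos (h₂ : IsCn C₂) {P : V₁ →ₗ[ℝ] V₂} (hP : IsEntanglementBreaking C₁ C₂ P) :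
    MapsTo P C₁ C₂ := by
  obtain ⟨m, φ, x, h1, h2, h3⟩ := hP
  intro v hv
  rw [h3]
  exact h₂.sum _ _ fun i _ => h₂.2.2 _ (h1 i v hv) _ (h2 i)

lemma min_isCn (h₂ : IsCn C₂) (hk : 1 ≤ k) : IsCn (minTensorPow C₂ k) := by
  have j0 : Fin k := ⟨0, hk⟩
  have hs : ∀ c : ℝ, 0 ≤ c → ∀ x ∈ minTensorPow C₂ k, c • x ∈ minTensorPow C₂ k := by
    intro c hc x hx
    have : minTensorPow C₂ k ⊆ (fun z => c • z) ⁻¹' (minTensorPow C₂ k) := by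
      refine convexHull_min ?_ ?_
      · rintro z ⟨x, hx, rfl⟩
        refine subset_convexHull ℝ _ ⟨Function.update x j0 (c • x j0), ?_, ?_⟩
        · intro i
          by_cases hi : i = j0
          · subst hi; simpa using h₂.2.2 c hc _ (hx _)
          · simpa [hi] using hx i
        · simp only [MultilinearMap.map_update_smul, Function.update_eq_self]
      · exact (convex_convexHull ℝ _).is_linear_preimage (IsLinearMap.isLinearMap_smul c)
    exact this hx
  refine ⟨?_, ?_, hs⟩
  · refine subset_convexHull ℝ _ ⟨fun _ => 0, fun _ => h₂.1, ?_⟩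
    exact ((PiTensorProduct.tprod ℝ).map_coord_zero j0 rfl).symm
  · intro x hx y hy
    have := hs 2 (by norm_num) _ ((convex_convexHull ℝ _) hx hy
      (by norm_num : (0:ℝ) ≤ 1/2) (by norm_num : (0:ℝ) ≤ 1/2) (by norm_num))
    convert this using 1
    rw [smul_add, smul_smul, smul_smul]; norm_num

variable (C₁ C₂ k) in
def AM (L : (⨂[ℝ] _ : Fin k, V₁) →ₗ[ℝ] (⨂[ℝ] _ : Fin k, V₂)) : Prop :=
  MapsTo L (maxTensorPow C₁ k) (minTensorPow C₂ k)

lemma AM_isCn (h₂ : IsCn C₂) (hk : 1 ≤ k) : IsCn {L | AM C₁ C₂ k L} := by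
  have h := min_isCn h₂ hk
  refine ⟨fun z _ => by simpa using h.1, fun L hL M hM z hz => ?_, fun c hc L hL z hz => ?_⟩
  · exact h.2.1 _ (hL hz) _ (hM hz)
  · exact h.2.2 c hc _ (hL hz)

lemma am_rank_one [FiniteDimensional ℝ V₁]
    (hbip : ∀ x, (∀ φ ∈ dualConeSet C₁, 0 ≤ φ x) → x ∈ C₁)
    (f : Fin k → V₁ →ₗ[ℝ] V₂) (j : Fin k) (hj : MapsTo (f j) C₁ C₂)
    (φ : Fin k → Module.Dual ℝ V₁) (x : Fin k → V₂)
    (hφ : ∀ i, i ≠ j → φ i ∈ dualConeSet C₁) (hx : ∀ i, i ≠ j → x i ∈ C₂)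
    (hf : ∀ i, i ≠ j → f i = (φ i).smulRight (x i)) : AM C₁ C₂ k (PiTensorProduct.map f) := by
  classical
  let b := Module.finBasis ℝ V₁
  let c : (⨂[ℝ] _ : Fin k, V₁) →ₗ[ℝ] V₁ :=
    ∑ m, (dualPairing (Function.update φ j (b.coord m))).smulRight (b m)
  have hdp : ∀ (ψ : Module.Dual ℝ V₁) (v : Fin k → V₁),
      dualPairing (Function.update φ j ψ) (PiTensorProduct.tprod ℝ v)
        = ψ (v j) * ∏ i ∈ Finset.univ.erase j, φ i (v i) := by
    intro ψ v
    simp only [dualPairing, PiTensorProduct.lift.tprod, MultilinearMap.compLinearMap_apply,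
      MultilinearMap.mkPiAlgebra_apply]
    rw [← Finset.mul_prod_erase _ _ (Finset.mem_univ j)]
    simp only [Function.update_self]
    congr 1
    refine Finset.prod_congr rfl fun i hi => ?_
    rw [Function.update_of_ne (Finset.ne_of_mem_erase hi)]
  have hc : ∀ v : Fin k → V₁, c (PiTensorProduct.tprod ℝ v)
      = (∏ i ∈ Finset.univ.erase j, φ i (v i)) • v j := by
    intro v
    simp only [c, LinearMap.sum_apply, LinearMap.smulRight_apply, hdp]
    conv_rhs => rw [← b.sum_repr (v j), Finset.smul_sum]
    refine Finset.sum_congr rfl fun m _ => ?_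
    rw [smul_smul, Module.Basis.coord_apply, mul_comm]
  have hψ : ∀ ψ : Module.Dual ℝ V₁, ψ ∘ₗ c = dualPairing (Function.update φ j ψ) := by
    intro ψ
    ext v
    simp only [LinearMap.compMultilinearMap_apply, LinearMap.comp_apply, hc, hdp, map_smul,
      smul_eq_mul, mul_comm]
  have hmap : PiTensorProduct.map f
      = ((PiTensorProduct.tprod ℝ).toLinearMap x j) ∘ₗ (f j) ∘ₗ c := by
    ext v
    simp only [LinearMap.compMultilinearMap_apply, LinearMap.comp_apply, hc,
      PiTensorProduct.map_tprod, map_smul, MultilinearMap.toLinearMap_apply]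
    have h1 : (fun i => f i (v i)) = fun i => (if i = j then (1:ℝ) else φ i (v i)) •
        (Function.update x j (f j (v j))) i := by
      funext i
      by_cases hi : i = j
      · subst hi; simp
      · simp [hi, hf i hi]
    rw [h1, MultilinearMap.map_smul_univ]
    congr 1
    rw [← Finset.mul_prod_erase _ _ (Finset.mem_univ j)]
    simp only [if_true, one_mul]
    refine Finset.prod_congr rfl fun i hi => ?_
    rw [if_neg (Finset.ne_of_mem_erase hi)]
  intro z hz
  have hcz : c z ∈ C₁ := by
    refine hbip _ fun ψ hψ' => ?_
    have := LinearMap.congr_fun (hψ ψ) z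
    simp only [LinearMap.comp_apply] at this
    rw [this]
    refine hz _ fun i => ?_
    by_cases hi : i = j
    · subst hi; simpa using hψ'
    · simpa [hi] using hφ i hi
  rw [hmap]
  refine subset_convexHull ℝ _ ⟨Function.update x j (f j (c z)), fun i => ?_, ?_⟩
  · by_cases hi : i = j
    · subst hi; simpa using hj hcz
    · simpa [hi] using hx i hi
  · simp [MultilinearMap.toLinearMap_apply]

lemma am_L1 [FiniteDimensional ℝ V₁] (h₂ : IsCn C₂)
    (hbip : ∀ x, (∀ φ ∈ dualConeSet C₁, 0 ≤ φ x) → x ∈ C₁)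
    (f : Fin k → V₁ →ₗ[ℝ] V₂) (j : Fin k) (hj : MapsTo (f j) C₁ C₂)
    (hf : ∀ i, i ≠ j → IsEntanglementBreaking C₁ C₂ (f i)) :
    AM C₁ C₂ k (PiTensorProduct.map f) := by
  classical
  have hk : 1 ≤ k := by have := j.2; omega
  have key : ∀ i, ∃ m : ℕ, ∃ g : Fin m → V₁ →ₗ[ℝ] V₂, f i = ∑ a, g a ∧
      (i = j → ∀ a, MapsTo (g a) C₁ C₂) ∧
      (i ≠ j → ∀ a, ∃ p : Module.Dual ℝ V₁ × V₂, p.1 ∈ dualConeSet C₁ ∧ p.2 ∈ C₂ ∧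
        g a = p.1.smulRight p.2) := by
    intro i
    by_cases hi : i = j
    · subst hi
      exact ⟨1, fun _ => f i, by simp, fun _ _ => hj, fun h => absurd rfl h⟩
    · obtain ⟨m, φ, x, a1, a2, a3⟩ := hf i hi
      refine ⟨m, fun a => (φ a).smulRight (x a), ?_, fun h => absurd h hi,
        fun _ a => ⟨(φ a, x a), a1 a, a2 a, rfl⟩⟩
      ext v
      simp [a3]
  choose m g hg hgj hgi using key
  have hsum : PiTensorProduct.map f = ∑ r : (∀ i, Fin (m i)), PiTensorProduct.map
      (fun i => g i (r i)) := by
    have := (PiTensorProduct.mapMultilinear ℝ (fun _ : Fin k => V₁) (fun _ => V₂)).map_sum g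
    simp only [PiTensorProduct.mapMultilinear_apply] at this
    rw [← this]
    congr 1
    funext i
    exact hg i
  rw [hsum]
  refine (AM_isCn (C₁ := C₁) h₂ hk).sum _ _ fun r _ => ?_
  have : ∀ i, ∃ p : Module.Dual ℝ V₁ × V₂, i ≠ j → (p.1 ∈ dualConeSet C₁ ∧ p.2 ∈ C₂ ∧
        g i (r i) = p.1.smulRight p.2) := by
    intro i
    by_cases hi : i = j
    · exact ⟨0, fun h => absurd hi h⟩
    · obtain ⟨p, hp⟩ := hgi i hi (r i)
      exact ⟨p, fun _ => hp⟩
  choose p hp using this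
  exact am_rank_one hbip _ j (hgj j rfl _) (fun i => (p i).1) (fun i => (p i).2)
    (fun i hi => (hp i hi).1) (fun i hi => (hp i hi).2.1) (fun i hi => (hp i hi).2.2)

lemma map_tele (P R : V₁ →ₗ[ℝ] V₂) :
    PiTensorProduct.map (fun _ : Fin k => P) - PiTensorProduct.map (fun _ : Fin k => R)
    = ∑ i : Fin k, PiTensorProduct.map
        (fun j => if j < i then P else if i = j then P - R else R) := by
  classical
  have := (PiTensorProduct.mapMultilinear ℝ (fun _ : Fin k => V₁) (fun _ => V₂)).map_sub_map_piecewise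
    (fun _ => P) (fun _ => R) Finset.univ
  simpa [PiTensorProduct.mapMultilinear_apply] using this

lemma am_L2 [FiniteDimensional ℝ V₁] (h₂ : IsCn C₂) (hk : 1 ≤ k)
    (hbip : ∀ x, (∀ φ ∈ dualConeSet C₁, 0 ≤ φ x) → x ∈ C₁)
    (P R : V₁ →ₗ[ℝ] V₂) (hP : IsEntanglementBreaking C₁ C₂ P)
    (hR : IsEntanglementBreaking C₁ C₂ R) (hPR : MapsTo (P - R) C₁ C₂) :
    AM C₁ C₂ k (PiTensorProduct.map (fun _ : Fin k => P) -
      PiTensorProduct.map (fun _ : Fin k => R)) := by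
  rw [map_tele]
  refine (AM_isCn (C₁ := C₁) h₂ hk).sum _ _ fun i _ => ?_
  refine am_L1 h₂ hbip _ i (by simpa using hPR) fun j hj => ?_
  by_cases h : j < i
  · simpa [h] using hP
  · simpa [h, Ne.symm hj] using hR

lemma am_L3 [FiniteDimensional ℝ V₁] (h₂ : IsCn C₂) (hk : 1 ≤ k)
    (hbip : ∀ x, (∀ φ ∈ dualConeSet C₁, 0 ≤ φ x) → x ∈ C₁)
    (A B : Fin k → V₁ →ₗ[ℝ] V₂) (h1 : ∀ i, IsEntanglementBreaking C₁ C₂ (B i + A i))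
    (h2 : ∀ i, IsEntanglementBreaking C₁ C₂ (B i - A i)) :
    AM C₁ C₂ k (PiTensorProduct.map B + PiTensorProduct.map A) := by
  classical
  let Z : Fin k → Bool → V₁ →ₗ[ℝ] V₂ := fun i b =>
    (1/2 : ℝ) • (if b then B i + A i else B i - A i)
  let s : Bool → ℝ := fun b => if b then 1 else -1
  have hZ : ∀ i b, IsEntanglementBreaking C₁ C₂ (Z i b) := by
    intro i b
    refine eb_smul h₂ ?_ (by norm_num)
    cases b
    · simpa using h2 i
    · simpa using h1 i
  have hB : B = fun i => ∑ b, Z i b := by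
    funext i; simp only [Fintype.sum_bool, Z, if_true, ← smul_add]
    ext v; simp; module
  have hA : A = fun i => ∑ b, s b • Z i b := by
    funext i; simp only [Fintype.sum_bool, Z, s, if_true]
    ext v; simp; module
  have eB : PiTensorProduct.map B = ∑ r : Fin k → Bool, PiTensorProduct.map
      (fun i => Z i (r i)) := by
    have := (PiTensorProduct.mapMultilinear ℝ (fun _ : Fin k => V₁) (fun _ => V₂)).map_sum Z
    simp only [PiTensorProduct.mapMultilinear_apply] at this
    rw [← this, hB]
  have eA : PiTensorProduct.map A = ∑ r : Fin k → Bool, (∏ i, s (r i)) • PiTensorProduct.map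
      (fun i => Z i (r i)) := by
    have := (PiTensorProduct.mapMultilinear ℝ (fun _ : Fin k => V₁) (fun _ => V₂)).map_sum
      (fun i b => s b • Z i b)
    simp only [MultilinearMap.map_smul_univ] at this
    simp only [PiTensorProduct.mapMultilinear_apply] at this
    rw [← this, hA]
  have : PiTensorProduct.map B + PiTensorProduct.map A
      = ∑ r : Fin k → Bool, (1 + ∏ i, s (r i)) • PiTensorProduct.map (fun i => Z i (r i)) := by
    rw [eB, eA, ← Finset.sum_add_distrib]
    refine Finset.sum_congr rfl fun r _ => ?_
    rw [add_smul, one_smul]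
  rw [this]
  have hc := (AM_isCn (C₁ := C₁) h₂ hk)
  refine hc.sum _ _ fun r _ => hc.2.2 _ ?_ _ ?_
  · have : |∏ i, s (r i)| = 1 := by
      rw [Finset.abs_prod]
      refine Finset.prod_eq_one fun i _ => ?_
      by_cases h : r i <;> simp [s, h]
    have := neg_abs_le (∏ i, s (r i))
    linarith
  · exact am_L1 h₂ hbip _ ⟨0, hk⟩ (eb_pos h₂ (hZ _ _)) fun i _ => hZ _ _

end partI


section partI2
variable {V₁ V₂ : Type} [AddCommGroup V₁] [Module ℝ V₁] [AddCommGroup V₂] [Module ℝ V₂]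
variable {C₁ : Set V₁} {C₂ : Set V₂} {k : ℕ}

lemma exists_basis_in {V : Type} [AddCommGroup V] [Module ℝ V] [FiniteDimensional ℝ V]
    {C : Set V} (h : Submodule.span ℝ C = ⊤) :
    ∃ b : Module.Basis (Fin (Module.finrank ℝ V)) ℝ V, ∀ i, b i ∈ C := by
  let b := Module.Basis.ofSpan h.ge
  have hb : ∀ i, b i ∈ C := fun i => by
    have := Module.Basis.ofSpan_subset h.ge
    exact this ⟨i, rfl⟩
  haveI : Fintype _ := FiniteDimensional.fintypeBasisIndex b
  have hc := Module.finrank_eq_card_basis b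
  let e := (Fintype.equivFinOfCardEq hc.symm)
  exact ⟨b.reindex e, fun i => by simpa using hb _⟩

lemma exists_Q [FiniteDimensional ℝ V₁] [FiniteDimensional ℝ V₂] (h₂ : IsCn C₂)
    (hs1 : Submodule.span ℝ (dualConeSet C₁) = ⊤) (hs2 : Submodule.span ℝ C₂ = ⊤) :
    ∃ Q : V₁ →ₗ[ℝ] V₂, IsEntanglementBreaking C₁ C₂ Q ∧ ∀ R : V₁ →ₗ[ℝ] V₂, ∃ K : ℝ, 0 ≤ K ∧
      IsEntanglementBreaking C₁ C₂ (K • Q + R) ∧ IsEntanglementBreaking C₁ C₂ (K • Q - R) := by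
  obtain ⟨a, ha⟩ := exists_basis_in hs1
  obtain ⟨b, hb⟩ := exists_basis_in hs2
  have eb : ∀ (r : _ → _ → ℝ), (∀ i j, 0 ≤ r i j) → IsEntanglementBreaking C₁ C₂
      (∑ i, ∑ j, r i j • (a i).smulRight (b j)) := by
    intro r hr
    refine eb_of_fintype (ι := _ × _) _ (fun p => a p.1) (fun p => r p.1 p.2 • b p.2)
      (fun p => ha _) (fun p => h₂.2.2 _ (hr _ _) _ (hb _)) fun v => ?_
    simp only [LinearMap.sum_apply, LinearMap.smul_apply, LinearMap.smulRight_apply,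
      Fintype.sum_prod_type]
    refine Finset.sum_congr rfl fun i _ => Finset.sum_congr rfl fun j _ => ?_
    rw [smul_comm]
  refine ⟨∑ i, ∑ j, (1:ℝ) • (a i).smulRight (b j), eb _ (fun _ _ => zero_le_one), fun R => ?_⟩
  let r := fun i j => a.repr ((b.coord j) ∘ₗ R) i
  have hR : R = ∑ i, ∑ j, r i j • (a i).smulRight (b j) := by
    ext v
    conv_lhs => rw [← b.sum_repr (R v)]
    rw [Finset.sum_comm]
    simp only [LinearMap.sum_apply, LinearMap.smul_apply, LinearMap.smulRight_apply]
    refine Finset.sum_congr rfl fun j _ => ?_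
    have := LinearMap.congr_fun (a.sum_repr ((b.coord j) ∘ₗ R)) v
    simp only [LinearMap.sum_apply, LinearMap.smul_apply, LinearMap.comp_apply,
      Module.Basis.coord_apply] at this
    rw [← this, Finset.sum_smul]
    refine Finset.sum_congr rfl fun i _ => ?_
    simp [r, smul_smul]
  let K := ∑ i, ∑ j, |r i j|
  have hK : ∀ i j, |r i j| ≤ K := by
    intro i j
    calc |r i j| ≤ ∑ j, |r i j| :=
          Finset.single_le_sum (f := fun j => |r i j|) (fun _ _ => abs_nonneg _) (Finset.mem_univ j)
      _ ≤ K := Finset.single_le_sum (f := fun i => ∑ j, |r i j|)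
          (fun _ _ => Finset.sum_nonneg fun _ _ => abs_nonneg _) (Finset.mem_univ i)
  refine ⟨K, Finset.sum_nonneg fun _ _ => Finset.sum_nonneg fun _ _ => abs_nonneg _, ?_, ?_⟩
  · have := eb (fun i j => K + r i j) (fun i j => by
      have := hK i j; have := neg_abs_le (r i j); linarith)
    convert this using 1
    conv_lhs => rw [hR]
    simp only [Finset.smul_sum, ← Finset.sum_add_distrib, add_smul, one_smul]
  · have := eb (fun i j => K - r i j) (fun i j => by
      have := hK i j; have := le_abs_self (r i j); linarith)
    convert this using 1
    conv_lhs => rw [hR]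
    simp only [Finset.smul_sum, ← Finset.sum_sub_distrib, sub_smul, one_smul]

lemma eb_trace [FiniteDimensional ℝ V₁] [FiniteDimensional ℝ V₂] {P : V₁ →ₗ[ℝ] V₂}
    {W : V₂ →ₗ[ℝ] V₁} (hP : IsEntanglementBreaking C₁ C₂ P) (hW : MapsTo W C₂ C₁) :
    0 ≤ LinearMap.trace ℝ V₁ (W ∘ₗ P) := by
  obtain ⟨m, φ, x, h1, h2, h3⟩ := hP
  have : W ∘ₗ P = ∑ i, (φ i).smulRight (W (x i)) := by
    ext v; simp [h3]
  rw [this, map_sum]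
  refine Finset.sum_nonneg fun i _ => ?_
  rw [LinearMap.trace_smulRight]
  exact h1 i _ (hW (h2 i))

lemma map_smul_const (c : ℝ) (Q : V₁ →ₗ[ℝ] V₂) :
    PiTensorProduct.map (fun _ : Fin k => c • Q) = c ^ k • PiTensorProduct.map (fun _ : Fin k => Q) := by
  have := (PiTensorProduct.mapMultilinear ℝ (fun _ : Fin k => V₁) (fun _ => V₂)).map_smul_univ
    (fun _ => c) (fun _ => Q)
  simpa [PiTensorProduct.mapMultilinear_apply] using this

theorem partI_main [FiniteDimensional ℝ V₁] [FiniteDimensional ℝ V₂] (h₂ : IsCn C₂) (hk : 1 ≤ k)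
    (hbip : ∀ x, (∀ φ ∈ dualConeSet C₁, 0 ≤ φ x) → x ∈ C₁)
    (hs1 : Submodule.span ℝ (dualConeSet C₁) = ⊤) (hs2 : Submodule.span ℝ C₂ = ⊤)
    (P : V₁ →ₗ[ℝ] V₂) (W : V₂ →ₗ[ℝ] V₁) (hP : MapsTo P C₁ C₂) (hW : MapsTo W C₂ C₁)
    (htr : LinearMap.trace ℝ V₁ (W ∘ₗ P) < 0) :
    ∃ P : V₁ →ₗ[ℝ] V₂,
      Set.MapsTo (⇑(PiTensorProduct.map fun _ : Fin k => P))
        (maxTensorPow C₁ k) (minTensorPow C₂ k) ∧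
      ¬ IsEntanglementBreaking C₁ C₂ P := by
  obtain ⟨Q, hQ, hQR⟩ := exists_Q (C₁ := C₁) h₂ hs1 hs2
  obtain ⟨K0, hK0, hR1, hR2⟩ := hQR (P - Q)
  set R := P - Q with hRdef
  set q := LinearMap.trace ℝ V₁ (W ∘ₗ Q) with hq
  set p := LinearMap.trace ℝ V₁ (W ∘ₗ P) with hp
  have hq0 : 0 ≤ q := eb_trace hQ hW
  let Pt : ℝ → V₁ →ₗ[ℝ] V₂ := fun t => Q + t • R
  have htrP : ∀ t, LinearMap.trace ℝ V₁ (W ∘ₗ Pt t) = (1 - t) * q + t * p := by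
    intro t
    have : W ∘ₗ Pt t = (1 - t) • (W ∘ₗ Q) + t • (W ∘ₗ P) := by
      ext v; simp [Pt, hRdef]; module
    rw [this, map_add, map_smul, map_smul, smul_eq_mul, smul_eq_mul]
  set K := K0 + 1 with hK
  have hKR1 : IsEntanglementBreaking C₁ C₂ (K • Q + R) := by
    have := eb_add hR1 hQ
    convert this using 1
    rw [hK]; module
  have hKR2 : IsEntanglementBreaking C₁ C₂ (K • Q - R) := by
    have := eb_add hR2 hQ
    convert this using 1
    rw [hK]; module
  have hKP1 : ∀ t, 0 ≤ t → t ≤ 1 → IsEntanglementBreaking C₁ C₂ (K • Q + Pt t) := by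
    intro t h0 h1
    have := eb_add (eb_smul h₂ hQ (c := 2 + K0 - t * K0) (by nlinarith)) (eb_smul h₂ hR1 h0)
    convert this using 1
    simp only [Pt, hK]; module
  have hKP2 : ∀ t, 0 ≤ t → t ≤ 1 → IsEntanglementBreaking C₁ C₂ (K • Q - Pt t) := by
    intro t h0 h1
    have := eb_add (eb_smul h₂ hQ (c := K0 - t * K0) (by nlinarith)) (eb_smul h₂ hR2 h0)
    convert this using 1
    simp only [Pt, hK]; module
  set σ := -p / (q - p) with hσ
  have hσ0 : 0 < σ := div_pos (by linarith) (by linarith)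
  have hle : ∀ t, IsEntanglementBreaking C₁ C₂ (Pt t) → σ ≤ 1 - t := by
    intro t ht
    have h := eb_trace ht hW
    rw [htrP] at h
    rw [hσ, div_le_iff₀ (by linarith)]
    nlinarith
  obtain ⟨N, hN⟩ := exists_nat_gt ((k * K ^ k) / σ ^ k)
  have hσk : 0 < σ ^ k := pow_pos hσ0 k
  have hNpos : (0:ℝ) < N := lt_of_le_of_lt (by positivity) hN
  set d : ℝ := 1 / N with hd
  have hd0 : 0 < d := by positivity
  have hdk : k * d * K ^ k ≤ σ ^ k := by
    rw [div_lt_iff₀ hσk] at hN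
    rw [hd]; field_simp; linarith
  obtain ⟨n, hnN, hn1, hn2⟩ : ∃ n : ℕ, n < N ∧ IsEntanglementBreaking C₁ C₂ (Pt (n * d)) ∧
      ¬ IsEntanglementBreaking C₁ C₂ (Pt ((n + 1) * d)) := by
    by_contra hcon
    push Not at hcon
    have : ∀ n : ℕ, n ≤ N → IsEntanglementBreaking C₁ C₂ (Pt (n * d)) := by
      intro n
      induction n with
      | zero => intro _; simpa [Pt] using hQ
      | succ n ih =>
        intro h
        have := hcon n (by omega) (ih (by omega))
        push_cast; exact this
    have h := hle _ (this N le_rfl)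
    have : (N:ℝ) * d = 1 := by rw [hd]; field_simp
    rw [this] at h; linarith
  set t : ℝ := n * d with ht
  have ht' : ((n:ℝ) + 1) * d = t + d := by rw [ht]; ring
  rw [ht'] at hn2
  have ht0 : 0 ≤ t := by positivity
  have htd : t + d ≤ 1 := by
    rw [← ht', hd]
    rw [mul_one_div, div_le_one hNpos]
    exact_mod_cast hnN
  refine ⟨Pt (t + d), ?_, hn2⟩
  change AM C₁ C₂ k _
  have hc := AM_isCn (C₁ := C₁) h₂ hk
  set c := 1 - t with hcdef
  have hcσ : σ ≤ c := hle _ hn1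
  have hc0 : 0 ≤ c := by linarith
  have T1 : AM C₁ C₂ k (PiTensorProduct.map (fun _ : Fin k => Pt t) -
      PiTensorProduct.map (fun _ : Fin k => c • Q)) := by
    refine am_L2 h₂ hk hbip _ _ hn1 (eb_smul h₂ hQ hc0) ?_
    have : Pt t - c • Q = t • P := by simp only [Pt, hcdef, hRdef]; module
    rw [this]
    intro v hv
    exact h₂.2.2 _ ht0 _ (hP hv)
  have T2 : AM C₁ C₂ k ((c ^ k - k * d * K ^ k) • PiTensorProduct.map (fun _ : Fin k => Q)) := by
    refine hc.2.2 _ ?_ _ (am_L1 h₂ hbip _ ⟨0, hk⟩ (eb_pos h₂ hQ) fun _ _ => hQ)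
    have : σ ^ k ≤ c ^ k := pow_le_pow_left₀ hσ0.le hcσ k
    linarith
  let A : Fin k → Fin k → V₁ →ₗ[ℝ] V₂ := fun i j =>
    if j < i then Pt (t + d) else if i = j then R else Pt t
  have T3 : ∀ i, AM C₁ C₂ k (d • (PiTensorProduct.map (fun _ : Fin k => K • Q) +
      PiTensorProduct.map (A i))) := by
    intro i
    refine hc.2.2 _ hd0.le _ (am_L3 h₂ hk hbip _ _ (fun j => ?_) fun j => ?_)
    · simp only [A]
      split_ifs
      · exact hKP1 _ (by linarith) htd
      · exact hKR1
      · exact hKP1 _ ht0 (by linarith)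
    · simp only [A]
      split_ifs
      · exact hKP2 _ (by linarith) htd
      · exact hKR2
      · exact hKP2 _ ht0 (by linarith)
  have T3' : ∀ i : Fin k, PiTensorProduct.map (fun j => if j < i then Pt (t+d) else
      if i = j then Pt (t+d) - Pt t else Pt t) = d • PiTensorProduct.map (A i) := by
    intro i
    have := (PiTensorProduct.mapMultilinear ℝ (fun _ : Fin k => V₁) (fun _ => V₂)).map_smul_univ
      (fun j => if j = i then d else 1) (A i)
    simp only [PiTensorProduct.mapMultilinear_apply, Finset.prod_ite_eq', Finset.mem_univ,
      if_true] at this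
    rw [← this]
    congr 1
    funext j
    simp only [A]
    by_cases h1 : j < i
    · have : j ≠ i := ne_of_lt h1
      simp [h1, this]
    · by_cases h2 : j = i
      · subst h2
        simp only [lt_irrefl, if_false, if_true, Pt]; module
      · simp [h1, h2, Ne.symm h2]
  have hfin : PiTensorProduct.map (fun _ : Fin k => Pt (t + d)) =
      (PiTensorProduct.map (fun _ : Fin k => Pt t) - PiTensorProduct.map (fun _ : Fin k => c • Q))
      + ((c ^ k - k * d * K ^ k) • PiTensorProduct.map (fun _ : Fin k => Q))
      + ∑ i, d • (PiTensorProduct.map (fun _ : Fin k => K • Q) + PiTensorProduct.map (A i)) := by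
    have h := map_tele (k := k) (Pt (t+d)) (Pt t)
    simp only [T3'] at h
    rw [eq_add_of_sub_eq h]
    simp only [smul_add, Finset.sum_add_distrib, Finset.sum_const, Finset.card_univ,
      Fintype.card_fin, map_smul_const]
    module
  rw [hfin]
  exact hc.2.1 _ (hc.2.1 _ T1 _ T2) _ (hc.sum _ _ fun i _ => T3 i)

end partI2


set_option linter.unusedSectionVars false
section partII
open scoped InnerProductSpace

variable {E E₁ E₂ : Type} [NormedAddCommGroup E] [InnerProductSpace ℝ E] [FiniteDimensional ℝ E]
  [NormedAddCommGroup E₁] [InnerProductSpace ℝ E₁] [FiniteDimensional ℝ E₁]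
  [NormedAddCommGroup E₂] [InnerProductSpace ℝ E₂] [FiniteDimensional ℝ E₂]

/-- inner dual -/
def Dl {E : Type} [NormedAddCommGroup E] [InnerProductSpace ℝ E] (C : Set E) : Set E :=
  {y | ∀ x ∈ C, 0 ≤ ⟪x, y⟫_ℝ}

structure PC {E : Type} [NormedAddCommGroup E] [InnerProductSpace ℝ E] (C : Set E) : Prop where
  closed : IsClosed C
  cn : IsCn C
  span : Submodule.span ℝ C = ⊤
  pointed : ∀ x, x ∈ C → -x ∈ C → x = 0

def Cl {E : Type} [NormedAddCommGroup E] [InnerProductSpace ℝ E] (C : Set E) : Prop :=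
  ∃ (ι : Type) (_ : Fintype ι) (b : Module.Basis ι ℝ E), C = {x | ∀ i, 0 ≤ b.repr x i}

def NE {E₁ E₂ : Type} [NormedAddCommGroup E₁] [InnerProductSpace ℝ E₁]
    [NormedAddCommGroup E₂] [InnerProductSpace ℝ E₂] (C₁ : Set E₁) (C₂ : Set E₂) : Prop :=
  ∃ (P : E₁ →ₗ[ℝ] E₂) (W : E₂ →ₗ[ℝ] E₁), MapsTo P C₁ C₂ ∧ MapsTo W C₂ C₁ ∧
    LinearMap.trace ℝ E₁ (W ∘ₗ P) < 0

lemma NE_symm {C₁ : Set E₁} {C₂ : Set E₂} (h : NE C₁ C₂) : NE C₂ C₁ := by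
  obtain ⟨P, W, hP, hW, ht⟩ := h
  exact ⟨W, P, hW, hP, by rwa [LinearMap.trace_comp_comm']⟩

lemma bipolar {C : Set E} (h : PC C) : Dl (Dl C) = C := by
  apply Subset.antisymm
  · intro x hx
    by_contra hxC
    let K : ProperCone ℝ E :=
      { carrier := C
        add_mem' := fun {a b} ha hb => h.cn.2.1 a ha b hb
        zero_mem' := h.cn.1
        smul_mem' := fun c a ha => h.cn.2.2 c.1 c.2 a ha
        isClosed' := h.closed }
    obtain ⟨y, hy1, hy2⟩ := ProperCone.hyperplane_separation' K (x₀ := x) hxC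
    have := hx y (fun z hz => hy1 z hz)
    rw [real_inner_comm] at this
    linarith
  · intro x hx y hy
    rw [real_inner_comm]; exact hy x hx

lemma Dl_cn (C : Set E) : IsCn (Dl C) := by
  refine ⟨fun x _ => by simp, fun x hx y hy z hz => ?_, fun c hc x hx z hz => ?_⟩
  · rw [inner_add_right]; exact add_nonneg (hx z hz) (hy z hz)
  · rw [inner_smul_right]; exact mul_nonneg hc (hx z hz)

lemma Dl_closed (C : Set E) : IsClosed (Dl C) := by
  have : Dl C = ⋂ x ∈ C, {y | 0 ≤ ⟪x, y⟫_ℝ} := by ext; simp [Dl]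
  rw [this]
  refine isClosed_biInter fun x _ => isClosed_le continuous_const (by fun_prop)

lemma eq_zero_of_span {C : Set E} (h : Submodule.span ℝ C = ⊤) {y : E}
    (hy : ∀ x ∈ C, ⟪x, y⟫_ℝ = 0) : y = 0 := by
  have : y ∈ (Submodule.span ℝ C)ᗮ := by
    rw [Submodule.mem_orthogonal]
    intro u hu
    induction hu using Submodule.span_induction with
    | mem x hx => exact hy x hx
    | zero => simp
    | add x y _ _ h1 h2 => rw [inner_add_left, h1, h2, add_zero]
    | smul c x _ h1 => rw [inner_smul_left, h1]; simp
  rw [h, Submodule.top_orthogonal_eq_bot] at this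
  simpa using this

lemma Dl_PC {C : Set E} (h : PC C) : PC (Dl C) := by
  refine ⟨Dl_closed C, Dl_cn C, ?_, fun y h1 h2 => ?_⟩
  · rw [← Submodule.orthogonal_eq_bot_iff, Submodule.eq_bot_iff]
    intro v hv
    have hv' : ∀ y ∈ Dl C, ⟪y, v⟫_ℝ = 0 := fun y hy =>
      (Submodule.mem_orthogonal _ _).1 hv y (Submodule.subset_span hy)
    refine h.pointed v ?_ ?_
    · rw [← bipolar h]; intro y hy; rw [hv' y hy]
    · rw [← bipolar h]; intro y hy; rw [inner_neg_right, hv' y hy]; simp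
  · refine eq_zero_of_span h.span fun x hx => le_antisymm ?_ (h1 x hx)
    have := h2 x hx
    rw [inner_neg_right] at this; linarith

lemma exists_u {C : Set E} (h : PC C) : ∃ u ∈ Dl C, ∀ v ∈ C, v ≠ 0 → 0 < ⟪v, u⟫_ℝ := by
  obtain ⟨b, hb⟩ := exists_basis_in (Dl_PC h).span
  refine ⟨∑ i, b i, (Dl_cn C).sum _ _ fun i _ => hb i, fun v hv hv0 => ?_⟩
  rw [inner_sum]
  have hn : ∀ i ∈ Finset.univ, 0 ≤ ⟪v, b i⟫_ℝ := fun i _ => hb i v hv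
  refine lt_of_le_of_ne (Finset.sum_nonneg hn) fun h0 => hv0 ?_
  have := (Finset.sum_eq_zero_iff_of_nonneg hn).1 h0.symm
  refine eq_zero_of_span (C := range b) b.span_eq ?_
  rintro _ ⟨i, rfl⟩
  rw [real_inner_comm]; exact this i (Finset.mem_univ i)

lemma exists_int {C : Set E} (h : PC C) : ∃ c ∈ C, ∀ y ∈ Dl C, y ≠ 0 → 0 < ⟪c, y⟫_ℝ := by
  obtain ⟨u, hu, hu'⟩ := exists_u (Dl_PC h)
  rw [bipolar h] at hu
  exact ⟨u, hu, fun y hy hy0 => by rw [real_inner_comm]; exact hu' y hy hy0⟩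

lemma compact_L {X : Type*} [TopologicalSpace X] {K : Set X} (hK : IsCompact K) {f g : X → ℝ}
    (hf : Continuous f) (hg : Continuous g) (hg0 : ∀ x ∈ K, 0 ≤ g x)
    (h : ∀ x ∈ K, g x = 0 → 0 < f x) : ∃ t : ℝ, 0 ≤ t ∧ ∀ x ∈ K, 0 < f x + t * g x := by
  have hcov : K ⊆ ⋃ n : ℕ, {x | 0 < f x + n * max (g x) 0} := by
    intro x hx
    rw [mem_iUnion]
    rcases (hg0 x hx).eq_or_lt with h0 | h0
    · exact ⟨0, by simpa using h x hx h0.symm⟩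
    · obtain ⟨n, hn⟩ := exists_nat_gt (-f x / g x)
      refine ⟨n, ?_⟩
      rw [div_lt_iff₀ h0] at hn
      simp only [mem_ofPred_eq, max_eq_left h0.le]; linarith
  obtain ⟨n, hn⟩ := hK.elim_directed_cover _ (fun n => isOpen_lt continuous_const (by fun_prop)) hcov
    (directed_of_isDirected_le fun m n hmn x (hx : 0 < f x + m * max (g x) 0) => by
      change 0 < f x + n * max (g x) 0
      have : (m:ℝ) * max (g x) 0 ≤ n * max (g x) 0 :=
        mul_le_mul_of_nonneg_right (by exact_mod_cast hmn) (le_max_right _ _)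
      linarith)
  refine ⟨n, by positivity, fun x hx => ?_⟩
  have := hn hx
  simpa [max_eq_left (hg0 x hx)] using this

lemma cone_L {C : Set E} (hcl : IsClosed C) (hcn : IsCn C) (d : ℕ) {f g : E → ℝ}
    (hf : Continuous f) (hg : Continuous g)
    (hfh : ∀ c : ℝ, 0 ≤ c → ∀ v, f (c • v) = c ^ d * f v)
    (hgh : ∀ c : ℝ, 0 ≤ c → ∀ v, g (c • v) = c ^ d * g v)
    (hg0 : ∀ x ∈ C, 0 ≤ g x)
    (h : ∀ x ∈ C, x ≠ 0 → g x = 0 → 0 < f x) :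
    ∃ t : ℝ, 0 ≤ t ∧ ∀ x ∈ C, x ≠ 0 → 0 < f x + t * g x := by
  have hK : IsCompact (Metric.sphere (0:E) 1 ∩ C) := (isCompact_sphere 0 1).inter_right hcl
  obtain ⟨t, ht, ht'⟩ := compact_L hK hf hg (fun x hx => hg0 x hx.2) (fun x hx => h x hx.2 (by
    rintro rfl; simpa using hx.1))
  refine ⟨t, ht, fun x hx hx0 => ?_⟩
  have hn : 0 < ‖x‖ := norm_pos_iff.2 hx0
  have h1 := ht' (‖x‖⁻¹ • x) ⟨by simp [norm_smul, hn.ne'], hcn.2.2 _ (by positivity) _ hx⟩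
  rw [hfh _ (by positivity), hgh _ (by positivity)] at h1
  have h2 : 0 < ‖x‖⁻¹ ^ d := by positivity
  have h3 : 0 < ‖x‖⁻¹ ^ d * (f x + t * g x) := by linarith
  exact (mul_pos_iff_of_pos_left h2).1 h3

lemma trace_adj (T : E →ₗ[ℝ] E) : LinearMap.trace ℝ E (LinearMap.adjoint T) = LinearMap.trace ℝ E T := by
  rw [LinearMap.trace_eq_sum_inner _ (stdOrthonormalBasis ℝ E),
    LinearMap.trace_eq_sum_inner _ (stdOrthonormalBasis ℝ E)]
  refine Finset.sum_congr rfl fun i _ => ?_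
  rw [LinearMap.adjoint_inner_right, real_inner_comm]

lemma NE_dual {C₁ : Set E₁} {C₂ : Set E₂} (h₁ : PC C₁) (h₂ : PC C₂) (h : NE (Dl C₁) (Dl C₂)) :
    NE C₁ C₂ := by
  obtain ⟨P, W, hP, hW, ht⟩ := h
  refine ⟨LinearMap.adjoint W, LinearMap.adjoint P, fun x hx => ?_, fun x hx => ?_, ?_⟩
  · rw [← bipolar h₂]
    intro y hy
    rw [LinearMap.adjoint_inner_right, real_inner_comm]
    exact hW hy x hx
  · rw [← bipolar h₁]
    intro y hy
    rw [LinearMap.adjoint_inner_right, real_inner_comm]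
    exact hP hy x hx
  · rw [← LinearMap.adjoint_comp, trace_adj]; exact ht

lemma exists_dual_basis {ι : Type} [Fintype ι] (b : Module.Basis ι ℝ E) :
    ∃ b' : Module.Basis ι ℝ E, (∀ x i, b.repr x i = ⟪x, b' i⟫_ℝ) ∧
      (∀ x i, b'.repr x i = ⟪x, b i⟫_ℝ) := by
  classical
  have hB : (innerₗ E).Nondegenerate := by
    constructor
    · intro x hx
      have := hx x; simpa using this
    · intro x hx
      have := hx x; simpa using this
  let b' := LinearMap.BilinForm.dualBasis (innerₗ E) hB b
  have hb : ∀ i j, ⟪b' i, b j⟫_ℝ = if j = i then 1 else 0 := fun i j =>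
    LinearMap.BilinForm.apply_dualBasis_left (B := innerₗ E) hB b i j
  refine ⟨b', fun x i => ?_, fun x i => ?_⟩
  · conv_rhs => rw [← b.sum_repr x]
    rw [sum_inner]
    have hb' : ∀ j, ⟪b j, b' i⟫_ℝ = if j = i then 1 else 0 := fun j => by
      rw [real_inner_comm, hb]
    simp [real_inner_smul_left, hb']
  · conv_rhs => rw [← b'.sum_repr x]
    rw [sum_inner]
    simp [real_inner_smul_left, hb]

lemma Cl_dual {C : Set E} (h : Cl C) : Cl (Dl C) := by
  classical
  obtain ⟨ι, _, b, rfl⟩ := h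
  obtain ⟨b', h1, h2⟩ := exists_dual_basis b
  refine ⟨ι, inferInstance, b', ?_⟩
  ext y
  simp only [Dl, mem_ofPred_eq, h2]
  constructor
  · intro h i
    rw [real_inner_comm]
    refine h _ fun j => ?_
    rw [b.repr_self]
    by_cases hij : i = j <;> simp [hij]
  · intro h x hx
    rw [← b.sum_repr x, sum_inner]
    refine Finset.sum_nonneg fun i _ => ?_
    rw [real_inner_smul_left, real_inner_comm]
    exact mul_nonneg (hx i) (h i)

lemma not_Cl_dual {C : Set E} (hC : PC C) (h : ¬ Cl C) : ¬ Cl (Dl C) := fun h' => by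
  have := Cl_dual h'
  rw [bipolar hC] at this
  exact h this

end partII


set_option linter.unusedSectionVars false
section partIIC
open scoped InnerProductSpace

variable {E E₁ E₂ : Type} [NormedAddCommGroup E] [InnerProductSpace ℝ E] [FiniteDimensional ℝ E]
  [NormedAddCommGroup E₁] [InnerProductSpace ℝ E₁] [FiniteDimensional ℝ E₁]
  [NormedAddCommGroup E₂] [InnerProductSpace ℝ E₂] [FiniteDimensional ℝ E₂]

def FcU {E : Type} [NormedAddCommGroup E] [InnerProductSpace ℝ E] (C : Set E) (y : E) :
    Submodule ℝ E := Submodule.span ℝ {x | x ∈ C ∧ ⟪x, y⟫_ℝ = 0}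

def Fc {E : Type} [NormedAddCommGroup E] [InnerProductSpace ℝ E] (C : Set E) (y : E) :
    Set (FcU C y) := {x | (x : E) ∈ C}

lemma FcU_orth {C : Set E} {y : E} {x : E} (hx : x ∈ FcU C y) : ⟪x, y⟫_ℝ = 0 := by
  induction hx using Submodule.span_induction with
  | mem x hx => exact hx.2
  | zero => simp
  | add a b _ _ h1 h2 => rw [inner_add_left, h1, h2, add_zero]
  | smul c a _ h1 => rw [real_inner_smul_left, h1, mul_zero]

lemma Fc_PC {C : Set E} (h : PC C) (y : E) : PC (Fc C y) := by
  refine ⟨h.closed.preimage continuous_subtype_val, ⟨h.cn.1, fun a ha b hb => h.cn.2.1 _ ha _ hb,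
    fun c hc a ha => h.cn.2.2 c hc _ ha⟩, ?_, fun x h1 h2 => Subtype.ext (h.pointed _ h1 h2)⟩
  rw [eq_top_iff]
  refine (Submodule.span_span_coe_preimage (R := ℝ) (s := {x | x ∈ C ∧ ⟪x, y⟫_ℝ = 0})).ge.trans ?_
  refine Submodule.span_mono ?_
  rintro ⟨x, hx⟩ hx'
  exact hx'.1

lemma FcU_finrank {C : Set E} {y : E} (hy : y ≠ 0) :
    Module.finrank ℝ (FcU C y) < Module.finrank ℝ E := by
  refine Submodule.finrank_lt fun h => hy ?_
  have : y ∈ FcU C y := by rw [h]; trivial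
  have := FcU_orth this
  simpa using this

lemma mem_FcU {C : Set E} {y x : E} (hx : x ∈ C) (hxy : ⟪x, y⟫_ℝ = 0) : x ∈ FcU C y :=
  Submodule.subset_span ⟨hx, hxy⟩

lemma Cl_face_unpack {C : Set E} {y : E} (h : Cl (Fc C y)) :
    ∃ (ι : Type) (_ : Fintype ι) (f : ι → E), LinearIndependent ℝ f ∧
      (∀ i, f i ∈ C ∧ ⟪f i, y⟫_ℝ = 0) ∧
      ∀ x ∈ C, ⟪x, y⟫_ℝ = 0 → ∃ c : ι → ℝ, (∀ i, 0 ≤ c i) ∧ x = ∑ i, c i • f i := by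
  classical
  obtain ⟨ι, _, b, hb⟩ := h
  refine ⟨ι, inferInstance, fun i => (b i : E), ?_, fun i => ⟨?_, FcU_orth (b i).2⟩, ?_⟩
  · exact b.linearIndependent.map' (FcU C y).subtype (Submodule.ker_subtype _)
  · have : b i ∈ Fc C y := by
      rw [hb]; intro j
      rw [b.repr_self]
      by_cases hij : i = j <;> simp [hij]
    exact this
  · intro x hx hxy
    have hx' : (⟨x, mem_FcU hx hxy⟩ : FcU C y) ∈ Fc C y := hx
    rw [hb] at hx'
    refine ⟨fun i => b.repr ⟨x, mem_FcU hx hxy⟩ i, hx', ?_⟩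
    have := congrArg (Subtype.val) (b.sum_repr ⟨x, mem_FcU hx hxy⟩)
    refine this.symm.trans ?_
    rw [Submodule.coe_sum]
    rfl

lemma face_reduction {C₁ : Set E₁} {C₂ : Set E₂} (h₁ : PC C₁) (h₂ : PC C₂) {y : E₂}
    (hy : y ∈ Dl C₂) (h : NE C₁ (Fc C₂ y)) : NE C₁ C₂ := by
  obtain ⟨P, W, hP, hW, ht⟩ := h
  obtain ⟨c0, hc0, hc0'⟩ := exists_int h₁
  obtain ⟨u, hu, hu'⟩ := exists_u h₂
  let U := FcU C₂ y
  let uf : U →ₗ[ℝ] ℝ := (innerₗ E₂ u) ∘ₗ U.subtype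
  have huf : ∀ x : U, uf x = ⟪(x:E₂), u⟫_ℝ := fun x => by
    simp [uf, real_inner_comm]
  set a := LinearMap.trace ℝ E₁ (W ∘ₗ P) with ha
  obtain ⟨δ, hδ, hδa⟩ : ∃ δ : ℝ, 0 < δ ∧ a + δ * uf (P c0) < 0 := by
    refine ⟨-a / (2 * (|uf (P c0)| + 1)), div_pos (by linarith) (by positivity), ?_⟩
    have h1 := le_abs_self (uf (P c0))
    have h2 : -a / (2 * (|uf (P c0)| + 1)) * uf (P c0) ≤ -a / (2 * (|uf (P c0)| + 1)) * (|uf (P c0)| + 1) :=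
      mul_le_mul_of_nonneg_left (by linarith) (div_nonneg (by linarith) (by positivity))
    have h3 : -a / (2 * (|uf (P c0)| + 1)) * (|uf (P c0)| + 1) = -a / 2 := by
      field_simp
    linarith
  let W' : U →ₗ[ℝ] E₁ := W + δ • uf.smulRight c0
  have htr : LinearMap.trace ℝ E₁ (W' ∘ₗ P) < 0 := by
    have : W' ∘ₗ P = W ∘ₗ P + δ • (uf ∘ₗ P).smulRight c0 := by
      ext v; simp [W']
    rw [this, map_add, map_smul, LinearMap.trace_smulRight, smul_eq_mul]
    exact hδa
  let π : E₂ →ₗ[ℝ] U := U.orthogonalProjectionOnto.toLinearMap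
  have hπ : ∀ x : U, π x = x := fun x => by simp [π]
  let T := W' ∘ₗ π
  have hTF : ∀ x ∈ C₂, x ≠ 0 → ⟪x, y⟫_ℝ = 0 → ∀ z ∈ Dl C₁, z ≠ 0 → 0 < ⟪T x, z⟫_ℝ := by
    intro x hx hx0 hxy z hz hz0
    have hxU := mem_FcU hx hxy
    have e : T x = W ⟨x, hxU⟩ + (δ * ⟪x, u⟫_ℝ) • c0 := by
      simp only [T, LinearMap.comp_apply]
      rw [show π x = ⟨x, hxU⟩ from hπ ⟨x, hxU⟩]
      simp [W', huf, smul_smul]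
    rw [e, inner_add_left, real_inner_smul_left]
    have h1 : 0 ≤ ⟪W ⟨x, hxU⟩, z⟫_ℝ := hz _ (hW (show (⟨x, hxU⟩ : U) ∈ Fc C₂ y from hx))
    have h2 := hu' x hx hx0
    have h3 := hc0' z hz hz0
    positivity
  have hTc : Continuous T := T.continuous_of_finiteDimensional
  obtain ⟨t, ht0, ht1⟩ := compact_L (X := E₂ × E₁)
    (((isCompact_sphere (0:E₂) 1).inter_right h₂.closed).prod
      ((isCompact_sphere (0:E₁) 1).inter_right (Dl_closed C₁)))
    (f := fun p => ⟪T p.1, p.2⟫_ℝ) (g := fun p => ⟪p.1, y⟫_ℝ * ⟪c0, p.2⟫_ℝ)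
    (by fun_prop) (by fun_prop)
    (fun p hp => mul_nonneg (hy _ hp.1.2) (hp.2.2 _ hc0))
    (fun p hp hg => by
      have h1 : p.1 ≠ 0 := by intro h; have := hp.1.1; simp [h] at this
      have h2 : p.2 ≠ 0 := by intro h; have := hp.2.1; simp [h] at this
      have h3 := hc0' p.2 hp.2.2 h2
      rcases mul_eq_zero.1 hg with h | h
      · exact hTF _ hp.1.2 h1 h _ hp.2.2 h2
      · exact absurd h h3.ne')
  refine ⟨U.subtype ∘ₗ P, T + t • (innerₗ E₂ y).smulRight c0, fun x hx => hP hx, ?_, ?_⟩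
  · intro x hx
    rw [← bipolar h₁]
    intro z hz
    rw [real_inner_comm]
    have e : ⟪(T + t • (innerₗ E₂ y).smulRight c0) x, z⟫_ℝ
        = ⟪T x, z⟫_ℝ + t * (⟪x, y⟫_ℝ * ⟪c0, z⟫_ℝ) := by
      simp only [LinearMap.add_apply, LinearMap.smul_apply, LinearMap.smulRight_apply,
        innerₗ_apply_apply, inner_add_left, real_inner_smul_left, real_inner_comm y x]
    rw [e]
    by_cases hx0 : x = 0
    · simp [hx0]
    by_cases hz0 : z = 0
    · simp [hz0]
    have nx : 0 < ‖x‖ := norm_pos_iff.2 hx0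
    have nz : 0 < ‖z‖ := norm_pos_iff.2 hz0
    have := ht1 (‖x‖⁻¹ • x, ‖z‖⁻¹ • z)
      ⟨⟨by simp [norm_smul, nx.ne'], h₂.cn.2.2 _ (by positivity) _ hx⟩,
       ⟨by simp [norm_smul, nz.ne'], (Dl_cn C₁).2.2 _ (by positivity) _ hz⟩⟩
    simp only [map_smul, real_inner_smul_left, real_inner_smul_right] at this
    have h3 : 0 < (‖x‖⁻¹ * ‖z‖⁻¹) * (⟪T x, z⟫_ℝ + t * (⟪x, y⟫_ℝ * ⟪c0, z⟫_ℝ)) := by linarith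
    exact ((mul_pos_iff_of_pos_left (by positivity)).1 h3).le
  · have : (T + t • (innerₗ E₂ y).smulRight c0) ∘ₗ U.subtype ∘ₗ P = W' ∘ₗ P := by
      ext v
      have h0 : ⟪y, (P v : E₂)⟫_ℝ = 0 := by rw [real_inner_comm]; exact FcU_orth (P v).2
      simp [T, hπ, h0]
    rw [this]; exact htr

end partIIC


set_option linter.unusedSectionVars false
section partIID
open scoped InnerProductSpace

variable {E : Type} [NormedAddCommGroup E] [InnerProductSpace ℝ E] [FiniteDimensional ℝ E]

def SPos {E : Type} [NormedAddCommGroup E] [InnerProductSpace ℝ E] (C : Set E) (u : E) : Prop :=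
  u ∈ Dl C ∧ ∀ v ∈ C, v ≠ 0 → 0 < ⟪v, u⟫_ℝ

def Good {E : Type} [NormedAddCommGroup E] [InnerProductSpace ℝ E] (C : Set E) (u w : E) : Prop :=
  w ∈ C ∧ ⟪w, u⟫_ℝ = 1 ∧ ∃ φ ∈ Dl C, ⟪w, φ⟫_ℝ = 0 ∧
    ∀ v ∈ C, ‖v - ⟪v, u⟫_ℝ • w‖ ^ 2 ≤ ⟪v, φ⟫_ℝ * ⟪v, u⟫_ℝ

lemma norm_le_u {C : Set E} (h : PC C) {u : E} (hu : SPos C u) :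
    ∃ t : ℝ, 0 ≤ t ∧ ∀ v ∈ C, ‖v‖ ≤ t * ⟪v, u⟫_ℝ := by
  obtain ⟨t, ht, ht'⟩ := cone_L h.closed h.cn 1 (f := fun v => -‖v‖) (g := fun v => ⟪v, u⟫_ℝ)
    (by fun_prop) (by fun_prop)
    (fun c hc v => by simp [norm_smul, abs_of_nonneg hc])
    (fun c hc v => by simp [real_inner_smul_left])
    (fun x hx => hu.1 x hx)
    (fun x hx hx0 h0 => absurd h0 (hu.2 x hx hx0).ne')
  refine ⟨t, ht, fun v hv => ?_⟩
  by_cases hv0 : v = 0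
  · simp [hv0]
  · have := ht' v hv hv0; linarith

lemma density {C : Set E} (h : PC C) {u : E} (hu : SPos C u) {l : E}
    (hl : ∀ w, Good C u w → 0 ≤ ⟪w, l⟫_ℝ) : l ∈ Dl C := by
  intro v0' hv0'
  by_contra hneg
  push Not at hneg
  have hv00 : v0' ≠ 0 := by rintro rfl; simp at hneg
  obtain ⟨t, ht, htn⟩ := norm_le_u h hu
  let B : Set E := {v | v ∈ C ∧ ⟪v, u⟫_ℝ = 1}
  have hBcl : IsClosed B := h.closed.inter (isClosed_eq (by fun_prop) continuous_const)
  have hBc : IsCompact B := by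
    refine (isCompact_closedBall (0:E) t).of_isClosed_subset hBcl ?_
    rintro v ⟨hv, hv1⟩
    have := htn v hv
    rw [hv1, mul_one] at this
    simpa using this
  have hs0 := hu.2 v0' hv0' hv00
  set v0 := (⟪v0', u⟫_ℝ)⁻¹ • v0' with hv0
  have hv0B : v0 ∈ B := ⟨h.cn.2.2 _ (by positivity) _ hv0', by
    rw [hv0, real_inner_smul_left]; field_simp⟩
  have hv0l : ⟪v0, l⟫_ℝ < 0 := by
    rw [hv0, real_inner_smul_left]
    exact mul_neg_of_pos_of_neg (by positivity) hneg
  obtain ⟨N, hN⟩ : ∃ N : ℝ, 0 < N ∧ t ^ 2 + 2 * N * ⟪v0, l⟫_ℝ < 0 := by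
    refine ⟨(t ^ 2 + 1) / (2 * (-⟪v0, l⟫_ℝ)), div_pos (by positivity) (by linarith), ?_⟩
    have : ⟪v0, l⟫_ℝ ≠ 0 := hv0l.ne
    field_simp
    linarith
  set z := N • l with hz
  obtain ⟨w, hwB, hw⟩ := hBc.exists_isMaxOn ⟨v0, hv0B⟩
    (f := fun v => ‖v - z‖ ^ 2) (by fun_prop)
  have hw' : ∀ v ∈ B, ‖v - z‖ ^ 2 ≤ ‖w - z‖ ^ 2 := fun v hv => hw hv
  have hwl : ⟪w, l⟫_ℝ < 0 := by
    have h1 := hw' v0 hv0B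
    rw [norm_sub_sq_real, norm_sub_sq_real, hz, real_inner_smul_right, real_inner_smul_right] at h1
    have h2 : ‖w‖ ≤ t := by
      have := htn w hwB.1; rwa [hwB.2, mul_one] at this
    have h3 : ‖w‖ ^ 2 ≤ t ^ 2 := pow_le_pow_left₀ (norm_nonneg _) h2 2
    have h4 : 0 ≤ ‖v0‖ ^ 2 := by positivity
    by_contra hc
    push Not at hc
    have := mul_nonneg hN.1.le hc
    linarith [hN.2]
  have hgood : Good C u w := by
    let φ : E := (2:ℝ) • (⟪w, w - z⟫_ℝ • u - (w - z))
    have hφ : ∀ v, ⟪v, φ⟫_ℝ = 2 * (⟪w, w - z⟫_ℝ * ⟪v, u⟫_ℝ - ⟪v, w - z⟫_ℝ) := by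
      intro v
      simp only [φ, real_inner_smul_right, inner_sub_right]
    have hB1 : ∀ v ∈ B, ‖v - w‖ ^ 2 ≤ ⟪v, φ⟫_ℝ := by
      intro v hv
      have h1 := hw' v hv
      have h2 : v - z = (v - w) + (w - z) := by abel
      rw [h2, norm_add_sq_real, inner_sub_left] at h1
      rw [hφ, hv.2]
      linarith
    have hmain : ∀ v ∈ C, ‖v - ⟪v, u⟫_ℝ • w‖ ^ 2 ≤ ⟪v, φ⟫_ℝ * ⟪v, u⟫_ℝ := by
      intro v hv
      by_cases hv0 : v = 0
      · simp [hv0]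
      have hs := hu.2 v hv hv0
      set s := ⟪v, u⟫_ℝ with hsd
      have hvB : s⁻¹ • v ∈ B := ⟨h.cn.2.2 _ (by positivity) _ hv, by
        rw [real_inner_smul_left, ← hsd]; field_simp⟩
      have h1 := hB1 _ hvB
      have h2 : v - s • w = s • (s⁻¹ • v - w) := by
        rw [smul_sub, smul_smul, mul_inv_cancel₀ hs.ne', one_smul]
      rw [h2, norm_smul, mul_pow, Real.norm_eq_abs, sq_abs]
      rw [real_inner_smul_left] at h1
      calc s ^ 2 * ‖s⁻¹ • v - w‖ ^ 2 ≤ s ^ 2 * (s⁻¹ * ⟪v, φ⟫_ℝ) :=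
            mul_le_mul_of_nonneg_left h1 (by positivity)
        _ = ⟪v, φ⟫_ℝ * s := by field_simp
    refine ⟨hwB.1, hwB.2, φ, ?_, ?_, hmain⟩
    · intro v hv
      by_cases hv0 : v = 0
      · simp [hv0]
      have hs := hu.2 v hv hv0
      have h1 := hmain v hv
      have h2 : 0 ≤ ‖v - ⟪v, u⟫_ℝ • w‖ ^ 2 := by positivity
      exact nonneg_of_mul_nonneg_left (h2.trans h1) hs
    · rw [hφ, hwB.2]; ring
  exact absurd (hl w hgood) (by linarith)

lemma good_ne {C : Set E} {u w : E} (hw : Good C u w) : w ≠ 0 := by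
  rintro rfl
  have := hw.2.1
  simp at this

lemma face_gens {C : Set E} {u : E} {y : E} (hu : SPos C u)
    {ι : Type} [Fintype ι] {f : ι → E} (hli : LinearIndependent ℝ f)
    (hf : ∀ i, f i ∈ C ∧ ⟪f i, y⟫_ℝ = 0)
    (hgen : ∀ x ∈ C, ⟪x, y⟫_ℝ = 0 → ∃ c : ι → ℝ, (∀ i, 0 ≤ c i) ∧ x = ∑ i, c i • f i)
    {w : E} (hw : Good C u w) (hwy : ⟪w, y⟫_ℝ = 0) : ∃ i, f i = ⟪f i, u⟫_ℝ • w ∧ 0 < ⟪f i, u⟫_ℝ := by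
  obtain ⟨c, hc, hsum⟩ := hgen w hw.1 hwy
  obtain ⟨_, _, φ, hφ, hwφ, hineq⟩ := id hw
  have : ∃ i, 0 < c i := by
    by_contra hcon
    push Not at hcon
    have h0 : ∀ i, c i = 0 := fun i => le_antisymm (hcon i) (hc i)
    exact good_ne hw (by rw [hsum]; simp [h0])
  obtain ⟨i, hi⟩ := this
  have hfi0 : f i ≠ 0 := hli.ne_zero i
  refine ⟨i, ?_, hu.2 _ (hf i).1 hfi0⟩
  have h1 : ∑ j, c j * ⟪f j, φ⟫_ℝ = 0 := by
    rw [← hwφ]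
    conv_rhs => rw [hsum]
    rw [sum_inner]
    simp [real_inner_smul_left]
  have h2 := (Finset.sum_eq_zero_iff_of_nonneg (fun j _ => mul_nonneg (hc j) (hφ _ (hf j).1))).1 h1 i
    (Finset.mem_univ i)
  have h3 : ⟪f i, φ⟫_ℝ = 0 := (mul_eq_zero.1 h2).resolve_left hi.ne'
  have h4 := hineq (f i) (hf i).1
  rw [h3, zero_mul] at h4
  have h5 : ‖f i - ⟪f i, u⟫_ℝ • w‖ = 0 := by
    have := le_antisymm h4 (by positivity)
    exact pow_eq_zero_iff (two_ne_zero) |>.1 this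
  exact sub_eq_zero.1 (norm_eq_zero.1 h5)

lemma face_fin {C : Set E} {u : E} {y : E} (hu : SPos C u) (hcl : Cl (Fc C y)) :
    {w | Good C u w ∧ ⟪w, y⟫_ℝ = 0}.Finite := by
  obtain ⟨ι, _, f, hli, hf, hgen⟩ := Cl_face_unpack hcl
  refine (finite_range fun i => (⟪f i, u⟫_ℝ)⁻¹ • f i).subset ?_
  rintro w ⟨hw, hwy⟩
  obtain ⟨i, h1, h2⟩ := face_gens hu hli hf hgen hw hwy
  refine ⟨i, ?_⟩
  change (⟪f i, u⟫_ℝ)⁻¹ • f i = w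
  conv_lhs => rw [h1]
  rw [real_inner_smul_left, hw.2.1, mul_one, smul_smul, inv_mul_cancel₀ h2.ne', one_smul]

lemma face_coord {C : Set E} {u : E} {y : E} (hu : SPos C u) (hcl : Cl (Fc C y))
    {r : E} (hr : Good C u r) (hry : ⟪r, y⟫_ℝ = 0) :
    ∃ g : E →ₗ[ℝ] ℝ, 0 < g r ∧ (∀ x ∈ C, ⟪x, y⟫_ℝ = 0 → 0 ≤ g x) ∧
      ∀ w, Good C u w → ⟪w, y⟫_ℝ = 0 → w ≠ r → g w = 0 := by
  classical
  obtain ⟨ι, _, f, hli, hf, hgen⟩ := Cl_face_unpack hcl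
  obtain ⟨a0, h1, h2⟩ := face_gens hu hli hf hgen hr hry
  obtain ⟨g, hg⟩ := LinearMap.exists_extend ((Finsupp.lapply a0 : (ι →₀ ℝ) →ₗ[ℝ] ℝ) ∘ₗ hli.repr)
  have hgf : ∀ a, g (f a) = if a = a0 then 1 else 0 := by
    intro a
    have hm : f a ∈ Submodule.span ℝ (range f) := Submodule.subset_span ⟨a, rfl⟩
    have := LinearMap.congr_fun hg ⟨f a, hm⟩
    simp only [LinearMap.comp_apply, Submodule.subtype_apply] at this
    rw [this, hli.repr_eq_single a ⟨f a, hm⟩ rfl]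
    simp [Finsupp.single_apply]
  refine ⟨g, ?_, ?_, ?_⟩
  · have := hgf a0
    rw [h1, map_smul, if_pos rfl, smul_eq_mul] at this
    by_contra hc
    push Not at hc
    nlinarith
  · intro x hx hxy
    obtain ⟨c, hc, hs⟩ := hgen x hx hxy
    rw [hs, map_sum]
    refine Finset.sum_nonneg fun i _ => ?_
    rw [map_smul, hgf, smul_eq_mul]
    split_ifs <;> simp [hc]
  · intro w hw hwy hne
    obtain ⟨a, k1, k2⟩ := face_gens hu hli hf hgen hw hwy
    have haa : a ≠ a0 := by
      rintro rfl
      have : ⟪f a, u⟫_ℝ • w = ⟪f a, u⟫_ℝ • r := by rw [← k1, ← h1]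
      exact hne (smul_right_injective E k2.ne' this)
    have := hgf a
    rw [k1, map_smul, if_neg haa, smul_eq_mul] at this
    exact (mul_eq_zero.1 this).resolve_left k2.ne'

lemma finite_M {X : Set E} (hX : X.Finite) (f g : E → ℝ) (hg : ∀ x ∈ X, 0 ≤ g x)
    (h : ∀ x ∈ X, g x = 0 → 0 ≤ f x) : ∃ M : ℝ, 0 ≤ M ∧ ∀ x ∈ X, 0 ≤ f x + M * g x := by
  have hnn : ∀ x ∈ hX.toFinset, 0 ≤ |f x| / g x := fun x hx =>
    div_nonneg (abs_nonneg _) (hg x (by simpa using hx))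
  refine ⟨∑ x ∈ hX.toFinset, |f x| / g x, Finset.sum_nonneg hnn, fun x hx => ?_⟩
  rcases (hg x hx).eq_or_lt with h0 | h0
  · rw [← h0, mul_zero, add_zero]; exact h x hx h0.symm
  · have h1 : |f x| / g x ≤ ∑ x ∈ hX.toFinset, |f x| / g x :=
      Finset.single_le_sum (f := fun x => |f x| / g x) hnn (by simpa using hx)
    rw [div_le_iff₀ h0] at h1
    have := neg_abs_le (f x)
    linarith

def Mnl {E : Type} [NormedAddCommGroup E] [InnerProductSpace ℝ E] (C : Set E) : Prop :=
  (∀ y ∈ Dl C, y ≠ 0 → Cl (Fc C y)) ∧ (∀ r ∈ C, r ≠ 0 → Cl (Fc (Dl C) r))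

lemma chord {C : Set E} (h : PC C) (hM : Mnl C) (hn : ¬ Cl C) {u : E} (hu : SPos C u) :
    ∃ w1 w2, Good C u w1 ∧ Good C u w2 ∧ ∀ y ∈ Dl C, y ≠ 0 → 0 < ⟪w1 + w2, y⟫_ℝ := by
  classical
  by_contra hcon
  push Not at hcon
  apply hn
  by_cases hX : ∃ r, Good C u r
  swap
  · push Not at hX
    have hall : ∀ l, l ∈ Dl C := fun l => density h hu fun w hw => absurd hw (hX w)
    have h0 : ∀ l : E, l = 0 := fun l => (Dl_PC h).pointed l (hall l) (hall _)
    have : Subsingleton E := ⟨fun a b => by rw [h0 a, h0 b]⟩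
    refine ⟨Fin 0, inferInstance, Module.Basis.empty E, ?_⟩
    ext x
    simp only [IsEmpty.forall_iff, mem_ofPred_eq, iff_true]
    rw [h0 x]; exact h.cn.1
  obtain ⟨r, hr⟩ := hX
  have hr0 := good_ne hr
  obtain ⟨ι, _, ψ, hli, hψ, hgen⟩ := Cl_face_unpack (hM.2 r hr.1 hr0)
  have hψr : ∀ i, ⟪r, ψ i⟫_ℝ = 0 := fun i => by rw [real_inner_comm]; exact (hψ i).2
  -- step 2
  have step2 : ∀ w, Good C u w → ∃ i, ⟪w, ψ i⟫_ℝ = 0 := by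
    intro w hw
    obtain ⟨y, hy, hy0, hle⟩ := hcon r w hr hw
    rw [inner_add_left] at hle
    have a1 := hy r hr.1
    have a2 := hy w hw.1
    obtain ⟨c, hc, hs⟩ := hgen y hy (by rw [real_inner_comm]; linarith)
    have : ∃ i, 0 < c i := by
      by_contra hcon
      push Not at hcon
      have h0 : ∀ i, c i = 0 := fun i => le_antisymm (hcon i) (hc i)
      exact hy0 (by rw [hs]; simp [h0])
    obtain ⟨i, hi⟩ := this
    refine ⟨i, ?_⟩
    have h1 : ∑ j, c j * ⟪w, ψ j⟫_ℝ = 0 := by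
      have : ⟪w, y⟫_ℝ = 0 := by linarith
      rw [← this]
      conv_rhs => rw [hs]
      rw [inner_sum]
      simp [real_inner_smul_right]
    have h2 := (Finset.sum_eq_zero_iff_of_nonneg (fun j _ => mul_nonneg (hc j) ((hψ j).1 w hw.1))).1 h1 i
      (Finset.mem_univ i)
    exact (mul_eq_zero.1 h2).resolve_left hi.ne'
  have hclF : ∀ i, Cl (Fc C (ψ i)) := fun i => hM.1 _ (hψ i).1 (hli.ne_zero i)
  have hXfin : {w | Good C u w}.Finite := by
    refine (finite_iUnion fun i => face_fin hu (hclF i)).subset ?_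
    intro w hw
    obtain ⟨i, hi⟩ := step2 w hw
    exact mem_iUnion.2 ⟨i, hw, hi⟩
  -- step 4
  have step4 : ∀ x, (∀ i, ⟪x, ψ i⟫_ℝ = 0) → x = ⟪x, u⟫_ℝ • r := by
    intro x hx
    obtain ⟨_, _, φ, hφ, hrφ, hineq⟩ := id hr
    -- l := component of x orthogonal to r
    set l := x - (⟪r, x⟫_ℝ / ⟪r, r⟫_ℝ) • r with hl
    have hrr : ⟪r, r⟫_ℝ ≠ 0 := by simpa using hr0
    have hrl : ⟪r, l⟫_ℝ = 0 := by
      rw [hl, inner_sub_right, real_inner_smul_right]; field_simp; simp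
    obtain ⟨M, hM0, hMl⟩ := finite_M hXfin (fun w => ⟪w, l⟫_ℝ) (fun w => ⟪w, φ⟫_ℝ)
      (fun w hw => hφ w hw.1) (fun w hw h0 => by
        have h1 := hineq w hw.1
        rw [h0, zero_mul, hw.2.1, one_smul] at h1
        have h5 : ‖w - r‖ = 0 := pow_eq_zero_iff (two_ne_zero) |>.1 (le_antisymm h1 (by positivity))
        have : w = r := sub_eq_zero.1 (norm_eq_zero.1 h5)
        rw [this]; exact hrl.ge)
    have hD : l + M • φ ∈ Dl C := density h hu fun w hw => by
      rw [inner_add_right, real_inner_smul_right]; exact hMl w hw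
    obtain ⟨c, hc, hs⟩ := hgen _ hD (by
      rw [real_inner_comm, inner_add_right, real_inner_smul_right, hrl, hrφ]; simp)
    obtain ⟨c', hc', hs'⟩ := hgen φ hφ (by rw [real_inner_comm]; exact hrφ)
    have hxφ : ⟪x, φ⟫_ℝ = 0 := by
      rw [hs', inner_sum]; simp [real_inner_smul_right, hx]
    have hxl : ⟪x, l⟫_ℝ = 0 := by
      have : ⟪x, l + M • φ⟫_ℝ = 0 := by
        rw [hs, inner_sum]; simp [real_inner_smul_right, hx]
      rw [inner_add_right, real_inner_smul_right, hxφ] at this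
      linarith
    have hll : ⟪l, l⟫_ℝ = 0 := by
      conv_lhs => rw [hl]
      rw [inner_sub_left, real_inner_smul_left, ← hl, hxl, hrl]; simp
    have hl0 : l = 0 := by simpa using hll
    have hxr : x = (⟪r, x⟫_ℝ / ⟪r, r⟫_ℝ) • r := sub_eq_zero.1 (hl ▸ hl0)
    have : ⟪x, u⟫_ℝ = ⟪r, x⟫_ℝ / ⟪r, r⟫_ℝ := by
      conv_lhs => rw [hxr]
      rw [real_inner_smul_left, hr.2.1, mul_one]
    rw [this]; exact hxr
  -- step 5
  have step5 : ∀ i, ∃ w, Good C u w ∧ (∀ k, k ≠ i → ⟪w, ψ k⟫_ℝ = 0) ∧ 0 < ⟪w, ψ i⟫_ℝ := by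
    intro i
    by_contra hno
    push Not at hno
    obtain ⟨M, hM0, hMl⟩ := finite_M hXfin (fun w => -⟪w, ψ i⟫_ℝ)
      (fun w => ∑ k ∈ Finset.univ.erase i, ⟪w, ψ k⟫_ℝ)
      (fun w hw => Finset.sum_nonneg fun k _ => (hψ k).1 w hw.1) (fun w hw h0 => by
        have h1 := (Finset.sum_eq_zero_iff_of_nonneg (fun k _ => (hψ k).1 w hw.1)).1 h0
        have := hno w hw fun k hk => h1 k (by simp [hk])
        linarith)
    have hD : -ψ i + M • ∑ k ∈ Finset.univ.erase i, ψ k ∈ Dl C := density h hu fun w hw => by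
      rw [inner_add_right, real_inner_smul_right, inner_neg_right, inner_sum]; exact hMl w hw
    obtain ⟨c, hc, hs⟩ := hgen _ hD (by
      rw [real_inner_comm, inner_add_right, real_inner_smul_right, inner_neg_right, inner_sum]
      simp [hψr])
    have e : ∑ k, ((if k = i then -1 else M) - c k) • ψ k = 0 := by
      simp only [sub_smul, Finset.sum_sub_distrib]
      rw [← hs, sub_eq_zero, ← Finset.add_sum_erase _ _ (Finset.mem_univ i), Finset.smul_sum]
      simp only [if_true, neg_smul, one_smul]
      congr 1
      refine Finset.sum_congr rfl fun k hk => ?_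
      rw [if_neg (Finset.ne_of_mem_erase hk)]
    have := Fintype.linearIndependent_iff.1 hli _ e i
    simp only [if_true] at this
    have := hc i
    linarith
  choose W hWg hW0 hWp using step5
  have hWne : ∀ i, W i ≠ r := fun i hi => by
    have := hWp i; rw [hi, hψr] at this; exact lt_irrefl _ this
  let l0 : E := u - ∑ i, (⟪W i, ψ i⟫_ℝ)⁻¹ • ψ i
  have hl0 : ∀ x, ⟪x, l0⟫_ℝ = ⟪x, u⟫_ℝ - ∑ i, (⟪W i, ψ i⟫_ℝ)⁻¹ * ⟪x, ψ i⟫_ℝ := by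
    intro x; simp only [l0, inner_sub_right, inner_sum, real_inner_smul_right]
  have hdecomp : ∀ x, x = ⟪x, l0⟫_ℝ • r + ∑ i, ((⟪W i, ψ i⟫_ℝ)⁻¹ * ⟪x, ψ i⟫_ℝ) • W i := by
    intro x
    have h1 := step4 (x - ∑ i, ((⟪W i, ψ i⟫_ℝ)⁻¹ * ⟪x, ψ i⟫_ℝ) • W i) (fun k => by
      rw [inner_sub_left, sum_inner, Finset.sum_eq_single k]
      · rw [real_inner_smul_left]
        have := (hWp k).ne'
        field_simp; simp
      · intro i _ hik
        rw [real_inner_smul_left, hW0 i k (Ne.symm hik), mul_zero]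
      · simp)
    have h2 : ⟪x - ∑ i, ((⟪W i, ψ i⟫_ℝ)⁻¹ * ⟪x, ψ i⟫_ℝ) • W i, u⟫_ℝ = ⟪x, l0⟫_ℝ := by
      rw [hl0, inner_sub_left, sum_inner]
      simp [real_inner_smul_left, (hWg _).2.1]
    rw [h2] at h1
    exact sub_eq_iff_eq_add.1 h1
  have hl0D : l0 ∈ Dl C := density h hu fun w hw => by
    by_contra hneg
    push Not at hneg
    obtain ⟨i, hi⟩ := step2 w hw
    obtain ⟨g, hgr, hgp, hg0⟩ := face_coord hu (hclF i) hr (hψr i)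
    have h1 := congrArg g (hdecomp w)
    rw [map_add, map_smul, map_sum, Finset.sum_eq_zero, add_zero, smul_eq_mul] at h1
    · have := hgp w hw.1 hi
      nlinarith
    · intro k _
      by_cases hk : k = i
      · subst hk; simp [hi]
      · rw [map_smul, hg0 (W k) (hWg k) (hW0 k i (Ne.symm hk)) (hWne k), smul_zero]
  let b : Option ι → E := fun o => o.elim r W
  have hbli : LinearIndependent ℝ b := by
    rw [Fintype.linearIndependent_iff]
    intro g hg
    rw [Fintype.sum_option] at hg
    simp only [b, Option.elim] at hg
    have hk : ∀ k, g (some k) = 0 := by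
      intro k
      have h1 := congrArg (fun x => ⟪x, ψ k⟫_ℝ) hg
      simp only [inner_add_left, sum_inner, real_inner_smul_left, hψr, mul_zero, zero_add,
        inner_zero_left] at h1
      rw [Finset.sum_eq_single k] at h1
      · exact (mul_eq_zero.1 h1).resolve_right (hWp k).ne'
      · intro i _ hik
        rw [hW0 i k (Ne.symm hik), mul_zero]
      · simp
    intro o
    cases o with
    | some k => exact hk k
    | none =>
      simp only [hk, zero_smul, Finset.sum_const_zero, add_zero] at hg
      exact (smul_eq_zero.1 hg).resolve_right hr0
  have hbsp : ⊤ ≤ Submodule.span ℝ (range b) := by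
    intro x _
    rw [hdecomp x]
    refine Submodule.add_mem _ (Submodule.smul_mem _ _ (Submodule.subset_span ⟨none, rfl⟩))
      (Submodule.sum_mem _ fun i _ => Submodule.smul_mem _ _ (Submodule.subset_span ⟨some i, rfl⟩))
  let bb := Module.Basis.mk hbli hbsp
  have hbb : ∀ o, bb o = b o := fun o => Module.Basis.mk_apply hbli hbsp o
  have hrepr : ∀ x, bb.equivFun x =
      (fun o : Option ι => o.elim (⟪x, l0⟫_ℝ) (fun i => (⟪W i, ψ i⟫_ℝ)⁻¹ * ⟪x, ψ i⟫_ℝ)) := by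
    intro x
    apply bb.equivFun.symm.injective
    rw [LinearEquiv.symm_apply_apply, Module.Basis.equivFun_symm_apply, Fintype.sum_option]
    simp only [hbb, b]
    exact hdecomp x
  refine ⟨Option ι, inferInstance, bb, ?_⟩
  ext x
  constructor
  · intro hx o
    rw [← Module.Basis.equivFun_apply, hrepr]
    cases o with
    | none => exact hl0D x hx
    | some i => exact mul_nonneg (inv_nonneg.2 (hWp i).le) ((hψ i).1 x hx)
  · intro hx
    rw [← bb.sum_repr x]
    refine h.cn.sum _ _ fun o _ => h.cn.2.2 _ (hx o) _ ?_
    rw [hbb]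
    cases o with
    | none => exact hr.1
    | some i => exact (hWg i).1

end partIID


set_option linter.unusedSectionVars false
section partIIE
open scoped InnerProductSpace

variable {E : Type} [NormedAddCommGroup E] [InnerProductSpace ℝ E] [FiniteDimensional ℝ E]

def Cnc {E : Type} [NormedAddCommGroup E] [InnerProductSpace ℝ E] (C : Set E) (φ α : E) : Prop :=
  ∃ K : ℝ, 0 ≤ K ∧ ∀ v ∈ C, |⟪v, α⟫_ℝ| ≤ K * ⟪v, φ⟫_ℝ

def Sec {E : Type} [NormedAddCommGroup E] [InnerProductSpace ℝ E] (C : Set E) (w1 w2 w : E)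
    (κ : ℝ) : Prop :=
  ∃ δ : ℝ, 0 < δ ∧ ∀ s : ℝ, |s| ≤ δ → w1 + (κ * |s|) • w2 + s • w ∈ C

def Smo {E : Type} [NormedAddCommGroup E] [InnerProductSpace ℝ E] (C : Set E) (w1 w2 w : E) : Prop :=
  ∀ κ : ℝ, 0 < κ → Sec C w1 w2 w κ

structure CD {E : Type} [NormedAddCommGroup E] [InnerProductSpace ℝ E] (C : Set E)
    (w1 w2 w φ1 φ2 α : E) : Prop where
  m1 : w1 ∈ C
  m2 : w2 ∈ C
  d1 : φ1 ∈ Dl C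
  d2 : φ2 ∈ Dl C
  z1 : ⟪w1, φ1⟫_ℝ = 0
  z2 : ⟪w2, φ2⟫_ℝ = 0
  a1 : ⟪w1, α⟫_ℝ = 0
  a2 : ⟪w2, α⟫_ℝ = 0
  p1 : ⟪w, φ1⟫_ℝ = 0
  p2 : ⟪w, φ2⟫_ℝ = 0
  pa : ⟪w, α⟫_ℝ = 1
  quad : ∃ K : ℝ, 0 ≤ K ∧ ∀ v ∈ C, ⟪v, α⟫_ℝ ^ 2 ≤ K * (⟪v, φ1⟫_ℝ * ⟪v, φ2⟫_ℝ)
  int1 : ∃ κ : ℝ, 0 < κ ∧ Sec C w1 w2 w κ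
  int2 : ∃ κ : ℝ, 0 < κ ∧ Sec C w2 w1 w κ
  h1 : Cnc C φ1 α ∨ Smo C w1 w2 w
  h2 : Cnc C φ2 α ∨ Smo C w2 w1 w

lemma CD.swap {C : Set E} {w1 w2 w φ1 φ2 α : E} (h : CD C w1 w2 w φ1 φ2 α) :
    CD C w2 w1 w φ2 φ1 α :=
  ⟨h.m2, h.m1, h.d2, h.d1, h.z2, h.z1, h.a2, h.a1, h.p2, h.p1, h.pa, by
    obtain ⟨K, hK, hq⟩ := h.quad
    exact ⟨K, hK, fun v hv => by rw [mul_comm ⟪v, φ2⟫_ℝ]; exact hq v hv⟩,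
    h.int2, h.int1, h.h2, h.h1⟩

lemma good_phi {C : Set E} (h : PC C) {u w : E} (hu : SPos C u) (hw : Good C u w) :
    ∃ φ ∈ Dl C, ⟪w, φ⟫_ℝ = 0 ∧ (∀ α ∈ FcU (Dl C) w, Cnc C φ α) ∧
    ∀ v ∈ C, ‖v - ⟪v, u⟫_ℝ • w‖ ^ 2 ≤ ⟪v, φ⟫_ℝ * ⟪v, u⟫_ℝ := by
  obtain ⟨_, _, φ0, hφ0, hwφ, hineq⟩ := id hw
  obtain ⟨b, hb⟩ := exists_basis_in (Fc_PC (Dl_PC h) w).span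
  have hb' : ∀ i, (b i : E) ∈ Dl C := hb
  have hsum : ∀ v ∈ C, 0 ≤ ∑ i, ⟪v, (b i : E)⟫_ℝ := fun v hv =>
    Finset.sum_nonneg fun i _ => hb' i v hv
  have e : ∀ v, ⟪v, φ0 + ∑ i, (b i : E)⟫_ℝ = ⟪v, φ0⟫_ℝ + ∑ i, ⟪v, (b i : E)⟫_ℝ := fun v => by
    rw [inner_add_right, inner_sum]
  refine ⟨φ0 + ∑ i, (b i : E), (Dl_cn C).2.1 _ hφ0 _ ((Dl_cn C).sum _ _ fun i _ => hb' i), ?_, ?_, ?_⟩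
  · rw [e, hwφ, zero_add]
    refine Finset.sum_eq_zero fun i _ => ?_
    rw [real_inner_comm]; exact FcU_orth (b i).2
  · intro α hα
    refine ⟨∑ i, |b.repr ⟨α, hα⟩ i|, Finset.sum_nonneg fun _ _ => abs_nonneg _, fun v hv => ?_⟩
    have hα' : α = ∑ i, b.repr ⟨α, hα⟩ i • (b i : E) := by
      have := congrArg (Subtype.val) (b.sum_repr ⟨α, hα⟩)
      refine this.symm.trans ?_
      rw [Submodule.coe_sum]
      rfl
    have h1 : ⟪v, α⟫_ℝ = ∑ i, b.repr ⟨α, hα⟩ i * ⟪v, (b i : E)⟫_ℝ := by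
      conv_lhs => rw [hα']
      rw [inner_sum]; simp only [real_inner_smul_right]
    rw [h1, Finset.sum_mul]
    refine (Finset.abs_sum_le_sum_abs _ _).trans (Finset.sum_le_sum fun i _ => ?_)
    rw [abs_mul, abs_of_nonneg (hb' i v hv)]
    refine mul_le_mul_of_nonneg_left ?_ (abs_nonneg _)
    rw [e]
    have h2 := Finset.single_le_sum (f := fun i => ⟪v, (b i : E)⟫_ℝ) (fun i _ => hb' i v hv) (Finset.mem_univ i)
    have h3 := hφ0 v hv
    linarith
  · intro v hv
    refine (hineq v hv).trans (mul_le_mul_of_nonneg_right ?_ (hu.1 v hv))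
    rw [e]; linarith [hsum v hv]

lemma int_sec {C : Set E} (h : PC C) {w1 w2 : E} (h1 : w1 ∈ C) (h2 : w2 ∈ C)
    (hint : ∀ y ∈ Dl C, y ≠ 0 → 0 < ⟪w1 + w2, y⟫_ℝ) (w : E) :
    ∃ κ : ℝ, 0 < κ ∧ Sec C w1 w2 w κ := by
  obtain ⟨t, ht, ht'⟩ := cone_L (Dl_closed C) (Dl_cn C) 1 (f := fun y => -|⟪w, y⟫_ℝ|)
    (g := fun y => ⟪w1 + w2, y⟫_ℝ) (by fun_prop) (by fun_prop)
    (fun c hc v => by simp [real_inner_smul_right, abs_mul, abs_of_nonneg hc])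
    (fun c hc v => by simp [real_inner_smul_right])
    (fun y hy => hy _ (h.cn.2.1 _ h1 _ h2))
    (fun y hy hy0 h0 => absurd h0 (hint y hy hy0).ne')
  refine ⟨t + 1, by linarith, 1 / (t + 1), by positivity, fun s hs => ?_⟩
  rw [← bipolar h]
  intro y hy
  rw [real_inner_comm]
  by_cases hy0 : y = 0
  · simp [hy0]
  have h3 := ht' y hy hy0
  rw [inner_add_left] at h3
  rw [inner_add_left, inner_add_left, real_inner_smul_left, real_inner_smul_left]
  have h4 := hy w1 h1
  have h5 := hy w2 h2
  have h6 : s * ⟪w, y⟫_ℝ ≥ -(|s| * |⟪w, y⟫_ℝ|) := by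
    rw [← abs_mul]; exact neg_abs_le _
  have h7 : |s| * |⟪w, y⟫_ℝ| ≤ |s| * (t * (⟪w1, y⟫_ℝ + ⟪w2, y⟫_ℝ)) :=
    mul_le_mul_of_nonneg_left (by linarith) (abs_nonneg s)
  rw [le_div_iff₀ (by linarith)] at hs
  have h8 := mul_le_mul_of_nonneg_right hs h4
  have h9 := mul_nonneg (abs_nonneg s) h4
  have h10 := mul_nonneg (abs_nonneg s) h5
  nlinarith

lemma smo_of {C : Set E} (h : PC C) {w1 w2 : E} (h1 : w1 ∈ C) (h2 : w2 ∈ C)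
    (hint : ∀ y ∈ Dl C, y ≠ 0 → 0 < ⟪w1 + w2, y⟫_ℝ) {w : E}
    (hw : ∀ α ∈ FcU (Dl C) w1, ⟪w, α⟫_ℝ = 0) : Smo C w1 w2 w := by
  intro κ hκ
  obtain ⟨t, ht, ht'⟩ := cone_L (Dl_closed C) (Dl_cn C) 1
    (f := fun y => κ * ⟪w2, y⟫_ℝ - |⟪w, y⟫_ℝ|)
    (g := fun y => ⟪w1, y⟫_ℝ) (by fun_prop) (by fun_prop)
    (fun c hc v => by simp [real_inner_smul_right, abs_mul, abs_of_nonneg hc]; ring)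
    (fun c hc v => by simp [real_inner_smul_right])
    (fun y hy => hy _ h1)
    (fun y hy hy0 h0 => by
      have h3 := hint y hy hy0
      rw [inner_add_left, h0, zero_add] at h3
      have h4 := hw y (mem_FcU hy (by rw [real_inner_comm]; exact h0))
      rw [h4, abs_zero, sub_zero]
      positivity)
  refine ⟨1 / (t + 1), by positivity, fun s hs => ?_⟩
  rw [← bipolar h]
  intro y hy
  rw [real_inner_comm]
  by_cases hy0 : y = 0
  · simp [hy0]
  have h3 := ht' y hy hy0
  rw [inner_add_left, inner_add_left, real_inner_smul_left, real_inner_smul_left]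
  have h4 := hy w1 h1
  have h6 : s * ⟪w, y⟫_ℝ ≥ -(|s| * |⟪w, y⟫_ℝ|) := by
    rw [← abs_mul]; exact neg_abs_le _
  have h7 := mul_nonneg (abs_nonneg s) h3.le
  rw [le_div_iff₀ (by linarith)] at hs
  have h8 := mul_le_mul_of_nonneg_right hs h4
  have h9 := mul_nonneg (abs_nonneg s) h4
  nlinarith

/-- common hypotheses for constructing chord data -/
structure Pre {E : Type} [NormedAddCommGroup E] [InnerProductSpace ℝ E] (C : Set E)
    (u w1 w2 φ1 φ2 : E) : Prop where
  pc : PC C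
  hu : SPos C u
  m1 : w1 ∈ C
  m2 : w2 ∈ C
  d1 : φ1 ∈ Dl C
  d2 : φ2 ∈ Dl C
  z1 : ⟪w1, φ1⟫_ℝ = 0
  z2 : ⟪w2, φ2⟫_ℝ = 0
  q1 : 0 < ⟪w2, φ1⟫_ℝ
  q2 : 0 < ⟪w1, φ2⟫_ℝ
  c1 : ∀ α ∈ FcU (Dl C) w1, Cnc C φ1 α
  c2 : ∀ α ∈ FcU (Dl C) w2, Cnc C φ2 α
  e1 : ∀ v ∈ C, ‖v - ⟪v, u⟫_ℝ • w1‖ ^ 2 ≤ ⟪v, φ1⟫_ℝ * ⟪v, u⟫_ℝ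
  e2 : ∀ v ∈ C, ‖v - ⟪v, u⟫_ℝ • w2‖ ^ 2 ≤ ⟪v, φ2⟫_ℝ * ⟪v, u⟫_ℝ
  int : ∀ y ∈ Dl C, y ≠ 0 → 0 < ⟪w1 + w2, y⟫_ℝ

lemma Pre.swap {C : Set E} {u w1 w2 φ1 φ2 : E} (h : Pre C u w1 w2 φ1 φ2) :
    Pre C u w2 w1 φ2 φ1 :=
  ⟨h.pc, h.hu, h.m2, h.m1, h.d2, h.d1, h.z2, h.z1, h.q2, h.q1, h.c2, h.c1, h.e2, h.e1, by
    rw [add_comm]; exact h.int⟩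

lemma Pre.quad {C : Set E} {u w1 w2 φ1 φ2 : E} (h : Pre C u w1 w2 φ1 φ2) {α : E}
    (a1 : ⟪w1, α⟫_ℝ = 0) (a2 : ⟪w2, α⟫_ℝ = 0) :
    ∃ K : ℝ, 0 ≤ K ∧ ∀ v ∈ C, ⟪v, α⟫_ℝ ^ 2 ≤ K * (⟪v, φ1⟫_ℝ * ⟪v, φ2⟫_ℝ) := by
  obtain ⟨t, ht, ht'⟩ := cone_L h.pc.closed h.pc.cn 1 (f := fun v => -⟪v, u⟫_ℝ)
    (g := fun v => ⟪v, φ1⟫_ℝ + ⟪v, φ2⟫_ℝ) (by fun_prop) (by fun_prop)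
    (fun c hc v => by simp [real_inner_smul_left])
    (fun c hc v => by simp [real_inner_smul_left]; ring)
    (fun v hv => add_nonneg (h.d1 v hv) (h.d2 v hv))
    (fun v hv hv0 h0 => by
      exfalso
      have k1 := h.d1 v hv
      have k2 := h.d2 v hv
      have k3 := h.e1 v hv
      rw [show ⟪v, φ1⟫_ℝ = 0 by linarith, zero_mul] at k3
      have h5 : ‖v - ⟪v, u⟫_ℝ • w1‖ = 0 :=
        pow_eq_zero_iff (two_ne_zero) |>.1 (le_antisymm k3 (by positivity))
      have k4 := sub_eq_zero.1 (norm_eq_zero.1 h5)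
      have k5 : ⟪v, φ2⟫_ℝ = 0 := by linarith
      rw [k4, real_inner_smul_left] at k5
      have := h.hu.2 v hv hv0
      exact (mul_pos this h.q2).ne' k5)
  have ht'' : ∀ v ∈ C, ⟪v, u⟫_ℝ ≤ t * (⟪v, φ1⟫_ℝ + ⟪v, φ2⟫_ℝ) := by
    intro v hv
    by_cases hv0 : v = 0
    · simp [hv0]
    · have := ht' v hv hv0; linarith
  have key : ∀ w φ, ⟪w, α⟫_ℝ = 0 → (∀ v ∈ C, ‖v - ⟪v, u⟫_ℝ • w‖ ^ 2 ≤ ⟪v, φ⟫_ℝ * ⟪v, u⟫_ℝ) →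
      ∀ v ∈ C, ⟪v, α⟫_ℝ ^ 2 ≤ ‖α‖ ^ 2 * (⟪v, φ⟫_ℝ * ⟪v, u⟫_ℝ) := by
    intro w φ hwα he v hv
    have k1 : ⟪v, α⟫_ℝ = ⟪v - ⟪v, u⟫_ℝ • w, α⟫_ℝ := by
      rw [inner_sub_left, real_inner_smul_left, hwα]; ring
    have k2 : ⟪v, α⟫_ℝ ^ 2 ≤ (‖v - ⟪v, u⟫_ℝ • w‖ * ‖α‖) ^ 2 := by
      rw [k1, ← sq_abs]
      exact pow_le_pow_left₀ (abs_nonneg _) (abs_real_inner_le_norm _ _) 2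
    rw [mul_pow] at k2
    have k3 := mul_le_mul_of_nonneg_left (he v hv) (sq_nonneg ‖α‖)
    linarith
  refine ⟨2 * ‖α‖ ^ 2 * t, by positivity, fun v hv => ?_⟩
  have b1 := key w1 φ1 a1 h.e1 v hv
  have b2 := key w2 φ2 a2 h.e2 v hv
  have k1 := h.d1 v hv
  have k2 := h.d2 v hv
  have k3 := ht'' v hv
  set p := ⟪v, φ1⟫_ℝ
  set q := ⟪v, φ2⟫_ℝ
  have hα := sq_nonneg ‖α‖
  rcases le_total p q with hpq | hpq
  · calc _ ≤ _ := b1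
      _ ≤ ‖α‖ ^ 2 * (p * (t * (2 * q))) := by
        gcongr
        refine k3.trans (mul_le_mul_of_nonneg_left (by linarith) ht)
      _ = _ := by ring
  · calc _ ≤ _ := b2
      _ ≤ ‖α‖ ^ 2 * (q * (t * (2 * p))) := by
        gcongr
        refine k3.trans (mul_le_mul_of_nonneg_left (by linarith) ht)
      _ = _ := by ring

lemma Pre.mk_cd {C : Set E} {u w1 w2 φ1 φ2 : E} (h : Pre C u w1 w2 φ1 φ2) {w α : E}
    (a1 : ⟪w1, α⟫_ℝ = 0) (a2 : ⟪w2, α⟫_ℝ = 0) (p1 : ⟪w, φ1⟫_ℝ = 0) (p2 : ⟪w, φ2⟫_ℝ = 0)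
    (pa : ⟪w, α⟫_ℝ = 1)
    (h1 : α ∈ FcU (Dl C) w1 ∨ ∀ β ∈ FcU (Dl C) w1, ⟪w, β⟫_ℝ = 0)
    (h2 : α ∈ FcU (Dl C) w2 ∨ ∀ β ∈ FcU (Dl C) w2, ⟪w, β⟫_ℝ = 0) :
    CD C w1 w2 w φ1 φ2 α :=
  ⟨h.m1, h.m2, h.d1, h.d2, h.z1, h.z2, a1, a2, p1, p2, pa, h.quad a1 a2,
    int_sec h.pc h.m1 h.m2 h.int w, int_sec h.pc h.m2 h.m1 h.swap.int w,
    h1.imp (h.c1 α) (smo_of h.pc h.m1 h.m2 h.int),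
    h2.imp (h.c2 α) (smo_of h.pc h.m2 h.m1 h.swap.int)⟩

lemma Pre.f1 {C : Set E} {u w1 w2 φ1 φ2 : E} (h : Pre C u w1 w2 φ1 φ2) :
    φ1 ∈ FcU (Dl C) w1 := mem_FcU h.d1 (by rw [real_inner_comm]; exact h.z1)

lemma Pre.case2 {C : Set E} {u w1 w2 φ1 φ2 : E} (h : Pre C u w1 w2 φ1 φ2)
    (hdis : ∀ α, α ∈ FcU (Dl C) w1 → α ∈ FcU (Dl C) w2 → α = 0)
    {α : E} (hα : α ∈ FcU (Dl C) w1) (hα2 : ⟪w2, α⟫_ℝ = 0) (hα0 : α ≠ 0) :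
    ∃ w, CD C w1 w2 w φ1 φ2 α := by
  let S : Submodule ℝ E := FcU (Dl C) w2 ⊔ Submodule.span ℝ {φ1}
  have hS : α ∉ S := by
    intro hm
    obtain ⟨β, hβ, γ, hγ, hsum⟩ := Submodule.mem_sup.1 hm
    obtain ⟨c, rfl⟩ := Submodule.mem_span_singleton.1 hγ
    have hβ1 : β ∈ FcU (Dl C) w1 := by
      have : β = α - c • φ1 := by rw [← hsum]; abel
      rw [this]
      exact Submodule.sub_mem _ hα (Submodule.smul_mem _ _ h.f1)
    have hβ0 := hdis β hβ1 hβ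
    rw [hβ0, zero_add] at hsum
    rw [← hsum, real_inner_smul_right] at hα2
    have hc := (mul_eq_zero.1 hα2).resolve_right h.q1.ne'
    rw [hc, zero_smul] at hsum
    exact hα0 hsum.symm
  set w0 := α - (S.starProjection α) with hw0
  have hw0S : ∀ s ∈ S, ⟪w0, s⟫_ℝ = 0 := fun s hs => by
    have := Submodule.sub_starProjection_mem_orthogonal (K := S) α
    rw [real_inner_comm]
    exact (Submodule.mem_orthogonal S _).1 this s hs
  have hp : S.starProjection α ∈ S := Submodule.starProjection_apply_mem S α
  have hw00 : w0 ≠ 0 := fun h0 => hS (by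
    have h1 : α = S.starProjection α := sub_eq_zero.1 h0
    rw [h1]; exact hp)
  have hwα : ⟪w0, α⟫_ℝ = ⟪w0, w0⟫_ℝ := by
    conv_rhs => rw [hw0]
    rw [← hw0, inner_sub_right, hw0S _ hp, sub_zero]
  have hww : ⟪w0, w0⟫_ℝ ≠ 0 := by simpa using hw00
  have hf2 : φ2 ∈ FcU (Dl C) w2 := h.swap.f1
  refine ⟨(⟪w0, w0⟫_ℝ)⁻¹ • w0, h.mk_cd ?_ hα2 ?_ ?_ ?_ (Or.inl hα) (Or.inr fun β hβ => ?_)⟩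
  · rw [real_inner_comm]; exact FcU_orth hα
  · rw [real_inner_smul_left, hw0S _ (Submodule.mem_sup_right (Submodule.mem_span_singleton_self _)),
      mul_zero]
  · rw [real_inner_smul_left, hw0S _ (Submodule.mem_sup_left hf2), mul_zero]
  · rw [real_inner_smul_left, hwα]; field_simp
  · rw [real_inner_smul_left, hw0S _ (Submodule.mem_sup_left hβ), mul_zero]

lemma Pre.cd {C : Set E} {u w1 w2 φ1 φ2 : E} (h : Pre C u w1 w2 φ1 φ2) (hn : ¬ Cl C) :
    ∃ w α, CD C w1 w2 w φ1 φ2 α := by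
  have q1 := h.q1.ne'
  have q2 := h.q2.ne'
  by_cases hdis : ∀ α, α ∈ FcU (Dl C) w1 → α ∈ FcU (Dl C) w2 → α = 0
  swap
  · push Not at hdis
    obtain ⟨α, hα1, hα2, hα0⟩ := hdis
    have hαα : ⟪α, α⟫_ℝ ≠ 0 := by simpa using hα0
    have a1 : ⟪w1, α⟫_ℝ = 0 := by rw [real_inner_comm]; exact FcU_orth hα1
    have a2 : ⟪w2, α⟫_ℝ = 0 := by rw [real_inner_comm]; exact FcU_orth hα2
    set w0 := (⟪α, α⟫_ℝ)⁻¹ • α with hw0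
    refine ⟨w0 - (⟪w0, φ2⟫_ℝ / ⟪w1, φ2⟫_ℝ) • w1 - (⟪w0, φ1⟫_ℝ / ⟪w2, φ1⟫_ℝ) • w2, α,
      h.mk_cd a1 a2 ?_ ?_ ?_ (Or.inl hα1) (Or.inl hα2)⟩
    · simp only [inner_sub_left, real_inner_smul_left, h.z1]; field_simp; ring
    · simp only [inner_sub_left, real_inner_smul_left, h.z2]; field_simp; ring
    · simp only [inner_sub_left, real_inner_smul_left, a1, a2, hw0]; field_simp; ring
  by_cases c2 : ∃ α, α ∈ FcU (Dl C) w1 ∧ ⟪w2, α⟫_ℝ = 0 ∧ α ≠ 0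
  · obtain ⟨α, hα, hα2, hα0⟩ := c2
    obtain ⟨w, hw⟩ := h.case2 hdis hα hα2 hα0
    exact ⟨w, α, hw⟩
  by_cases c2' : ∃ α, α ∈ FcU (Dl C) w2 ∧ ⟪w1, α⟫_ℝ = 0 ∧ α ≠ 0
  · obtain ⟨α, hα, hα2, hα0⟩ := c2'
    obtain ⟨w, hw⟩ := h.swap.case2 (fun α k1 k2 => hdis α k2 k1) hα hα2 hα0
    exact ⟨w, α, hw.swap⟩
  push Not at c2 c2'
  -- case 3
  have hex : ∃ w, w ≠ 0 ∧ ⟪w, φ1⟫_ℝ = 0 ∧ ⟪w, φ2⟫_ℝ = 0 := by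
    by_contra hno
    push Not at hno
    apply hn
    have hdec : ∀ x, x = (⟪x, φ2⟫_ℝ / ⟪w1, φ2⟫_ℝ) • w1 + (⟪x, φ1⟫_ℝ / ⟪w2, φ1⟫_ℝ) • w2 := by
      intro x
      by_contra hx
      refine hno (x - ((⟪x, φ2⟫_ℝ / ⟪w1, φ2⟫_ℝ) • w1 + (⟪x, φ1⟫_ℝ / ⟪w2, φ1⟫_ℝ) • w2))
        (sub_ne_zero.2 hx) ?_ ?_
      · simp only [inner_sub_left, inner_add_left, real_inner_smul_left, h.z1]; field_simp; ring
      · simp only [inner_sub_left, inner_add_left, real_inner_smul_left, h.z2]; field_simp; ring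
    let b : Fin 2 → E := ![w1, w2]
    have hbli : LinearIndependent ℝ b := by
      rw [Fintype.linearIndependent_iff]
      intro g hg
      simp only [Fin.sum_univ_two, b, Matrix.cons_val_zero, Matrix.cons_val_one] at hg
      have k1 := congrArg (fun x => ⟪x, φ1⟫_ℝ) hg
      have k2 := congrArg (fun x => ⟪x, φ2⟫_ℝ) hg
      simp only [inner_add_left, real_inner_smul_left, h.z1, h.z2, mul_zero, zero_add, add_zero,
        inner_zero_left, mul_eq_zero, q1, q2, or_false] at k1 k2
      intro i; fin_cases i
      · exact k2
      · exact k1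
    have hbsp : ⊤ ≤ Submodule.span ℝ (range b) := by
      intro x _
      rw [hdec x]
      exact Submodule.add_mem _ (Submodule.smul_mem _ _ (Submodule.subset_span ⟨0, rfl⟩))
        (Submodule.smul_mem _ _ (Submodule.subset_span ⟨1, rfl⟩))
    let bb := Module.Basis.mk hbli hbsp
    have hbb : ∀ o, bb o = b o := fun o => Module.Basis.mk_apply hbli hbsp o
    have hrepr : ∀ x, bb.equivFun x = ![⟪x, φ2⟫_ℝ / ⟪w1, φ2⟫_ℝ, ⟪x, φ1⟫_ℝ / ⟪w2, φ1⟫_ℝ] := by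
      intro x
      apply bb.equivFun.symm.injective
      rw [LinearEquiv.symm_apply_apply, Module.Basis.equivFun_symm_apply, Fin.sum_univ_two]
      simp only [hbb, b]
      exact hdec x
    refine ⟨Fin 2, inferInstance, bb, ?_⟩
    ext x
    constructor
    · intro hx o
      rw [← Module.Basis.equivFun_apply, hrepr]
      fin_cases o
      · exact div_nonneg (h.d2 x hx) h.q2.le
      · exact div_nonneg (h.d1 x hx) h.q1.le
    · intro hx
      rw [← bb.sum_repr x]
      refine h.pc.cn.sum _ _ fun o _ => h.pc.cn.2.2 _ (hx o) _ ?_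
      rw [hbb]
      fin_cases o
      · exact h.m1
      · exact h.m2
  obtain ⟨w, hw0, p1, p2⟩ := hex
  have hww : ⟪w, w⟫_ℝ ≠ 0 := by simpa using hw0
  set α0 := (⟪w, w⟫_ℝ)⁻¹ • w with hα0
  refine ⟨w, α0 - (⟪w2, α0⟫_ℝ / ⟪w2, φ1⟫_ℝ) • φ1 - (⟪w1, α0⟫_ℝ / ⟪w1, φ2⟫_ℝ) • φ2,
    h.mk_cd ?_ ?_ p1 p2 ?_ (Or.inr fun β hβ => ?_) (Or.inr fun β hβ => ?_)⟩
  · simp only [inner_sub_right, real_inner_smul_right, h.z1]; field_simp; ring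
  · simp only [inner_sub_right, real_inner_smul_right, h.z2]; field_simp; ring
  · simp only [inner_sub_right, real_inner_smul_right, p1, p2, hα0]; field_simp; ring
  · have k := c2 (β - (⟪w2, β⟫_ℝ / ⟪w2, φ1⟫_ℝ) • φ1)
      (Submodule.sub_mem _ hβ (Submodule.smul_mem _ _ h.f1))
      (by simp only [inner_sub_right, real_inner_smul_right]; field_simp; ring)
    rw [sub_eq_zero.1 k, real_inner_smul_right, p1, mul_zero]
  · have k := c2' (β - (⟪w1, β⟫_ℝ / ⟪w1, φ2⟫_ℝ) • φ2)
      (Submodule.sub_mem _ hβ (Submodule.smul_mem _ _ h.swap.f1))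
      (by simp only [inner_sub_right, real_inner_smul_right]; field_simp; ring)
    rw [sub_eq_zero.1 k, real_inner_smul_right, p2, mul_zero]

lemma exists_CD {C : Set E} (h : PC C) (hM : Mnl C) (hn : ¬ Cl C) :
    ∃ w1 w2 w φ1 φ2 α, CD C w1 w2 w φ1 φ2 α := by
  obtain ⟨u, hu1, hu2⟩ := exists_u h
  have hu : SPos C u := ⟨hu1, hu2⟩
  obtain ⟨w1, w2, hw1, hw2, hint⟩ := chord h hM hn hu
  obtain ⟨φ1, d1, z1, c1, e1⟩ := good_phi h hu hw1
  obtain ⟨φ2, d2, z2, c2, e2⟩ := good_phi h hu hw2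
  have hne : w1 ≠ w2 := by
    rintro rfl
    apply hn
    have hφ : φ1 = 0 := by
      by_contra h0
      have := hint φ1 d1 h0
      rw [inner_add_left, z1] at this
      simp at this
    have hC : ∀ v ∈ C, v = ⟪v, u⟫_ℝ • w1 := by
      intro v hv
      have := e1 v hv
      rw [hφ, inner_zero_right, zero_mul] at this
      have h5 : ‖v - ⟪v, u⟫_ℝ • w1‖ = 0 :=
        pow_eq_zero_iff (two_ne_zero) |>.1 (le_antisymm this (by positivity))
      exact sub_eq_zero.1 (norm_eq_zero.1 h5)
    have hdec : ∀ x, x = ⟪x, u⟫_ℝ • w1 := by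
      intro x
      have hx : x ∈ Submodule.span ℝ C := by rw [h.span]; trivial
      induction hx using Submodule.span_induction with
      | mem x hx => exact hC x hx
      | zero => simp
      | add a b _ _ k1 k2 => rw [inner_add_left, add_smul, ← k1, ← k2]
      | smul c a _ k1 => rw [real_inner_smul_left, mul_smul, ← k1]
    let b : Unit → E := fun _ => w1
    have hbli : LinearIndependent ℝ b := by
      rw [Fintype.linearIndependent_iff]
      intro g hg i
      simp only [b, Finset.univ_unique, Finset.sum_singleton] at hg
      exact (smul_eq_zero.1 hg).resolve_right (good_ne hw1)
    have hbsp : ⊤ ≤ Submodule.span ℝ (range b) := by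
      intro x _
      rw [hdec x]
      exact Submodule.smul_mem _ _ (Submodule.subset_span ⟨(), rfl⟩)
    let bb := Module.Basis.mk hbli hbsp
    have hbb : ∀ o, bb o = b o := fun o => Module.Basis.mk_apply hbli hbsp o
    have hrepr : ∀ x, bb.equivFun x = fun _ => ⟪x, u⟫_ℝ := by
      intro x
      apply bb.equivFun.symm.injective
      rw [LinearEquiv.symm_apply_apply, Module.Basis.equivFun_symm_apply]
      simp only [hbb, b, Finset.univ_unique, Finset.sum_singleton]
      exact hdec x
    refine ⟨Unit, inferInstance, bb, ?_⟩
    ext x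
    constructor
    · intro hx o
      rw [← Module.Basis.equivFun_apply, hrepr]
      exact hu1 x hx
    · intro hx
      rw [← bb.sum_repr x]
      refine h.cn.sum _ _ fun o _ => h.cn.2.2 _ (hx o) _ ?_
      rw [hbb]
      exact hw1.1
  have q1 : 0 < ⟪w2, φ1⟫_ℝ := by
    have := e1 w2 hw2.1
    rw [hw2.2.1, one_smul, mul_one] at this
    have h2 : 0 < ‖w2 - w1‖ := norm_pos_iff.2 (sub_ne_zero.2 hne.symm)
    have : 0 < ‖w2 - w1‖ ^ 2 := by positivity
    linarith
  have q2 : 0 < ⟪w1, φ2⟫_ℝ := by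
    have := e2 w1 hw1.1
    rw [hw1.2.1, one_smul, mul_one] at this
    have h2 : 0 < ‖w1 - w2‖ := norm_pos_iff.2 (sub_ne_zero.2 hne)
    have : 0 < ‖w1 - w2‖ ^ 2 := by positivity
    linarith
  obtain ⟨w, α, hcd⟩ := Pre.cd ⟨h, hu, hw1.1, hw2.1, d1, d2, z1, z2, q1, q2, c1, c2, e1, e2, hint⟩ hn
  exact ⟨w1, w2, w, φ1, φ2, α, hcd⟩

end partIIE


set_option linter.unusedSectionVars false
section partIIF
open scoped InnerProductSpace

variable {E₁ E₂ : Type} [NormedAddCommGroup E₁] [InnerProductSpace ℝ E₁] [FiniteDimensional ℝ E₁]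
  [NormedAddCommGroup E₂] [InnerProductSpace ℝ E₂] [FiniteDimensional ℝ E₂]

def Pm (φ1 φ2 α : E₁) (x1 x2 x : E₂) (q ε : ℝ) : E₁ →ₗ[ℝ] E₂ :=
  (innerₗ E₁ (φ1 + (q * ε ^ 2) • (φ1 + φ2))).smulRight x1 +
  (innerₗ E₁ (φ2 + (q * ε ^ 2) • (φ1 + φ2))).smulRight x2 +
  (innerₗ E₁ (ε • α)).smulRight x

lemma Pm_apply (φ1 φ2 α : E₁) (x1 x2 x : E₂) (q ε : ℝ) (v : E₁) :
    Pm φ1 φ2 α x1 x2 x q ε v =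
    (⟪v, φ1⟫_ℝ + q * ε ^ 2 * (⟪v, φ1⟫_ℝ + ⟪v, φ2⟫_ℝ)) • x1 +
    (⟪v, φ2⟫_ℝ + q * ε ^ 2 * (⟪v, φ1⟫_ℝ + ⟪v, φ2⟫_ℝ)) • x2 + (ε * ⟪v, α⟫_ℝ) • x := by
  simp only [Pm, LinearMap.add_apply, LinearMap.smulRight_apply, innerₗ_apply_apply,
    real_inner_comm v, inner_add_right, real_inner_smul_right]

lemma Pm_swap (φ1 φ2 α : E₁) (x1 x2 x : E₂) (q ε : ℝ) :
    Pm φ1 φ2 α x1 x2 x q ε = Pm φ2 φ1 α x2 x1 x q ε := by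
  ext v
  rw [Pm_apply, Pm_apply, add_comm ⟪v, φ1⟫_ℝ ⟪v, φ2⟫_ℝ]
  abel

lemma sec_use {C : Set E₂} (hC : IsCn C) {x1 x2 x : E₂} (hx1 : x1 ∈ C) {κ δ : ℝ}
    (hs : ∀ s : ℝ, |s| ≤ δ → x2 + (κ * |s|) • x1 + s • x ∈ C) {a b s : ℝ} (ha : 0 ≤ a)
    (hb : κ * |s| ≤ b) (hsa : |s| ≤ δ * a) : b • x1 + a • x2 + s • x ∈ C := by
  rcases ha.eq_or_lt with rfl | ha
  · have : s = 0 := by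
      rw [mul_zero] at hsa
      exact abs_nonpos_iff.1 hsa
    subst this
    rw [abs_zero, mul_zero] at hb
    simpa using hC.2.2 b hb x1 hx1
  · have h1 := hs (s / a) (by rw [abs_div, abs_of_pos ha, div_le_iff₀ ha]; exact hsa)
    have h2 := hC.2.1 _ (hC.2.2 a ha.le _ h1) _ (hC.2.2 (b - κ * |s|) (by linarith) _ hx1)
    convert h2 using 1
    rw [abs_div, abs_of_pos ha]
    simp only [smul_add, smul_smul]
    rw [show a * (κ * (|s| / a)) = κ * |s| by field_simp, show a * (s / a) = s by field_simp,
      sub_smul]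
    abel

lemma end_pos {C₁ : Set E₁} {C₂ : Set E₂} (hC : IsCn C₂) {φ1 φ2 α : E₁} {x1 x2 x : E₂}
    (hx1 : x1 ∈ C₂) (d1 : φ1 ∈ Dl C₁) (d2 : φ2 ∈ Dl C₁) {K q κ : ℝ} (hK0 : 0 ≤ K) (hq : 0 ≤ q)
    (hK : ∀ v ∈ C₁, ⟪v, α⟫_ℝ ^ 2 ≤ K * (⟪v, φ1⟫_ℝ * ⟪v, φ2⟫_ℝ))
    (hs : Sec C₂ x2 x1 x κ)
    (h : ∃ ε1 > 0, ∀ ε : ℝ, |ε| ≤ ε1 → ∀ v ∈ C₁, κ * |ε * ⟪v, α⟫_ℝ| ≤ ⟪v, φ1⟫_ℝ + q * ε ^ 2 * ⟪v, φ2⟫_ℝ) :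
    ∃ ε0 > 0, ∀ ε : ℝ, |ε| ≤ ε0 → ∀ v ∈ C₁, ⟪v, φ1⟫_ℝ ≤ ⟪v, φ2⟫_ℝ → Pm φ1 φ2 α x1 x2 x q ε v ∈ C₂ := by
  obtain ⟨ε1, hε1, h⟩ := h
  obtain ⟨δ, hδ, hs⟩ := hs
  refine ⟨min ε1 (δ / (K + 1)), by positivity, fun ε hε v hv hle => ?_⟩
  rw [Pm_apply]
  have p1 := d1 v hv
  have p2 := d2 v hv
  have hη : 0 ≤ q * ε ^ 2 := by positivity
  have k0 := mul_nonneg hη p1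
  have k1 := mul_nonneg hη p2
  refine sec_use hC hx1 hs (by nlinarith) ?_ ?_
  · have := h ε (hε.trans (min_le_left _ _)) v hv
    linarith
  · have hα : |⟪v, α⟫_ℝ| ≤ (K + 1) * ⟪v, φ2⟫_ℝ := by
      apply abs_le_of_sq_le_sq _ (by positivity)
      refine (hK v hv).trans ?_
      have : ⟪v, φ1⟫_ℝ * ⟪v, φ2⟫_ℝ ≤ ⟪v, φ2⟫_ℝ ^ 2 := by nlinarith
      have h3 : K ≤ (K + 1) ^ 2 := by nlinarith
      calc _ ≤ K * ⟪v, φ2⟫_ℝ ^ 2 := mul_le_mul_of_nonneg_left this hK0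
        _ ≤ (K + 1) ^ 2 * ⟪v, φ2⟫_ℝ ^ 2 := mul_le_mul_of_nonneg_right h3 (sq_nonneg _)
        _ = _ := by ring
    have h2 := hε.trans (min_le_right _ _)
    rw [le_div_iff₀ (by positivity)] at h2
    rw [abs_mul]
    calc |ε| * |⟪v, α⟫_ℝ| ≤ |ε| * ((K + 1) * ⟪v, φ2⟫_ℝ) := mul_le_mul_of_nonneg_left hα (abs_nonneg _)
      _ = |ε| * (K + 1) * ⟪v, φ2⟫_ℝ := by ring
      _ ≤ δ * ⟪v, φ2⟫_ℝ := mul_le_mul_of_nonneg_right h2 p2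
      _ ≤ _ := mul_le_mul_of_nonneg_left (by linarith) hδ.le

lemma amgm {C₁ : Set E₁} {φ1 φ2 α : E₁} (d1 : φ1 ∈ Dl C₁) (d2 : φ2 ∈ Dl C₁) {K q κ : ℝ}
    (hq : 0 ≤ q) (hqK : κ ^ 2 * K ≤ 4 * q)
    (hK : ∀ v ∈ C₁, ⟪v, α⟫_ℝ ^ 2 ≤ K * (⟪v, φ1⟫_ℝ * ⟪v, φ2⟫_ℝ)) (ε : ℝ) :
    ∀ v ∈ C₁, κ * |ε * ⟪v, α⟫_ℝ| ≤ ⟪v, φ1⟫_ℝ + q * ε ^ 2 * ⟪v, φ2⟫_ℝ := by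
  intro v hv
  have p1 := d1 v hv
  have p2 := d2 v hv
  have h0 : abs (κ * abs (ε * ⟪v, α⟫_ℝ)) ≤ ⟪v, φ1⟫_ℝ + q * ε ^ 2 * ⟪v, φ2⟫_ℝ := by
    apply abs_le_of_sq_le_sq _ (by positivity)
    rw [mul_pow, sq_abs, mul_pow]
    have p12 := mul_nonneg p1 p2
    calc κ ^ 2 * (ε ^ 2 * ⟪v, α⟫_ℝ ^ 2) ≤ κ ^ 2 * (ε ^ 2 * (K * (⟪v, φ1⟫_ℝ * ⟪v, φ2⟫_ℝ))) := by
          gcongr; exact hK v hv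
      _ = κ ^ 2 * K * (ε ^ 2 * (⟪v, φ1⟫_ℝ * ⟪v, φ2⟫_ℝ)) := by ring
      _ ≤ 4 * q * (ε ^ 2 * (⟪v, φ1⟫_ℝ * ⟪v, φ2⟫_ℝ)) := by gcongr
      _ ≤ _ := by nlinarith [sq_nonneg (⟪v, φ1⟫_ℝ - q * ε ^ 2 * ⟪v, φ2⟫_ℝ)]
  exact (le_abs_self _).trans h0

/-- half positivity with all large `q` -/
lemma end_big {C₁ : Set E₁} {C₂ : Set E₂} (hC : IsCn C₂) {w1 w2 w φ1 φ2 α : E₁}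
    {x1 x2 x ψ1 ψ2 β : E₂} (h₁ : CD C₁ w1 w2 w φ1 φ2 α) (h₂ : CD C₂ x1 x2 x ψ1 ψ2 β) :
    ∃ q0 ≥ 0, ∀ q ≥ q0, ∃ ε0 > 0, ∀ ε : ℝ, |ε| ≤ ε0 → ∀ v ∈ C₁, ⟪v, φ1⟫_ℝ ≤ ⟪v, φ2⟫_ℝ →
      Pm φ1 φ2 α x1 x2 x q ε v ∈ C₂ := by
  obtain ⟨K, hK0, hK⟩ := h₁.quad
  obtain ⟨κ, hκ, hs⟩ := h₂.int2
  refine ⟨κ ^ 2 * K, by positivity, fun q hq => ?_⟩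
  have hq0 : 0 ≤ q := le_trans (by positivity) hq
  exact end_pos hC h₂.m1 h₁.d1 h₁.d2 hK0 hq0 hK hs
    ⟨1, one_pos, fun ε _ => amgm h₁.d1 h₁.d2 hq0 (by linarith) hK ε⟩

lemma end_small {C₁ : Set E₁} {C₂ : Set E₂} (hC : IsCn C₂) {w1 w2 w φ1 φ2 α : E₁}
    {x1 x2 x ψ1 ψ2 β : E₂} (h₁ : CD C₁ w1 w2 w φ1 φ2 α) (h₂ : CD C₂ x1 x2 x ψ1 ψ2 β)
    (hc : Cnc C₁ φ1 α ∨ Smo C₂ x2 x1 x) {q : ℝ} (hq : 0 < q) :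
    ∃ ε0 > 0, ∀ ε : ℝ, |ε| ≤ ε0 → ∀ v ∈ C₁, ⟪v, φ1⟫_ℝ ≤ ⟪v, φ2⟫_ℝ →
      Pm φ1 φ2 α x1 x2 x q ε v ∈ C₂ := by
  obtain ⟨K, hK0, hK⟩ := h₁.quad
  rcases hc with ⟨K', hK'0, hK'⟩ | hsm
  · obtain ⟨κ, hκ, hs⟩ := h₂.int2
    refine end_pos hC h₂.m1 h₁.d1 h₁.d2 hK0 hq.le hK hs ⟨1 / (κ * (K' + 1)), by positivity, ?_⟩
    intro ε hε v hv
    have p1 := h₁.d1 v hv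
    have p2 := h₁.d2 v hv
    rw [le_div_iff₀ (by positivity)] at hε
    have k1 : |⟪v, α⟫_ℝ| ≤ (K' + 1) * ⟪v, φ1⟫_ℝ := (hK' v hv).trans (by linarith)
    have k2 : κ * |ε * ⟪v, α⟫_ℝ| ≤ ⟪v, φ1⟫_ℝ := by
      rw [abs_mul]
      calc κ * (|ε| * |⟪v, α⟫_ℝ|) ≤ κ * (|ε| * ((K' + 1) * ⟪v, φ1⟫_ℝ)) := by gcongr
        _ = (|ε| * (κ * (K' + 1))) * ⟪v, φ1⟫_ℝ := by ring
        _ ≤ 1 * ⟪v, φ1⟫_ℝ := mul_le_mul_of_nonneg_right hε p1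
        _ = _ := one_mul _
    have : 0 ≤ q * ε ^ 2 * ⟪v, φ2⟫_ℝ := by positivity
    linarith
  · have hκ : 0 < √(q / (K + 1)) := Real.sqrt_pos.2 (by positivity)
    refine end_pos hC h₂.m1 h₁.d1 h₁.d2 hK0 hq.le hK (hsm _ hκ)
      ⟨1, one_pos, fun ε _ => amgm h₁.d1 h₁.d2 hq.le ?_ hK ε⟩
    rw [Real.sq_sqrt (by positivity), div_mul_eq_mul_div, div_le_iff₀ (by positivity)]
    nlinarith

lemma trace_smulRight (f : E₁ →ₗ[ℝ] ℝ) (y : E₁) :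
    LinearMap.trace ℝ E₁ (f.smulRight y) = f y := by
  have := LinearMap.trace_eq_contract_apply ℝ E₁ (f ⊗ₜ[ℝ] y)
  simp only [contractLeft_apply] at this
  rw [← this]
  congr 1

lemma trace_Pm {C₁ : Set E₁} {C₂ : Set E₂} {w1 w2 w φ1 φ2 α : E₁}
    {x1 x2 x ψ1 ψ2 β : E₂} (h₁ : CD C₁ w1 w2 w φ1 φ2 α) (h₂ : CD C₂ x1 x2 x ψ1 ψ2 β)
    (q ε q' ε' : ℝ) :
    LinearMap.trace ℝ E₁ (Pm ψ2 ψ1 β w1 w2 w q' (-ε') ∘ₗ Pm φ1 φ2 α x1 x2 x q ε) =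
    q' * ε' ^ 2 * (⟪w2, φ1⟫_ℝ * ⟪x1, ψ2⟫_ℝ + ⟪w1, φ2⟫_ℝ * ⟪x2, ψ1⟫_ℝ) +
    q * ε ^ 2 * (⟪w1, φ2⟫_ℝ * ⟪x1, ψ2⟫_ℝ + ⟪w2, φ1⟫_ℝ * ⟪x2, ψ1⟫_ℝ +
      q' * ε' ^ 2 * ((⟪w2, φ1⟫_ℝ + ⟪w1, φ2⟫_ℝ) * (⟪x2, ψ1⟫_ℝ + ⟪x1, ψ2⟫_ℝ))) - ε * ε' := by
  have hcomp : Pm ψ2 ψ1 β w1 w2 w q' (-ε') ∘ₗ Pm φ1 φ2 α x1 x2 x q ε =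
      (innerₗ E₁ (φ1 + (q * ε ^ 2) • (φ1 + φ2))).smulRight (Pm ψ2 ψ1 β w1 w2 w q' (-ε') x1) +
      (innerₗ E₁ (φ2 + (q * ε ^ 2) • (φ1 + φ2))).smulRight (Pm ψ2 ψ1 β w1 w2 w q' (-ε') x2) +
      (innerₗ E₁ (ε • α)).smulRight (Pm ψ2 ψ1 β w1 w2 w q' (-ε') x) := by
    ext v
    conv_lhs => rw [LinearMap.comp_apply]; enter [2]; rw [Pm]
    simp only [LinearMap.add_apply, LinearMap.smulRight_apply, map_add, map_smul]
  rw [hcomp, map_add, map_add, trace_smulRight, trace_smulRight, trace_smulRight]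
  simp only [Pm_apply, innerₗ_apply_apply, inner_add_left, inner_add_right, real_inner_smul_left,
    real_inner_smul_right, real_inner_comm w1, real_inner_comm w2, real_inner_comm w,
    h₁.z1, h₁.z2, h₁.a1, h₁.a2, h₁.p1, h₁.p2, h₁.pa,
    h₂.z1, h₂.z2, h₂.a1, h₂.a2, h₂.p1, h₂.p2, h₂.pa]
  ring

lemma NE_core {C₁ : Set E₁} {C₂ : Set E₂} (hC₁ : IsCn C₁) (hC₂ : IsCn C₂) {w1 w2 w φ1 φ2 α : E₁}
    {x1 x2 x ψ1 ψ2 β : E₂} (h₁ : CD C₁ w1 w2 w φ1 φ2 α) (h₂ : CD C₂ x1 x2 x ψ1 ψ2 β)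
    (hc1 : Cnc C₁ φ1 α ∨ Smo C₂ x2 x1 x) (hc2 : Cnc C₁ φ2 α ∨ Smo C₂ x1 x2 x) : NE C₁ C₂ := by
  obtain ⟨qa, hqa, Ha⟩ := end_big hC₁ h₂.swap h₁
  obtain ⟨qb, hqb, Hb⟩ := end_big hC₁ h₂ h₁.swap
  set q' := qa + qb with hq'
  have hq'0 : 0 ≤ q' := by positivity
  obtain ⟨ea, hea, Ha⟩ := Ha q' (by linarith)
  obtain ⟨eb, heb, Hb⟩ := Hb q' (by linarith)
  set a := ⟪w2, φ1⟫_ℝ with ha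
  set b := ⟪w1, φ2⟫_ℝ with hb
  set c := ⟪x2, ψ1⟫_ℝ with hc
  set d := ⟪x1, ψ2⟫_ℝ with hd
  have a0 : 0 ≤ a := h₁.d1 _ h₁.m2
  have b0 : 0 ≤ b := h₁.d2 _ h₁.m1
  have c0 : 0 ≤ c := h₂.d1 _ h₂.m2
  have d0 : 0 ≤ d := h₂.d2 _ h₂.m1
  set M := (a + b) * (c + d) + 1 with hM
  have hM0 : 0 < M := by positivity
  set L := 4 * M * q' + 1 with hL
  have hL0 : 0 < L := by positivity
  set q := 1 / (4 * M * L) with hq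
  have hq0 : 0 < q := by positivity
  obtain ⟨e1, he1, H1⟩ := end_small hC₂ h₁ h₂ hc1 hq0
  obtain ⟨e2, he2, H2⟩ := end_small hC₂ h₁.swap h₂.swap hc2 hq0
  obtain ⟨ε', hε'0, hε'⟩ : ∃ ε' : ℝ, 0 < ε' ∧ ε' ≤ ea ∧ ε' ≤ eb ∧ L * ε' ≤ e1 ∧ L * ε' ≤ e2 ∧
      q' * ε' ^ 2 ≤ 1 := by
    refine ⟨min (min ea eb) (min (min (e1 / L) (e2 / L)) (1 / (q' + 1))), by positivity, ?_⟩
    set t := min (min ea eb) (min (min (e1 / L) (e2 / L)) (1 / (q' + 1))) with ht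
    have ht0 : 0 < t := by positivity
    have t1 : t ≤ ea := (min_le_left _ _).trans (min_le_left _ _)
    have t2 : t ≤ eb := (min_le_left _ _).trans (min_le_right _ _)
    have t3 : t ≤ e1 / L := (min_le_right _ _).trans ((min_le_left _ _).trans (min_le_left _ _))
    have t4 : t ≤ e2 / L := (min_le_right _ _).trans ((min_le_left _ _).trans (min_le_right _ _))
    have t5 : t ≤ 1 / (q' + 1) := (min_le_right _ _).trans (min_le_right _ _)
    rw [le_div_iff₀ (by positivity)] at t3 t4 t5
    refine ⟨t1, t2, by linarith, by linarith, ?_⟩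
    have : t ≤ 1 := by nlinarith
    nlinarith [mul_nonneg hq'0 ht0.le]
  obtain ⟨g1, g2, g3, g4, g5⟩ := hε'
  have hLε : |L * ε'| = L * ε' := abs_of_pos (by positivity)
  have hε : |-ε'| = ε' := by rw [abs_neg, abs_of_pos hε'0]
  refine ⟨Pm φ1 φ2 α x1 x2 x q (L * ε'), Pm ψ2 ψ1 β w1 w2 w q' (-ε'), ?_, ?_, ?_⟩
  · intro v hv
    rcases le_total ⟪v, φ1⟫_ℝ ⟪v, φ2⟫_ℝ with hle | hle
    · exact H1 _ (by rw [hLε]; exact g3) v hv hle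
    · rw [Pm_swap]; exact H2 _ (by rw [hLε]; exact g4) v hv hle
  · intro v hv
    rcases le_total ⟪v, ψ2⟫_ℝ ⟪v, ψ1⟫_ℝ with hle | hle
    · exact Ha _ (by rw [hε]; exact g1) v hv hle
    · rw [Pm_swap]; exact Hb _ (by rw [hε]; exact g2) v hv hle
  · rw [trace_Pm h₁ h₂, ← ha, ← hb, ← hc, ← hd]
    have hη : 0 ≤ q' * ε' ^ 2 := by positivity
    have hη2 : 0 ≤ q * (L * ε') ^ 2 := by positivity
    have ac := mul_nonneg a0 c0
    have ad := mul_nonneg a0 d0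
    have bc := mul_nonneg b0 c0
    have bd := mul_nonneg b0 d0
    have hM1 : M = a * c + a * d + b * c + b * d + 1 := by rw [hM]; ring
    have k1 : q' * ε' ^ 2 * (a * d + b * c) ≤ q' * ε' ^ 2 * M :=
      mul_le_mul_of_nonneg_left (by linarith) hη
    have k2 : q' * ε' ^ 2 * ((a + b) * (c + d)) ≤ 1 * ((a + b) * (c + d)) :=
      mul_le_mul_of_nonneg_right g5 (by positivity)
    have k3 : q * (L * ε') ^ 2 * (b * d + a * c + q' * ε' ^ 2 * ((a + b) * (c + d))) ≤
        q * (L * ε') ^ 2 * (2 * M) :=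
      mul_le_mul_of_nonneg_left (by linarith) hη2
    have k4 : q * (L * ε') ^ 2 * (2 * M) = L / 2 * ε' ^ 2 := by
      rw [hq]; field_simp; ring
    have k5 : 0 < ε' ^ 2 := by positivity
    have k6 : (M * q' - L / 2) * ε' ^ 2 < 0 := by
      refine mul_neg_of_neg_of_pos ?_ k5
      have := mul_nonneg hM0.le hq'0
      rw [hL]; linarith
    have k7 : (M * q' - L / 2) * ε' ^ 2 = q' * ε' ^ 2 * M + L / 2 * ε' ^ 2 - L * ε' * ε' := by ring
    linarith

lemma NE_of_CD {C₁ : Set E₁} {C₂ : Set E₂} (hC₁ : IsCn C₁) (hC₂ : IsCn C₂) {w1 w2 w φ1 φ2 α : E₁}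
    {x1 x2 x ψ1 ψ2 β : E₂} (h₁ : CD C₁ w1 w2 w φ1 φ2 α) (h₂ : CD C₂ x1 x2 x ψ1 ψ2 β) :
    NE C₁ C₂ := by
  by_cases hc : (Cnc C₁ φ1 α ∨ Smo C₂ x2 x1 x) ∧ (Cnc C₁ φ2 α ∨ Smo C₂ x1 x2 x)
  · exact NE_core hC₁ hC₂ h₁ h₂ hc.1 hc.2
  by_cases hc' : (Cnc C₁ φ1 α ∨ Smo C₂ x1 x2 x) ∧ (Cnc C₁ φ2 α ∨ Smo C₂ x2 x1 x)
  · exact NE_core hC₁ hC₂ h₁ h₂.swap hc'.1 hc'.2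
  have k1 := h₁.h1
  have k2 := h₁.h2
  have k3 := h₂.h1
  have k4 := h₂.h2
  by_cases hd : (Cnc C₂ ψ1 β ∨ Smo C₁ w1 w2 w) ∧ (Cnc C₂ ψ2 β ∨ Smo C₁ w2 w1 w)
  · exact NE_symm (NE_core hC₂ hC₁ h₂ h₁.swap hd.1 hd.2)
  refine NE_symm (NE_core hC₂ hC₁ h₂ h₁ ?_ ?_) <;> tauto

end partIIF


set_option linter.unusedSectionVars false
section partIIG
open scoped InnerProductSpace

lemma NE_main_aux (n : ℕ) : ∀ (E₁ E₂ : Type) [NormedAddCommGroup E₁] [InnerProductSpace ℝ E₁]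
    [FiniteDimensional ℝ E₁] [NormedAddCommGroup E₂] [InnerProductSpace ℝ E₂]
    [FiniteDimensional ℝ E₂] (C₁ : Set E₁) (C₂ : Set E₂),
    Module.finrank ℝ E₁ + Module.finrank ℝ E₂ ≤ n → PC C₁ → PC C₂ → ¬ Cl C₁ → ¬ Cl C₂ →
    NE C₁ C₂ := by
  induction n with
  | zero =>
    intro E₁ E₂ _ _ _ _ _ _ C₁ C₂ hn h₁ h₂ n₁ n₂
    exfalso
    apply n₁
    have hf : Module.finrank ℝ E₁ = 0 := by omega
    have : Subsingleton E₁ := Module.finrank_zero_iff.1 hf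
    refine ⟨Empty, inferInstance, Module.Basis.empty E₁, ?_⟩
    ext x
    constructor
    · intro _ i; exact i.elim
    · intro _; rw [Subsingleton.elim x 0]; exact h₁.cn.1
  | succ n ih =>
    intro E₁ E₂ _ _ _ _ _ _ C₁ C₂ hn h₁ h₂ n₁ n₂
    -- reduction when the second cone has a non-classical face
    have red : ∀ (F₁ F₂ : Type) [NormedAddCommGroup F₁] [InnerProductSpace ℝ F₁]
        [FiniteDimensional ℝ F₁] [NormedAddCommGroup F₂] [InnerProductSpace ℝ F₂]
        [FiniteDimensional ℝ F₂] (D₁ : Set F₁) (D₂ : Set F₂),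
        Module.finrank ℝ F₁ + Module.finrank ℝ F₂ ≤ n + 1 → PC D₁ → PC D₂ → ¬ Cl D₁ → ¬ Cl D₂ →
        ¬ Mnl D₂ → NE D₁ D₂ := by
      intro F₁ F₂ _ _ _ _ _ _ D₁ D₂ hm k₁ k₂ c₁ c₂ hM
      rw [Mnl, not_and_or] at hM
      rcases hM with hM | hM
      · push Not at hM
        obtain ⟨y, hy, hy0, hc⟩ := hM
        refine face_reduction k₁ k₂ hy (ih _ _ _ _ ?_ k₁ (Fc_PC k₂ y) c₁ hc)
        have := FcU_finrank (C := D₂) hy0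
        omega
      · push Not at hM
        obtain ⟨y, hy, hy0, hc⟩ := hM
        refine NE_dual k₁ k₂ (face_reduction (Dl_PC k₁) (Dl_PC k₂) (by rw [bipolar k₂]; exact hy)
          (ih _ _ _ _ ?_ (Dl_PC k₁) (Fc_PC (Dl_PC k₂) y) (not_Cl_dual k₁ c₁) hc))
        have := FcU_finrank (C := Dl D₂) hy0
        omega
    by_cases m₂ : Mnl C₂
    · by_cases m₁ : Mnl C₁
      · obtain ⟨_, _, _, _, _, _, d₁⟩ := exists_CD h₁ m₁ n₁
        obtain ⟨_, _, _, _, _, _, d₂⟩ := exists_CD h₂ m₂ n₂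
        exact NE_of_CD h₁.cn h₂.cn d₁ d₂
      · exact NE_symm (red _ _ _ _ (by omega) h₂ h₁ n₂ n₁ m₁)
    · exact red _ _ _ _ hn h₁ h₂ n₁ n₂ m₂

lemma NE_main {E₁ E₂ : Type} [NormedAddCommGroup E₁] [InnerProductSpace ℝ E₁]
    [FiniteDimensional ℝ E₁] [NormedAddCommGroup E₂] [InnerProductSpace ℝ E₂]
    [FiniteDimensional ℝ E₂] {C₁ : Set E₁} {C₂ : Set E₂} (h₁ : PC C₁) (h₂ : PC C₂)
    (n₁ : ¬ Cl C₁) (n₂ : ¬ Cl C₂) : NE C₁ C₂ :=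
  NE_main_aux _ E₁ E₂ C₁ C₂ le_rfl h₁ h₂ n₁ n₂

variable {V : Type} [NormedAddCommGroup V] [NormedSpace ℝ V] [FiniteDimensional ℝ V]

abbrev EE (V : Type) [NormedAddCommGroup V] [NormedSpace ℝ V] : Type :=
  EuclideanSpace ℝ (Fin (Module.finrank ℝ V))

def te (V : Type) [NormedAddCommGroup V] [NormedSpace ℝ V] [FiniteDimensional ℝ V] :
    V ≃L[ℝ] EE V := toEuclidean

lemma proper_cn {C : Set V} (h : IsProperCone C) : IsCn C := by
  obtain ⟨_, hcv, hs, _, hp⟩ := h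
  have h0 : (0 : V) ∈ C := by
    have : (0 : V) ∈ C ∩ (-C) := by rw [hp]; rfl
    exact this.1
  refine ⟨h0, ?_, ?_⟩
  · intro x hx y hy
    have := hs (c := 2) two_pos (hcv hx hy (a := 1 / 2) (b := 1 / 2) (by norm_num) (by norm_num) (by norm_num))
    rw [smul_add, smul_smul, smul_smul] at this
    simpa using this
  · intro c hc x hx
    rcases hc.eq_or_lt with rfl | hc
    · rw [zero_smul]; exact h0
    · exact hs hc hx

lemma proper_PC {C : Set V} (h : IsProperCone C) : PC (te V '' C) := by
  have hcn := proper_cn h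
  obtain ⟨hcl, hcv, hs, hg, hp⟩ := h
  refine ⟨(te V).toHomeomorph.isClosed_image.2 hcl, ⟨⟨0, hcn.1, map_zero _⟩, ?_, ?_⟩, ?_, ?_⟩
  · rintro _ ⟨x, hx, rfl⟩ _ ⟨y, hy, rfl⟩
    exact ⟨x + y, hcn.2.1 _ hx _ hy, map_add _ _ _⟩
  · rintro c hc _ ⟨x, hx, rfl⟩
    exact ⟨c • x, hcn.2.2 _ hc _ hx, map_smul _ _ _⟩
  · rw [eq_top_iff]
    intro z _
    obtain ⟨x, hx, y, hy, hxy⟩ := hg ((te V).symm z)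
    have : z = te V x - te V y := by
      rw [← map_sub, ← hxy, ContinuousLinearEquiv.apply_symm_apply]
    rw [this]
    exact Submodule.sub_mem _ (Submodule.subset_span ⟨x, hx, rfl⟩)
      (Submodule.subset_span ⟨y, hy, rfl⟩)
  · rintro _ ⟨x, hx, rfl⟩ ⟨y, hy, hxy⟩
    have hy' : y = -x := (te V).injective (by rw [hxy, map_neg])
    have : x ∈ C ∩ (-C) := ⟨hx, by rw [Set.mem_neg, ← hy']; exact hy⟩
    rw [hp] at this
    rw [Set.mem_singleton_iff.1 this, map_zero]

lemma Cl_classical {C : Set V} (h : Cl (te V '' C)) : IsClassicalCone C := by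
  obtain ⟨ι, hι, b, hb⟩ := h
  let b' := b.reindex (Fintype.equivFin ι)
  refine ⟨Fintype.card ι, (te V).toLinearEquiv.trans b'.equivFun, ?_⟩
  ext x
  constructor
  · rintro ⟨v, hv, rfl⟩ i
    have : te V v ∈ {x | ∀ i, 0 ≤ b.repr x i} := by rw [← hb]; exact ⟨v, hv, rfl⟩
    have := this ((Fintype.equivFin ι).symm i)
    simpa [b'] using this
  · intro hx
    have : b'.equivFun.symm x ∈ te V '' C := by
      rw [hb]
      intro i
      have h1 := hx (Fintype.equivFin ι i)
      have h2 : b.repr (b'.equivFun.symm x) i = b'.equivFun (b'.equivFun.symm x) (Fintype.equivFin ι i) := by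
        rw [Module.Basis.equivFun_apply, Module.Basis.repr_reindex_apply, Equiv.symm_apply_apply]
      rw [h2, LinearEquiv.apply_symm_apply]
      exact h1
    obtain ⟨v, hv, hve⟩ := this
    refine ⟨v, hv, ?_⟩
    change b'.equivFun (te V v) = x
    rw [hve, LinearEquiv.apply_symm_apply]

def fn (y : EE V) : Module.Dual ℝ V := (innerₗ (EE V) y) ∘ₗ (te V).toLinearEquiv.toLinearMap

lemma fn_apply (y : EE V) (v : V) : fn y v = ⟪te V v, y⟫_ℝ := by
  rw [real_inner_comm]; rfl

lemma fn_mem {C : Set V} {y : EE V} (hy : y ∈ Dl (te V '' C)) : fn y ∈ dualConeSet C := by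
  intro x hx
  rw [fn_apply]
  exact hy _ ⟨x, hx, rfl⟩

lemma proper_bip {C : Set V} (h : IsProperCone C) (x : V)
    (hx : ∀ φ ∈ dualConeSet C, 0 ≤ φ x) : x ∈ C := by
  have : te V x ∈ te V '' C := by
    rw [← bipolar (proper_PC h)]
    intro y hy
    have := hx _ (fn_mem hy)
    rw [fn_apply, real_inner_comm] at this
    exact this
  obtain ⟨z, hz, hzx⟩ := this
  rwa [← (te V).injective hzx]

lemma proper_span {C : Set V} (h : IsProperCone C) :
    Submodule.span ℝ (dualConeSet C) = ⊤ := by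
  rw [eq_top_iff]
  intro f _
  obtain ⟨y, hy⟩ : ∃ y : EE V, fn y = f := by
    let g : EE V →ₗ[ℝ] ℝ := f ∘ₗ (te V).symm.toLinearEquiv.toLinearMap
    refine ⟨(InnerProductSpace.toDual ℝ (EE V)).symm (LinearMap.toContinuousLinearMap g), ?_⟩
    ext v
    rw [fn_apply, real_inner_comm, InnerProductSpace.toDual_symm_apply]
    simp [g]
  rw [← hy]
  have hy' : y ∈ Submodule.span ℝ (Dl (te V '' C)) := by rw [(Dl_PC (proper_PC h)).span]; trivial
  clear hy
  induction hy' using Submodule.span_induction with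
  | mem x hx => exact Submodule.subset_span (fn_mem hx)
  | zero =>
    have : fn (0 : EE V) = 0 := by ext v; simp [fn_apply]
    rw [this]; exact Submodule.zero_mem _
  | add a b _ _ k1 k2 =>
    have : fn (a + b) = fn a + fn b := by
      ext v; simp only [fn_apply, LinearMap.add_apply, inner_add_right]
    rw [this]; exact Submodule.add_mem _ k1 k2
  | smul c a _ k1 =>
    have : fn (c • a) = c • fn a := by
      ext v; simp only [fn_apply, LinearMap.smul_apply, real_inner_smul_right, smul_eq_mul]
    rw [this]; exact Submodule.smul_mem _ _ k1

theorem final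
    {V₁ V₂ : Type} [NormedAddCommGroup V₁] [NormedSpace ℝ V₁] [FiniteDimensional ℝ V₁]
    [NormedAddCommGroup V₂] [NormedSpace ℝ V₂] [FiniteDimensional ℝ V₂]
    (C₁ : Set V₁) (C₂ : Set V₂) (h₁ : IsProperCone C₁) (h₂ : IsProperCone C₂)
    (n₁ : ¬ IsClassicalCone C₁) (n₂ : ¬ IsClassicalCone C₂) :
    ∃ (P : V₁ →ₗ[ℝ] V₂) (W : V₂ →ₗ[ℝ] V₁), MapsTo P C₁ C₂ ∧ MapsTo W C₂ C₁ ∧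
      LinearMap.trace ℝ V₁ (W ∘ₗ P) < 0 := by
  obtain ⟨P, W, hP, hW, ht⟩ := NE_main (proper_PC h₁) (proper_PC h₂) (fun h => n₁ (Cl_classical h))
    (fun h => n₂ (Cl_classical h))
  let e₁ := (te V₁).toLinearEquiv
  let e₂ := (te V₂).toLinearEquiv
  refine ⟨e₂.symm.toLinearMap ∘ₗ P ∘ₗ e₁.toLinearMap, e₁.symm.toLinearMap ∘ₗ W ∘ₗ e₂.toLinearMap,
    ?_, ?_, ?_⟩
  · intro v hv
    obtain ⟨z, hz, hze⟩ := hP ⟨v, hv, rfl⟩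
    have : e₂.symm (P (e₁ v)) = z := by
      rw [LinearEquiv.symm_apply_eq]; exact hze.symm
    change e₂.symm (P (e₁ v)) ∈ C₂
    rw [this]; exact hz
  · intro v hv
    obtain ⟨z, hz, hze⟩ := hW ⟨v, hv, rfl⟩
    have : e₁.symm (W (e₂ v)) = z := by
      rw [LinearEquiv.symm_apply_eq]; exact hze.symm
    change e₁.symm (W (e₂ v)) ∈ C₁
    rw [this]; exact hz
  · rw [← LinearMap.trace_conj' _ e₁]
    convert ht using 2
    ext v
    simp [LinearEquiv.conj_apply]

end partIIG

/-- **Theorem.** If `C₁` and `C₂` are non-classical proper cones, then for every `k ≥ 1`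
there is a linear map `P` with `P^{⊗k}(C₁^{⊗max k}) ⊆ C₂^{⊗min k}` which is not
`(C₁,C₂)`-entanglement breaking. -/
theorem exists_k_annihilating_not_breaking
    {V₁ V₂ : Type} [NormedAddCommGroup V₁] [NormedSpace ℝ V₁] [FiniteDimensional ℝ V₁]
    [NormedAddCommGroup V₂] [NormedSpace ℝ V₂] [FiniteDimensional ℝ V₂]
    (C₁ : Set V₁) (C₂ : Set V₂) (h₁ : IsProperCone C₁) (h₂ : IsProperCone C₂)
    (hc₁ : ¬ IsClassicalCone C₁) (hc₂ : ¬ IsClassicalCone C₂)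
    (k : ℕ) (hk : 1 ≤ k) :
    ∃ P : V₁ →ₗ[ℝ] V₂,
      Set.MapsTo (⇑(PiTensorProduct.map fun _ : Fin k => P))
        (maxTensorPow C₁ k) (minTensorPow C₂ k) ∧
      ¬ IsEntanglementBreaking C₁ C₂ P := by
  have hs2 : Submodule.span ℝ C₂ = ⊤ := by
    rw [eq_top_iff]
    intro v _
    obtain ⟨x, hx, y, hy, rfl⟩ := h₂.2.2.2.1 v
    exact Submodule.sub_mem _ (Submodule.subset_span hx) (Submodule.subset_span hy)
  obtain ⟨P, W, hP, hW, ht⟩ := final C₁ C₂ h₁ h₂ hc₁ hc₂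
  exact partI_main (proper_cn h₂) hk (proper_bip h₁) (proper_span h₁) hs2 P W hP hW ht

end
end

section
/- Let C1 ⊆ V1, C2 ⊆ V2 be proper cones and P : V1 → V2 a linear map. The following are equivalent: (1) P is (C1,C2)-entanglement annihilating; (2) for every k ≥ 1, every C1-encoder E : V1 → V1^{⊗k} (i.e., every (C1, C1^{⊗max k})-positive map) and every C2-decoder D : V2^{⊗k} → V2 (i.e., every (C2^{⊗min k}, C2)-positive map), the composition D ∘ P^{⊗k} ∘ E is (C1,C2)-positive. -/
open scoped TensorProduct
open Set

noncomputable section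

theorem aux_hull {V : Type*} [NormedAddCommGroup V] [NormedSpace ℝ V] [FiniteDimensional ℝ V]
    {s : Set V} (hs : IsCompact s) : IsCompact (convexHull ℝ s) := by
  rcases s.eq_empty_or_nonempty with rfl | ⟨s₀, hs₀⟩
  · simp
  let n := Module.finrank ℝ V + 1
  have hc : IsCompact ((fun p : (Fin n → ℝ) × (Fin n → V) => ∑ i, p.1 i • p.2 i) ''
      (stdSimplex ℝ (Fin n) ×ˢ Set.pi univ (fun _ => s))) := by
    refine ((isCompact_stdSimplex ℝ (Fin n)).prod (isCompact_univ_pi fun _ => hs)).image ?_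
    fun_prop
  convert hc
  apply Set.Subset.antisymm
  · intro x hx
    obtain ⟨ι, hι, z, w, hz, hai, hw, hw1, hx⟩ := eq_pos_convex_span_of_mem_convexHull hx
    have hcard : Fintype.card ι ≤ Fintype.card (Fin n) := by
      rw [Fintype.card_fin]
      exact hai.card_le_finrank_succ.trans (Nat.succ_le_succ (Submodule.finrank_le _))
    obtain ⟨g⟩ := Function.Embedding.nonempty_of_card_le hcard
    have hg := g.injective
    have hout : ∀ i, i ∉ Set.range g → Function.extend g w 0 i = 0 := fun i hi => by
      rw [Function.extend_apply' _ _ _ (by simpa using hi)]; rfl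
    refine ⟨(Function.extend g w 0, Function.extend g z (fun _ => s₀)), ⟨⟨?_, ?_⟩, ?_⟩, ?_⟩
    · intro i
      by_cases hi : i ∈ Set.range g
      · obtain ⟨j, rfl⟩ := hi
        simp only [hg.extend_apply]
        exact (hw j).le
      · exact (hout i hi).ge
    · rw [← hw1]
      exact (Fintype.sum_of_injective g hg _ _ hout fun i => (hg.extend_apply _ _ _).symm).symm
    · intro i _
      by_cases hi : i ∈ Set.range g
      · obtain ⟨j, rfl⟩ := hi
        simp only [hg.extend_apply]
        exact hz ⟨j, rfl⟩
      · simp only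
        rw [Function.extend_apply' _ _ _ (by simpa using hi)]
        exact hs₀
    · rw [← hx]
      refine (Fintype.sum_of_injective g hg _ _ (fun i hi => ?_) fun i => ?_).symm
      · simp only
        rw [hout i hi, zero_smul]
      · simp only [hg.extend_apply]
  · rintro _ ⟨⟨w, z⟩, ⟨⟨hw, hw1⟩, hz⟩, rfl⟩
    exact (convex_convexHull ℝ s).sum_mem (fun i _ => hw i) hw1
      (fun i _ => subset_convexHull ℝ s (hz i trivial))

theorem aux_strict {V : Type*} [NormedAddCommGroup V] [NormedSpace ℝ V] [FiniteDimensional ℝ V]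
    (C : Set V) (h : IsProperCone C) : ∃ ψ : V →ₗ[ℝ] ℝ, ∀ x ∈ C, x ≠ 0 → 0 < ψ x := by
  obtain ⟨hcl, hcv, hsm, -, hpt⟩ := h
  have hK : IsCompact (C ∩ Metric.sphere 0 1) := (isCompact_sphere 0 1).inter_left hcl
  have hconv : Convex ℝ {x | x ∈ C ∧ x ≠ 0} := by
    rw [convex_iff_forall_pos]
    rintro x ⟨hx, hx0⟩ y ⟨hy, hy0⟩ a b ha hb hab
    refine ⟨hcv hx hy ha.le hb.le hab, fun h0 => ?_⟩
    have h1 : a • x ∈ C := hsm ha hx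
    have h2 : b • y ∈ C := hsm hb hy
    have h3 : a • x ∈ C ∩ -C := ⟨h1, by
      rw [Set.mem_neg, neg_eq_of_add_eq_zero_right h0]; exact h2⟩
    rw [hpt, Set.mem_singleton_iff, smul_eq_zero] at h3
    rcases h3 with h3 | h3
    · exact ha.ne' h3
    · exact hx0 h3
  have h0 : (0 : V) ∉ convexHull ℝ (C ∩ Metric.sphere 0 1) := by
    intro h0
    have := convexHull_min (t := {x | x ∈ C ∧ x ≠ 0}) (by
      rintro x ⟨hx, hx1⟩
      refine ⟨hx, ?_⟩
      rintro rfl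
      simp at hx1) hconv h0
    exact this.2 rfl
  obtain ⟨f, u, hu, hf⟩ := geometric_hahn_banach_point_closed (convex_convexHull ℝ _)
    (aux_hull hK).isClosed h0
  refine ⟨f.toLinearMap, fun x hx hx0 => ?_⟩
  have hn : 0 < ‖x‖ := norm_pos_iff.2 hx0
  have := hf (‖x‖⁻¹ • x) (subset_convexHull ℝ _ ⟨hsm (inv_pos.2 hn) hx, by
    simp [norm_smul, hn.ne']⟩)
  rw [map_zero] at hu
  rw [map_smul, smul_eq_mul] at this
  have h3 := hu.trans this
  exact (pos_iff_pos_of_mul_pos h3).1 (inv_pos.2 hn)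

theorem aux_zero_mem {V : Type*} [NormedAddCommGroup V] [NormedSpace ℝ V]
    {C : Set V} (h : IsProperCone C) : (0 : V) ∈ C := by
  have : (0 : V) ∈ C ∩ -C := by rw [h.2.2.2.2]; rfl
  exact this.1

theorem aux_trivial {V : Type*} [NormedAddCommGroup V] [NormedSpace ℝ V]
    {C : Set V} (h : IsProperCone C) (hC : ∀ x ∈ C, x = 0) {k : ℕ} (hk : 1 ≤ k)
    (z : ⨂[ℝ] _ : Fin k, V) : z = 0 := by
  have hV : ∀ v : V, v = 0 := fun v => by
    obtain ⟨x, hx, y, hy, rfl⟩ := h.2.2.2.1 v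
    rw [hC x hx, hC y hy, sub_zero]
  induction z using PiTensorProduct.induction_on with
  | smul_tprod r f =>
    rw [(PiTensorProduct.tprod ℝ).map_coord_zero ⟨0, hk⟩ (hV _), smul_zero]
  | add x y hx hy => rw [hx, hy, add_zero]

theorem aux_smul_mem {V : Type*} [NormedAddCommGroup V] [NormedSpace ℝ V]
    {C : Set V} (h : IsProperCone C) {k : ℕ} (hk : 1 ≤ k) {c : ℝ} (hc : 0 ≤ c)
    {z : ⨂[ℝ] _ : Fin k, V} (hz : z ∈ minTensorPow C k) : c • z ∈ minTensorPow C k := by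
  have hcv : Convex ℝ (minTensorPow C k) := convex_convexHull ℝ _
  have : Convex ℝ {z | c • z ∈ minTensorPow C k} := by
    intro x hx y hy a b ha hb hab
    have := hcv hx hy ha hb hab
    simp only [Set.mem_ofPred_eq, smul_add, smul_comm c]
    exact this
  refine convexHull_min ?_ this hz
  rintro _ ⟨x, hx, rfl⟩
  refine subset_convexHull ℝ _ ⟨Function.update x ⟨0, hk⟩ (c • x ⟨0, hk⟩), ?_, ?_⟩
  · intro i
    by_cases hi : i = ⟨0, hk⟩
    · subst hi
      rw [Function.update_self]
      rcases hc.eq_or_lt with rfl | hc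
      · rw [zero_smul]; exact aux_zero_mem h
      · exact h.2.2.1 hc (hx _)
    · rw [Function.update_of_ne hi]; exact hx i
  · rw [MultilinearMap.map_update_smul, Function.update_eq_self]

theorem aux_sep {V : Type*} [NormedAddCommGroup V] [NormedSpace ℝ V] [FiniteDimensional ℝ V]
    {C : Set V} (h : IsProperCone C) {k : ℕ} (hk : 1 ≤ k) {x₀ : V} (hx₀ : x₀ ∈ C) (hx₀' : x₀ ≠ 0)
    {y : ⨂[ℝ] _ : Fin k, V} (hy : y ∉ minTensorPow C k) :
    ∃ f : (⨂[ℝ] _ : Fin k, V) →ₗ[ℝ] ℝ, (∀ z ∈ minTensorPow C k, 0 ≤ f z) ∧ f y < 0 := by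
  obtain ⟨ψ, hψ⟩ := aux_strict C h
  let b := Module.finBasis ℝ V
  let B := Basis.piTensorProduct (fun _ : Fin k => b)
  let e := B.equivFun
  have hcont : Continuous (fun x : Fin k → V => e (PiTensorProduct.tprod ℝ x)) := by
    refine continuous_pi fun p => ?_
    have : (fun x : Fin k → V => e (PiTensorProduct.tprod ℝ x) p) =
        fun x => ∏ i, b.coord (p i) (x i) := by
      ext x
      simp [e, B, Module.Basis.equivFun_apply, Basis.piTensorProduct_repr_tprod_apply]
    rw [this]
    refine continuous_finsetProd _ fun i _ => ?_
    exact (LinearMap.continuous_of_finiteDimensional (b.coord (p i))).comp (continuous_apply i)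
  let K : Set V := C ∩ Metric.sphere 0 1
  have hK : IsCompact K := (isCompact_sphere 0 1).inter_left h.1
  have hnorm : ∀ x ∈ C, x ≠ 0 → ‖x‖⁻¹ • x ∈ K := fun x hx hx0 => by
    have hn : 0 < ‖x‖ := norm_pos_iff.2 hx0
    exact ⟨h.2.2.1 (inv_pos.2 hn) hx, by simp [norm_smul, hn.ne']⟩
  let S := (fun x : Fin k → V => e (PiTensorProduct.tprod ℝ x)) '' Set.pi univ (fun _ => K)
  have hS : IsCompact S := (isCompact_univ_pi fun _ => hK).image hcont
  have hSne : S.Nonempty := ⟨_, fun _ => ‖x₀‖⁻¹ • x₀, fun _ _ => hnorm x₀ hx₀ hx₀', rfl⟩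
  -- convex hull of S
  have hQ : ∀ q ∈ convexHull ℝ S, e.symm q ∈ minTensorPow C k ∧
      0 < dualPairing (fun _ : Fin k => ψ) (e.symm q) := by
    intro q hq
    refine ⟨?_, ?_⟩
    · refine convexHull_min (t := e.symm ⁻¹' minTensorPow C k) ?_
        ((convex_convexHull ℝ _).linear_preimage e.symm.toLinearMap) hq
      rintro _ ⟨x, hx, rfl⟩
      simp only [Set.mem_preimage, LinearEquiv.symm_apply_apply]
      exact subset_convexHull ℝ _ ⟨x, fun i => (hx i trivial).1, rfl⟩
    · refine convexHull_min
        (t := (dualPairing (fun _ : Fin k => ψ) ∘ₗ e.symm.toLinearMap) ⁻¹' Set.Ioi 0) ?_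
        ((convex_Ioi _).linear_preimage _) hq
      rintro _ ⟨x, hx, rfl⟩
      simp only [Set.mem_preimage, LinearMap.comp_apply, LinearEquiv.coe_coe,
        LinearEquiv.symm_apply_apply, Set.mem_Ioi, dualPairing, PiTensorProduct.lift.tprod,
        MultilinearMap.compLinearMap_apply, MultilinearMap.mkPiAlgebra_apply]
      refine Finset.prod_pos fun i _ => hψ _ (hx i trivial).1 fun h0 => ?_
      have := (hx i trivial).2
      rw [h0] at this
      simp at this
  have h0 : (0 : _) ∉ convexHull ℝ (insert (-(e y)) S) := by
    rw [convexHull_insert hSne, mem_convexJoin]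
    rintro ⟨w, hw, q, hq, a, c, ha, hc, hac, h0⟩
    rw [Set.mem_singleton_iff] at hw
    subst hw
    obtain ⟨hq1, hq2⟩ := hQ q hq
    have h1 : c • e.symm q = a • y := by
      have := congrArg e.symm h0
      simp only [map_add, map_smul, map_neg, LinearEquiv.symm_apply_apply, map_zero, smul_neg]
        at this
      rwa [neg_add_eq_zero, eq_comm] at this
    rcases ha.eq_or_lt with rfl | ha
    · have hc1 : c = 1 := by linarith
      rw [hc1, one_smul, zero_smul] at h1
      rw [h1, map_zero] at hq2
      exact lt_irrefl _ hq2
    · apply hy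
      have : y = a⁻¹ • c • e.symm q := by rw [h1, inv_smul_smul₀ ha.ne']
      rw [this]
      exact aux_smul_mem h hk (inv_pos.2 ha).le (aux_smul_mem h hk hc hq1)
  obtain ⟨f, u, hu, hf⟩ := geometric_hahn_banach_point_closed (convex_convexHull ℝ _)
    (aux_hull (hS.insert _)).isClosed h0
  rw [map_zero] at hu
  refine ⟨f.toLinearMap ∘ₗ e.toLinearMap, ?_, ?_⟩
  · intro z hz
    refine convexHull_min
      (t := (f.toLinearMap ∘ₗ e.toLinearMap) ⁻¹' Set.Ici 0) ?_
      ((convex_Ici _).linear_preimage _) hz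
    rintro _ ⟨x, hx, rfl⟩
    simp only [Set.mem_preimage, LinearMap.comp_apply, LinearEquiv.coe_coe, Set.mem_Ici]
    by_cases hx0 : ∃ i, x i = 0
    · obtain ⟨i, hi⟩ := hx0
      rw [(PiTensorProduct.tprod ℝ).map_coord_zero i hi, map_zero, map_zero]
    · push Not at hx0
      have : x = fun i => ‖x i‖ • (‖x i‖⁻¹ • x i) := by
        ext i
        rw [smul_inv_smul₀ (norm_ne_zero_iff.2 (hx0 i))]
      rw [this, MultilinearMap.map_smul_univ, map_smul, map_smul, smul_eq_mul]
      refine mul_nonneg (Finset.prod_nonneg fun i _ => norm_nonneg _) ?_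
      refine (hu.trans (hf _ (subset_convexHull ℝ _ (Set.mem_insert_of_mem _ ?_)))).le
      exact ⟨_, fun i _ => hnorm _ (hx i) (hx0 i), rfl⟩
  · have := hu.trans (hf _ (subset_convexHull ℝ _ (Set.mem_insert _ _)))
    rw [map_neg] at this
    exact neg_pos.1 this

/-- **Theorem (characterization of entanglement annihilation).** `P` is entanglement
annihilating iff `D ∘ P^{⊗k} ∘ E` is `(C₁,C₂)`-positive for every `k ≥ 1`, every
`C₁`-encoder `E` and every `C₂`-decoder `D`. -/
theorem entanglementAnnihilating_iff_coding
    {V₁ V₂ : Type*} [NormedAddCommGroup V₁] [NormedSpace ℝ V₁] [FiniteDimensional ℝ V₁]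
    [NormedAddCommGroup V₂] [NormedSpace ℝ V₂] [FiniteDimensional ℝ V₂]
    (C₁ : Set V₁) (C₂ : Set V₂) (h₁ : IsProperCone C₁) (h₂ : IsProperCone C₂)
    (P : V₁ →ₗ[ℝ] V₂) :
    IsEntanglementAnnihilating C₁ C₂ P ↔
      ∀ (k : ℕ), 1 ≤ k →
        ∀ (E : V₁ →ₗ[ℝ] ⨂[ℝ] _ : Fin k, V₁) (D : (⨂[ℝ] _ : Fin k, V₂) →ₗ[ℝ] V₂),
          Set.MapsTo (⇑E) C₁ (maxTensorPow C₁ k) →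
          Set.MapsTo (⇑D) (minTensorPow C₂ k) C₂ →
          Set.MapsTo (⇑(D ∘ₗ (PiTensorProduct.map fun _ : Fin k => P) ∘ₗ E)) C₁ C₂ := by
  constructor
  · intro hP k hk E D hE hD x hx
    exact hD (hP k hk (hE hx))
  · intro H k hk z hz
    by_contra hy
    have hy0 : PiTensorProduct.map (fun _ : Fin k => P) z ≠ 0 := by
      intro h0
      apply hy
      rw [h0]
      exact subset_convexHull ℝ _ ⟨fun _ => 0, fun _ => aux_zero_mem h₂,
        ((PiTensorProduct.tprod ℝ).map_coord_zero ⟨0, hk⟩ rfl).symm⟩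
    obtain ⟨x₁, hx₁, hx₁'⟩ : ∃ x ∈ C₁, x ≠ 0 := by
      by_contra hc
      push Not at hc
      exact hy0 (by rw [aux_trivial h₁ hc hk z, map_zero])
    obtain ⟨x₂, hx₂, hx₂'⟩ : ∃ x ∈ C₂, x ≠ 0 := by
      by_contra hc
      push Not at hc
      exact hy0 (aux_trivial h₂ hc hk _)
    obtain ⟨φ, hφ⟩ := aux_strict C₁ h₁
    obtain ⟨f, hf, hfy⟩ := aux_sep h₂ hk hx₂ hx₂' hy
    have hsm : ∀ c : ℝ, 0 ≤ c → c • x₂ ∈ C₂ := fun c hc => by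
      rcases hc.eq_or_lt with rfl | hc
      · rw [zero_smul]; exact aux_zero_mem h₂
      · exact h₂.2.2.1 hc hx₂
    have hmem := H k hk (φ.smulRight z) (f.smulRight x₂) (by
      intro x hx χ hχ
      rw [LinearMap.smulRight_apply, map_smul, smul_eq_mul]
      refine mul_nonneg ?_ (hz χ hχ)
      by_cases hx0 : x = 0
      · rw [hx0, map_zero]
      · exact (hφ x hx hx0).le) (by
      intro w hw
      exact hsm _ (hf w hw)) hx₁
    simp only [LinearMap.comp_apply, LinearMap.smulRight_apply, map_smul, smul_smul] at hmem
    set c := φ x₁ * f (PiTensorProduct.map (fun _ : Fin k => P) z) with hc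
    have hcneg : c < 0 := mul_neg_of_pos_of_neg (hφ x₁ hx₁ hx₁') hfy
    have h3 : c • x₂ ∈ C₂ ∩ -C₂ := ⟨hmem, by
      rw [Set.mem_neg, ← neg_smul]
      exact hsm _ (by linarith)⟩
    rw [h₂.2.2.2.2, Set.mem_singleton_iff, smul_eq_zero] at h3
    rcases h3 with h3 | h3
    · exact hcneg.ne h3
    · exact hx₂' h3

end
end

section
/- Let C ⊆ V be a proper cone. The following are equivalent: (1) C is resilient; (2) the pair (C,C') is resilient for every proper cone C' ⊆ V' in every finite-dimensional real vector space V'; (3) the pair (C',C) is resilient for every proper cone C' ⊆ V'. -/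
open scoped TensorProduct
open Set

noncomputable section

theorem aux_compact_hull {E : Type*} [NormedAddCommGroup E] [NormedSpace ℝ E]
    [FiniteDimensional ℝ E] {s : Set E} (hs : IsCompact s) : IsCompact (convexHull ℝ s) := by
  rcases s.eq_empty_or_nonempty with rfl | ⟨s0, hs0⟩
  · simp
  let N := Module.finrank ℝ E + 1
  have h : convexHull ℝ s = (fun p : (Fin N → ℝ) × (Fin N → E) => ∑ i, p.1 i • p.2 i) ''
      (stdSimplex ℝ (Fin N) ×ˢ Set.univ.pi fun _ => s) := by
    apply Set.Subset.antisymm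
    · intro x hx
      obtain ⟨ι, _, z, w, hz, hai, hw, hw1, rfl⟩ := eq_pos_convex_span_of_mem_convexHull hx
      have hcard : Fintype.card ι ≤ Fintype.card (Fin N) := by
        rw [Fintype.card_fin]
        exact hai.card_le_finrank_succ.trans (Nat.succ_le_succ (Submodule.finrank_le _))
      obtain ⟨g⟩ := Function.Embedding.nonempty_of_card_le hcard
      have hzs : ∀ i, z i ∈ s := fun i => hz ⟨i, rfl⟩
      refine ⟨(Function.extend g w 0, Function.extend g z fun _ => s0), ⟨⟨fun i => ?_, ?_⟩, ?_⟩, ?_⟩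
      · by_cases hi : ∃ j, g j = i
        · obtain ⟨j, rfl⟩ := hi
          simpa [g.injective.extend_apply] using (hw j).le
        · simp [Function.extend_apply' _ _ _ hi]
      · rw [← hw1]
        symm
        refine Fintype.sum_of_injective g g.injective _ _ (fun i hi => ?_) fun i => ?_
        · exact Function.extend_apply' _ _ _ hi
        · simp [g.injective.extend_apply]
      · intro i _
        by_cases hi : ∃ j, g j = i
        · obtain ⟨j, rfl⟩ := hi
          simpa [g.injective.extend_apply] using hzs j
        · simpa [Function.extend_apply' _ _ _ hi] using hs0
      · symm
        refine Fintype.sum_of_injective g g.injective _ _ (fun i hi => ?_) fun i => ?_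
        · have := Function.extend_apply' (f := g) w (0 : Fin N → ℝ) i hi
          simp [this]
        · simp [g.injective.extend_apply]
    · rintro _ ⟨⟨w, z⟩, ⟨hw, hz⟩, rfl⟩
      exact (convex_convexHull ℝ s).sum_mem (fun i _ => hw.1 i) hw.2
        fun i _ => subset_convexHull ℝ s (hz i trivial)
  rw [h]
  refine ((isCompact_stdSimplex ℝ (Fin N)).prod (isCompact_univ_pi fun _ => hs)).image ?_
  fun_prop

theorem aux_cone {E : Type*} [NormedAddCommGroup E] [NormedSpace ℝ E] [FiniteDimensional ℝ E]
    (B : Set E) (hB : IsCompact B) (G : E →L[ℝ] ℝ) (hG : ∀ b ∈ B, G b = 1) (P : E)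
    (hP : ∀ L : E →L[ℝ] ℝ, (∀ b ∈ B, 0 ≤ L b) → 0 ≤ L P) :
    P = 0 ∨ ∃ t : ℝ, 0 < t ∧ ∃ Q ∈ convexHull ℝ B, P = t • Q := by
  have h0 : 0 ≤ G P := hP G fun b hb => by rw [hG b hb]; exact zero_le_one
  rcases h0.eq_or_lt with h | h
  · left
    have key : ∀ L : E →L[ℝ] ℝ, 0 ≤ L P := by
      intro L
      obtain ⟨c, hc⟩ := (hB.image L.continuous).bddBelow
      have := hP (L - c • G) fun b hb => by
        have h1 := hc ⟨b, hb, rfl⟩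
        simp [hG b hb]; exact h1
      simpa [← h] using this
    by_contra hne
    obtain ⟨g, -, hg⟩ := exists_dual_vector ℝ P (norm_ne_zero_iff.2 hne)
    have h1 := key (-g)
    have h2 : (0:ℝ) < ‖P‖ := norm_pos_iff.2 hne
    simp [hg] at h1
    exact hne h1
  · right
    refine ⟨G P, h, (G P)⁻¹ • P, ?_, by rw [smul_inv_smul₀ h.ne']⟩
    by_contra hn
    obtain ⟨L, u, hu1, hu2⟩ := geometric_hahn_banach_point_closed (convex_convexHull ℝ B)
      (aux_compact_hull hB).isClosed hn
    have := hP (L - u • G) fun b hb => by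
      have h1 := hu2 b (subset_convexHull ℝ B hb)
      simp [hG b hb]; exact h1.le
    simp at this hu1
    rw [inv_mul_lt_iff₀ h] at hu1
    nlinarith

theorem aux_pos {E : Type*} [NormedAddCommGroup E] [NormedSpace ℝ E] [FiniteDimensional ℝ E]
    (D : Set E) (hc : IsClosed D) (hv : Convex ℝ D)
    (hs : ∀ ⦃c : ℝ⦄, 0 < c → ∀ ⦃x⦄, x ∈ D → c • x ∈ D)
    (hp : ∀ x, x ∈ D → -x ∈ D → x = 0) :
    ∃ f : E →L[ℝ] ℝ, ∃ c : ℝ, 0 < c ∧ ∀ x ∈ D, c * ‖x‖ ≤ f x := by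
  have hK : IsCompact (D ∩ Metric.sphere (0:E) 1) := (isCompact_sphere 0 1).inter_left hc
  have hn : (0:E) ∉ convexHull ℝ (D ∩ Metric.sphere (0:E) 1) := by
    have : convexHull ℝ (D ∩ Metric.sphere (0:E) 1) ⊆ D \ {0} := by
      apply convexHull_min
      · rintro x ⟨hx, hx1⟩
        refine ⟨hx, ?_⟩
        rintro rfl
        simp at hx1
      · intro x hx y hy a b ha hb hab
        refine ⟨hv hx.1 hy.1 ha hb hab, fun h => ?_⟩
        rw [Set.mem_singleton_iff] at h
        rcases ha.eq_or_lt with rfl | ha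
        · have : b = 1 := by linarith
          subst this
          exact hy.2 (by simpa using h)
        rcases hb.eq_or_lt with rfl | hb
        · have : a = 1 := by linarith
          subst this
          exact hx.2 (by simpa using h)
        have h1 := hp (a • x) (hs ha hx.1) (by
          rw [neg_eq_of_add_eq_zero_right h]; exact hs hb hy.1)
        rcases smul_eq_zero.1 h1 with h2 | h2
        · exact ha.ne' h2
        · exact hx.2 h2
    exact fun h => (this h).2 rfl
  obtain ⟨f, u, hu1, hu2⟩ := geometric_hahn_banach_point_closed (convex_convexHull ℝ _)
      (aux_compact_hull hK).isClosed hn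
  simp at hu1
  refine ⟨f, u, hu1, fun x hx => ?_⟩
  by_cases hx0 : x = 0
  · simp [hx0]
  have hpos : 0 < ‖x‖ := norm_pos_iff.2 hx0
  have h1 := hu2 (‖x‖⁻¹ • x) (subset_convexHull ℝ _ ⟨hs (inv_pos.2 hpos) hx, by
    simp [norm_smul, hpos.ne']⟩)
  simp at h1
  rw [lt_inv_mul_iff₀ hpos] at h1
  linarith

theorem aux_bipolar {E : Type*} [NormedAddCommGroup E] [NormedSpace ℝ E]
    (D : Set E) (hc : IsClosed D) (hv : Convex ℝ D) (h0 : (0:E) ∈ D)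
    (hs : ∀ ⦃c : ℝ⦄, 0 < c → ∀ ⦃x⦄, x ∈ D → c • x ∈ D) (x : E)
    (hx : ∀ φ ∈ dualConeSet D, 0 ≤ φ x) : x ∈ D := by
  by_contra hn
  obtain ⟨f, u, hu1, hu2⟩ := geometric_hahn_banach_point_closed hv hc hn
  have hu0 : u < 0 := by simpa using hu2 0 h0
  have := hx f.toLinearMap (fun y hy => by
    by_contra hneg
    push Not at hneg
    have hneg' : f y < 0 := hneg
    have h2 := hu2 ((u / f y) • y) (hs (div_pos_of_neg_of_neg hu0 hneg') hy)
    simp [hneg'.ne] at h2)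
  have h3 : 0 ≤ f x := this
  linarith

theorem aux_eb_add {V₁ V₂ : Type*} [AddCommGroup V₁] [Module ℝ V₁]
    [AddCommGroup V₂] [Module ℝ V₂] {C₁ : Set V₁} {C₂ : Set V₂} {P Q : V₁ →ₗ[ℝ] V₂}
    (hP : IsEntanglementBreaking C₁ C₂ P) (hQ : IsEntanglementBreaking C₁ C₂ Q) :
    IsEntanglementBreaking C₁ C₂ (P + Q) := by
  obtain ⟨m, φ, x, h1, h2, h3⟩ := hP
  obtain ⟨n, ψ, y, k1, k2, k3⟩ := hQ
  refine ⟨m + n, Fin.append φ ψ, Fin.append x y, ?_, ?_, ?_⟩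
  · intro i; refine Fin.addCases ?_ ?_ i <;> intro i <;> simp [h1, k1]
  · intro i; refine Fin.addCases ?_ ?_ i <;> intro i <;> simp [h2, k2]
  · intro v; simp [Fin.sum_univ_add, h3, k3]

theorem aux_eb_smul {V₁ V₂ : Type*} [AddCommGroup V₁] [Module ℝ V₁]
    [AddCommGroup V₂] [Module ℝ V₂] {C₁ : Set V₁} {C₂ : Set V₂} {P : V₁ →ₗ[ℝ] V₂}
    (hP : IsEntanglementBreaking C₁ C₂ P) {c : ℝ} (hc : 0 ≤ c) :
    IsEntanglementBreaking C₁ C₂ (c • P) := by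
  obtain ⟨m, φ, x, h1, h2, h3⟩ := hP
  refine ⟨m, fun i => c • φ i, x, ?_, h2, ?_⟩
  · intro i y hy
    exact mul_nonneg hc (h1 i y hy)
  · intro v; simp [h3, Finset.smul_sum, mul_smul]

theorem aux_trace_nonneg {V : Type*} [AddCommGroup V] [Module ℝ V] [FiniteDimensional ℝ V]
    {C : Set V} {P : V →ₗ[ℝ] V} (hP : IsEntanglementBreaking C C P) :
    0 ≤ LinearMap.trace ℝ V P := by
  obtain ⟨m, φ, x, h1, h2, h3⟩ := hP
  have : P = ∑ i, (φ i).smulRight (x i) := by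
    ext v; simp [h3]
  rw [this, map_sum]
  refine Finset.sum_nonneg fun i _ => ?_
  rw [LinearMap.trace_smulRight]
  exact h1 i _ (h2 i)

theorem aux_rank_one {V₁ V₂ : Type*} [NormedAddCommGroup V₁] [NormedSpace ℝ V₁]
    [FiniteDimensional ℝ V₁] [NormedAddCommGroup V₂] [NormedSpace ℝ V₂]
    (L : (V₁ →L[ℝ] V₂) →L[ℝ] ℝ) :
    ∃ R : V₂ →ₗ[ℝ] V₁, (∀ (φ : V₁ →L[ℝ] ℝ) x, φ (R x) = L (φ.smulRight x)) ∧
      ∀ P : V₁ →L[ℝ] V₂, L P = LinearMap.trace ℝ V₁ (R ∘ₗ P.toLinearMap) := by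
  let b := Module.finBasis ℝ V₁
  let c : Fin _ → V₁ →L[ℝ] ℝ := fun i => LinearMap.toContinuousLinearMap (b.coord i)
  let R : V₂ →ₗ[ℝ] V₁ :=
    { toFun := fun x => ∑ i, L ((c i).smulRight x) • b i
      map_add' := by
        intro x y
        rw [← Finset.sum_add_distrib]
        refine Finset.sum_congr rfl fun i _ => ?_
        rw [← add_smul, ← map_add]
        congr 2; ext v; simp
      map_smul' := by
        intro t x
        simp only [RingHom.id_apply]
        rw [Finset.smul_sum]
        refine Finset.sum_congr rfl fun i _ => ?_
        have : (c i).smulRight (t • x) = t • (c i).smulRight x := by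
          ext v; exact smul_comm _ _ _
        rw [this, map_smul, smul_eq_mul, mul_smul] }
  have hexp : ∀ v : V₁, v = ∑ i, c i v • b i := fun v => (b.sum_repr v).symm
  refine ⟨R, ?_, ?_⟩
  · intro φ x
    have : φ.smulRight x = ∑ i, φ (b i) • (c i).smulRight x := by
      ext v
      conv_lhs => rw [hexp v]
      simp [Finset.sum_smul, smul_smul, mul_comm]
    rw [this]
    simp [R, mul_comm]
  · intro P
    have h1 : P = ∑ i, (c i).smulRight (P (b i)) := by
      ext v
      conv_lhs => rw [hexp v]
      simp
    have h2 : R ∘ₗ P.toLinearMap = ∑ i, (b.coord i).smulRight (R (P (b i))) := by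
      ext v
      conv_lhs => rw [hexp v]
      simp only [map_sum, map_smul]
      simp [c]
    have h3 : ∀ i, b.coord i (R (P (b i))) = L ((c i).smulRight (P (b i))) := by
      intro i
      simp [R, Finsupp.single_apply]
    rw [h2, map_sum]
    conv_lhs => rw [h1]
    rw [map_sum]
    refine Finset.sum_congr rfl fun i _ => ?_
    rw [LinearMap.trace_smulRight, h3]

theorem aux_proper {V : Type*} [NormedAddCommGroup V] [NormedSpace ℝ V] {C : Set V}
    (hC : IsProperCone C) : (0:V) ∈ C ∧ ∀ x, x ∈ C → -x ∈ C → x = 0 := by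
  obtain ⟨-, -, -, -, h⟩ := hC
  refine ⟨?_, fun x hx hx' => ?_⟩
  · have : (0:V) ∈ C ∩ -C := by rw [h]; rfl
    exact this.1
  · have : x ∈ C ∩ -C := ⟨hx, hx'⟩
    rw [h] at this; exact this

theorem aux_main {V₁ V₂ : Type*} [NormedAddCommGroup V₁] [NormedSpace ℝ V₁]
    [FiniteDimensional ℝ V₁] [NormedAddCommGroup V₂] [NormedSpace ℝ V₂] [FiniteDimensional ℝ V₂]
    {C₁ : Set V₁} {C₂ : Set V₂} (h₁ : IsProperCone C₁) (h₂ : IsProperCone C₂)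
    (P : V₁ →ₗ[ℝ] V₂)
    (hP : ∀ R : V₂ →ₗ[ℝ] V₁, Set.MapsTo R C₂ C₁ → 0 ≤ LinearMap.trace ℝ V₁ (R ∘ₗ P)) :
    IsEntanglementBreaking C₁ C₂ P := by
  obtain ⟨z₁, p₁⟩ := aux_proper h₁
  obtain ⟨z₂, p₂⟩ := aux_proper h₂
  obtain ⟨cl₁, cv₁, s₁, g₁, -⟩ := h₁
  obtain ⟨cl₂, cv₂, s₂, g₂, -⟩ := h₂
  let D : Set (V₁ →L[ℝ] ℝ) := {φ | ∀ x ∈ C₁, 0 ≤ φ x}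
  have hDc : IsClosed D := by
    have : D = ⋂ x ∈ C₁, {φ | 0 ≤ φ x} := by ext; simp [D]
    rw [this]
    refine isClosed_biInter fun x _ => isClosed_le continuous_const ?_
    fun_prop
  obtain ⟨f, c, hc, hf⟩ := aux_pos C₂ cl₂ cv₂ s₂ p₂
  obtain ⟨e, d, hd, he⟩ := aux_pos D hDc
    (by
      intro φ hφ ψ hψ a b ha hb _ x hx
      have := hφ x hx
      have := hψ x hx
      simp; positivity)
    (by
      intro a ha φ hφ x hx
      have := hφ x hx
      simp; positivity)
    (by
      intro φ hφ hφ'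
      ext v
      have hz : ∀ x ∈ C₁, φ x = 0 := fun x hx => by
        have h1 := hφ x hx
        have h2 := hφ' x hx
        simp at h2
        linarith
      obtain ⟨x, hx, y, hy, rfl⟩ := g₁ v
      simp [hz x hx, hz y hy])
  obtain ⟨e', he'⟩ : ∃ e' : V₁, ∀ φ : V₁ →L[ℝ] ℝ, φ e' = e φ := by
    let b := Module.finBasis ℝ V₁
    refine ⟨∑ i, e (LinearMap.toContinuousLinearMap (b.coord i)) • b i, fun φ => ?_⟩
    have : φ = ∑ i, φ (b i) • LinearMap.toContinuousLinearMap (b.coord i) := by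
      ext v
      conv_lhs => rw [← b.sum_repr v]
      simp only [map_sum, map_smul]
      simp [mul_comm]
    conv_rhs => rw [this]
    simp [mul_comm]
  let K₁ : Set (V₁ →L[ℝ] ℝ) := D ∩ {φ | e φ = 1}
  let K₂ : Set V₂ := C₂ ∩ {x | f x = 1}
  have hK₁ : IsCompact K₁ := by
    refine Metric.isCompact_of_isClosed_isBounded
      (hDc.inter (isClosed_eq e.continuous continuous_const)) ?_
    refine isBounded_iff_forall_norm_le.2 ⟨1 / d, fun φ hφ => ?_⟩
    have h1 := he φ hφ.1
    have h2 : e φ = 1 := hφ.2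
    rw [le_div_iff₀ hd]; linarith
  have hK₂ : IsCompact K₂ := by
    refine Metric.isCompact_of_isClosed_isBounded
      (cl₂.inter (isClosed_eq f.continuous continuous_const)) ?_
    refine isBounded_iff_forall_norm_le.2 ⟨1 / c, fun φ hφ => ?_⟩
    have h1 := hf φ hφ.1
    have h2 : f φ = 1 := hφ.2
    rw [le_div_iff₀ hc]; linarith
  let B : Set (V₁ →L[ℝ] V₂) := (fun p : (V₁ →L[ℝ] ℝ) × V₂ => p.1.smulRight p.2) '' (K₁ ×ˢ K₂)
  have hB : IsCompact B := by
    refine (hK₁.prod hK₂).image ?_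
    have : Continuous fun p : (V₁ →L[ℝ] ℝ) × V₂ =>
        ContinuousLinearMap.smulRightL ℝ V₁ V₂ p.1 p.2 := by fun_prop
    exact this
  let G : (V₁ →L[ℝ] V₂) →L[ℝ] ℝ := f ∘L ContinuousLinearMap.apply ℝ V₂ e'
  have hEB : ∀ Q ∈ convexHull ℝ B, IsEntanglementBreaking C₁ C₂ (Q : V₁ →L[ℝ] V₂).toLinearMap := by
    have : convexHull ℝ B ⊆ {Q | IsEntanglementBreaking C₁ C₂ Q.toLinearMap} := by
      apply convexHull_min
      · rintro _ ⟨⟨φ, x⟩, ⟨hφ, hx⟩, rfl⟩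
        refine ⟨1, fun _ => φ.toLinearMap, fun _ => x, fun _ => hφ.1, fun _ => hx.1, fun v => ?_⟩
        simp
      · intro Q hQ Q' hQ' a b ha hb _
        have := aux_eb_add (aux_eb_smul hQ ha) (aux_eb_smul hQ' hb)
        exact this
    exact this
  have := aux_cone B hB G ?_ (LinearMap.toContinuousLinearMap P) ?_
  · rcases this with h | ⟨t, ht, Q, hQ, h⟩
    · have hz : P = 0 := by
        simpa using h
      refine ⟨0, fun _ => 0, fun _ => 0, fun i => i.elim0, fun i => i.elim0, fun v => by simp [hz]⟩
    · have h3 := aux_eb_smul (hEB Q hQ) ht.le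
      have h4 : P = t • Q.toLinearMap := by
        ext v
        exact congrArg (fun T : V₁ →L[ℝ] V₂ => T v) h
      rw [h4]; exact h3
  · rintro _ ⟨⟨φ, x⟩, ⟨hφ, hx⟩, rfl⟩
    have h1 : e φ = 1 := hφ.2
    have h2 : f x = 1 := hx.2
    simp [G, he', h1, h2]
  · intro L hL
    obtain ⟨R, hR1, hR2⟩ := aux_rank_one L
    rw [hR2]
    refine hP R fun x hx => ?_
    refine aux_bipolar C₁ cl₁ cv₁ z₁ s₁ _ fun φ hφ => ?_
    have hr := hR1 (LinearMap.toContinuousLinearMap φ) x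
    have hr' : φ (R x) = _ := hr
    rw [hr']
    by_cases hx0 : x = 0
    · subst hx0
      have : (LinearMap.toContinuousLinearMap φ).smulRight (0:V₂) = 0 := by ext; simp
      rw [this]; simp
    set φ' := LinearMap.toContinuousLinearMap φ with hφ'
    have hφD : φ' ∈ D := hφ
    by_cases hφ0 : φ' = 0
    · rw [hφ0]
      have : (0 : V₁ →L[ℝ] ℝ).smulRight x = 0 := by ext; simp
      rw [this]; simp
    have e1 : 0 < e φ' := lt_of_lt_of_le (mul_pos hd (norm_pos_iff.2 hφ0)) (he φ' hφD)
    have f1 : 0 < f x := lt_of_lt_of_le (mul_pos hc (norm_pos_iff.2 hx0)) (hf x hx)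
    have hb := hL _ ⟨((e φ')⁻¹ • φ', (f x)⁻¹ • x), ⟨⟨fun y hy => by
        have : 0 ≤ φ' y := hφD y hy
        simp; positivity, by simp [e1.ne']⟩,
        ⟨s₂ (inv_pos.2 f1) hx, by simp [f1.ne']⟩⟩, rfl⟩
    have : φ'.smulRight x = (e φ' * f x) •
        (((e φ')⁻¹ • φ').smulRight ((f x)⁻¹ • x)) := by
      ext v
      simp [smul_smul]
      congr 1
      field_simp
    rw [this, map_smul, smul_eq_mul]
    exact mul_nonneg (by positivity) hb

theorem aux_min {V W : Type*} [AddCommGroup V] [Module ℝ V] [AddCommGroup W] [Module ℝ W]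
    {C : Set V} {D : Set W} (Q : V →ₗ[ℝ] W) (hQ : Set.MapsTo Q C D) (k : ℕ) :
    Set.MapsTo (PiTensorProduct.map fun _ : Fin k => Q) (minTensorPow C k) (minTensorPow D k) := by
  intro z hz
  have h1 := (PiTensorProduct.map fun _ : Fin k => Q).image_convexHull
    {z | ∃ x : Fin k → V, (∀ i, x i ∈ C) ∧ z = PiTensorProduct.tprod ℝ x}
  have h2 : (PiTensorProduct.map fun _ : Fin k => Q) z ∈ _ '' convexHull ℝ _ := ⟨z, hz, rfl⟩
  rw [h1] at h2
  refine convexHull_mono ?_ h2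
  rintro _ ⟨_, ⟨x, hx, rfl⟩, rfl⟩
  exact ⟨fun i => Q (x i), fun i => hQ (hx i), by rw [PiTensorProduct.map_tprod]⟩

theorem aux_max {V W : Type*} [AddCommGroup V] [Module ℝ V] [AddCommGroup W] [Module ℝ W]
    {C : Set V} {D : Set W} (Q : V →ₗ[ℝ] W) (hQ : Set.MapsTo Q C D) (k : ℕ) :
    Set.MapsTo (PiTensorProduct.map fun _ : Fin k => Q) (maxTensorPow C k) (maxTensorPow D k) := by
  intro z hz φ hφ
  have h1 := hz (fun i => φ i ∘ₗ Q) fun i x hx => hφ i _ (hQ hx)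
  have h2 : dualPairing φ ∘ₗ (PiTensorProduct.map fun _ : Fin k => Q)
      = dualPairing (fun i => φ i ∘ₗ Q) := by
    ext x
    simp [dualPairing]
  rw [← h2] at h1
  exact h1

theorem resilient_iff_resilient_pairs
    {V : Type} [NormedAddCommGroup V] [NormedSpace ℝ V] [FiniteDimensional ℝ V]
    (C : Set V) (hC : IsProperCone C) :
    (IsResilientPair C C ↔
      ∀ (V' : Type) [NormedAddCommGroup V'] [NormedSpace ℝ V'] [FiniteDimensional ℝ V'],
        ∀ C' : Set V', IsProperCone C' → IsResilientPair C C') ∧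
    (IsResilientPair C C ↔
      ∀ (V' : Type) [NormedAddCommGroup V'] [NormedSpace ℝ V'] [FiniteDimensional ℝ V'],
        ∀ C' : Set V', IsProperCone C' → IsResilientPair C' C) := by
  refine ⟨⟨?_, fun h => h V C hC⟩, ⟨?_, fun h => h V C hC⟩⟩
  · intro h V' _ _ _ C' hC' P hP
    refine aux_main hC hC' P fun R hR => aux_trace_nonneg (h _ ?_)
    intro k hk z hz
    rw [PiTensorProduct.map_comp]
    exact aux_min R hR k (hP k hk hz)
  · intro h V' _ _ _ C' hC' P hP
    refine aux_main hC' hC P fun R hR => ?_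
    rw [LinearMap.trace_comp_comm']
    refine aux_trace_nonneg (h _ ?_)
    intro k hk z hz
    rw [PiTensorProduct.map_comp]
    exact hP k hk (aux_max R hR k hz)

end
end
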